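/- (Existence and extremality of the plus and minus measures.) Let G = (V,E) be an infinite connected graph in which every vertex has finite degree, with fixed origin o. Let J be reasonable interactions on V (with function f, exponent r > 0 and constant c ∈ (0,1)) that are moreover ferromagnetic (J_{x,y} ≥ 0), let β ≥ 0, and let ρ be a measure on ℝ with 0 < ∫_ℝ e^{a|u|²} dρ(u) < ∞ for all a > 0. Suppose there exists c₀ > 0 such that for all integers j, k ≥ 1, f(k^{−r}) ≥ c₀ √( log|B_{k+j}(o)| / log|B_j(o)| ). Define ξ⁺ ∈ ℝ^V by ξ⁺_x = √(log|B_{d_G(o,x)}(o)|) and ξ⁻ = −ξ⁺. Then there exist (2βM_f/c)-regular Gibbs measures ν⁺ and ν⁻ on ℝ^V such that ν^{ξ⁺}_{Λ,β,ρ,J} → ν⁺ and ν^{ξ⁻}_{Λ,β,ρ,J} → ν⁻ as Λ ↗ V (convergence of all finite-dimensional marginals along every sequence of finite sets increasing to V). Moreover, for every a > 0, every a-regular Gibbs measure ν satisfies ν⁻ ⪯ ν ⪯ ν⁺ (stochastic domination). -/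

import Mathlib

open MeasureTheory Filter
open scoped ENNReal Classical

/-- The Hamiltonian `-H^ξ_{Λ,J}` (already multiplied by `β`). -/
noncomputable def hamil {V : Type*} (J : V → V → ℝ) (β : ℝ) (Λ : Finset V)
    (ξ : V → ℝ) (φ : ↥Λ → ℝ) : ℝ :=
  β * ((1 / 2) * ∑ x : ↥Λ, ∑ y : ↥Λ,
      (if x.1 ≠ y.1 then J x.1 y.1 * φ x * φ y else 0)
    + ∑ x : ↥Λ, φ x * ∑' y : {y : V // y ∉ Λ}, J x.1 y.1 * ξ y.1)

/-- The finite-volume Gibbs measure `ν^ξ_{Λ,β,ρ,J}` on `ℝ^Λ`. -/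
noncomputable def gibbs {V : Type*} (J : V → V → ℝ) (β : ℝ) (ρ : Measure ℝ)
    (Λ : Finset V) (ξ : V → ℝ) : Measure (↥Λ → ℝ) :=
  (((Measure.pi fun _ : ↥Λ => ρ).withDensity
      fun φ => ENNReal.ofReal (Real.exp (hamil J β Λ ξ φ))) Set.univ)⁻¹ •
    (Measure.pi fun _ : ↥Λ => ρ).withDensity
      fun φ => ENNReal.ofReal (Real.exp (hamil J β Λ ξ φ))

/-- The `Λ'`-marginal of a measure on `ℝ^Λ`, for `Λ' ⊆ Λ`. -/
noncomputable def marg {V : Type*} {Λ' Λ : Finset V} (h : Λ' ⊆ Λ)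
    (μ : Measure (↥Λ → ℝ)) : Measure (↥Λ' → ℝ) :=
  μ.map fun φ x => φ ⟨x.1, h x.2⟩

/-- The normalized product measure `ν^0_{Λ,0,ρ,0}`. -/
noncomputable def prodN {V : Type*} (ρ : Measure ℝ) (Λ : Finset V) :
    Measure (↥Λ → ℝ) :=
  ((Measure.pi fun _ : ↥Λ => ρ) Set.univ)⁻¹ • Measure.pi fun _ : ↥Λ => ρ

/-- The tilted single-site measure `dρ_b(u) = e^(b|u|²) dρ(u)`. -/
noncomputable def rhoMod (ρ : Measure ℝ) (b : ℝ) : Measure ℝ :=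
  ρ.withDensity fun u => ENNReal.ofReal (Real.exp (b * u ^ 2))

/-- Restriction of an infinite-volume configuration to a finite set of vertices. -/
def restrictTo {V : Type*} (Λ : Finset V) (φ : V → ℝ) : ↥Λ → ℝ := fun x => φ x.1

/-- `a`-regularity with respect to the single-site measure `ρa`. -/
def IsRegularWRT {V : Type*} (ρa : Measure ℝ) (ν : Measure (V → ℝ)) : Prop :=
  ∃ B : ℝ, 0 ≤ B ∧ ∀ Λ : Finset V,
    ν.map (restrictTo Λ) ≤ ENNReal.ofReal (Real.exp (B * Λ.card)) • prodN ρa Λ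

/-- `ν` is a Gibbs measure: it satisfies the DLR equations. -/
def IsGibbsMeasure {V : Type*} (J : V → V → ℝ) (β : ℝ) (ρ : Measure ℝ)
    (ν : Measure (V → ℝ)) : Prop :=
  ∀ (Λ : Finset V) (g : (↥Λ → ℝ) → ℝ), Measurable g → (∃ K, ∀ ψ, |g ψ| ≤ K) →
    ∫ φ, g (restrictTo Λ φ) ∂ν = ∫ η, ∫ ψ, g ψ ∂(gibbs J β ρ Λ η) ∂ν

/-- Convergence of the finite-volume measures `ν^ξ_{Λ,β,ρ,J}` to an infinite-volume
measure `ν` as `Λ ↗ V`: along every increasing exhausting sequence of finite sets,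
all finite-dimensional marginals converge weakly. -/
def ConvergesTo {V : Type*} (J : V → V → ℝ) (β : ℝ) (ρ : Measure ℝ) (ξ : V → ℝ)
    (ν : Measure (V → ℝ)) : Prop :=
  ∀ (Λseq : ℕ → Finset V), Monotone Λseq → (∀ x : V, ∃ i, x ∈ Λseq i) →
    ∀ (Λ' : Finset V) (g : (↥Λ' → ℝ) → ℝ), Continuous g → (∃ K, ∀ ψ, |g ψ| ≤ K) →
      Tendsto (fun i => if h : Λ' ⊆ Λseq i then
          ∫ ψ, g ψ ∂(marg h (gibbs J β ρ (Λseq i) ξ)) else 0)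
        atTop (nhds (∫ φ, g (restrictTo Λ' φ) ∂ν))

/-- Stochastic domination. -/
def StochDom {ι : Type*} (μ ν : Measure (ι → ℝ)) : Prop :=
  ∀ g : (ι → ℝ) → ℝ, Measurable g → Monotone g → (∃ K, ∀ φ, |g φ| ≤ K) →
    ∫ φ, g φ ∂μ ≤ ∫ φ, g φ ∂ν

/-!
Ferromagnetism makes the Hamiltonian supermodular, so by the four-functions theorem the
finite-volume measures increase with the boundary condition. Their squared-exponential moments at a
vertex `x` are controlled by the square of the field at `x`; a convexity inequality with weights
`J x y * f (J x y)` turns a bound `exp (s + τ * ζ y ^ 2)` at the neighbours `y` into a bound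
`exp (c + s / 2 + τ / 2 * ζ x ^ 2)` at `x`, because the growth hypothesis says
`ζ y ≤ L * f (J x y) * ζ x` for the boundary profile `ζ`. Iterating this contraction bounds the
moments of the finite-volume measures by `exp (D + ζ x ^ 2)`, and those of every infinite-volume
solution of the DLR equations that satisfies such a bound by a constant; the latter gives
regularity.

Since `exp (-2 * ζ x ^ 2)` is summable, the finite-volume measures are tight and the DLR equations
pass to limit points, which are therefore regular. By Borel–Cantelli a regular Gibbs measure is
carried, up to a small error, by configurations lying between `-ζ` and `ζ` outside a large finite
set, so by monotonicity it lies below every limit point for `ζ` and above every limit point for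
`-ζ`. In particular, these two limit points are unique and extremal.
-/

namespace UnboundedSpin

section ExpE

/-- The exponential of a real number as an extended nonnegative real: the form in which
Boltzmann weights enter densities. -/
noncomputable def expE (t : ℝ) : ℝ≥0∞ := ENNReal.ofReal (Real.exp t)

@[simp] lemma expE_zero : expE 0 = 1 := by simp [expE]

lemma expE_add (s t : ℝ) : expE (s + t) = expE s * expE t := by
  rw [expE, Real.exp_add, ENNReal.ofReal_mul (Real.exp_nonneg s), expE, expE]

@[simp] lemma expE_ne_zero (t : ℝ) : expE t ≠ 0 := by simp [expE, Real.exp_pos]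

@[simp] lemma expE_ne_top (t : ℝ) : expE t ≠ ⊤ := ENNReal.ofReal_ne_top

@[gcongr] lemma expE_le_expE {s t : ℝ} (h : s ≤ t) : expE s ≤ expE t :=
  ENNReal.ofReal_le_ofReal (Real.exp_le_exp.2 h)

lemma one_le_expE {t : ℝ} (ht : 0 ≤ t) : 1 ≤ expE t := expE_zero ▸ expE_le_expE ht

lemma inv_expE (t : ℝ) : (expE t)⁻¹ = expE (-t) := by
  rw [expE, expE, Real.exp_neg, ENNReal.ofReal_inv_of_pos (Real.exp_pos t)]

lemma expE_sum {ι : Type*} (s : Finset ι) (F : ι → ℝ) :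
    expE (∑ i ∈ s, F i) = ∏ i ∈ s, expE (F i) := by
  rw [expE, Real.exp_sum, ENNReal.ofReal_prod_of_nonneg fun i _ => (Real.exp_pos (F i)).le]
  rfl

lemma expE_pow (t : ℝ) (n : ℕ) : expE t ^ n = expE (t * n) := by
  rw [expE, ← ENNReal.ofReal_pow (Real.exp_nonneg t), ← Real.exp_nat_mul, mul_comm, expE]

lemma expE_log_two : expE (Real.log 2) = 2 := by
  rw [expE, Real.exp_log two_pos, ENNReal.ofReal_ofNat]

lemma continuous_expE : Continuous expE :=
  ENNReal.continuous_ofReal.comp Real.continuous_exp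

@[fun_prop] lemma measurable_expE : Measurable expE := continuous_expE.measurable

lemma exists_le_expE {a : ℝ≥0∞} (ha : a ≠ ⊤) : ∃ t : ℝ, 0 ≤ t ∧ a ≤ expE t := by
  refine ⟨a.toReal, ENNReal.toReal_nonneg, ENNReal.le_ofReal_iff_toReal_le ha ?_ |>.2 ?_⟩
  · exact (Real.exp_pos _).le
  · linarith [Real.add_one_le_exp a.toReal]

end ExpE

section FourFunctions

lemma add_le_add_of_mul_le_mul {a b c d : ℝ≥0∞} (hac : a ≤ c) (hbc : b ≤ c)
    (h : a * b ≤ c * d) : a + b ≤ c + d := by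
  rcases eq_or_ne c ⊤ with rfl | hc
  · simp
  rcases eq_or_ne d ⊤ with rfl | hd
  · simp
  lift c to NNReal using hc
  lift d to NNReal using hd
  lift a to NNReal using ne_top_of_le_ne_top ENNReal.coe_ne_top hac
  lift b to NNReal using ne_top_of_le_ne_top ENNReal.coe_ne_top hbc
  norm_cast at *
  rcases eq_zero_or_pos c with rfl | hc
  · simp [nonpos_iff_eq_zero.1 hac, nonpos_iff_eq_zero.1 hbc]
  rw [← NNReal.coe_le_coe] at *
  push_cast at *
  have hc' : (0 : ℝ) < c := hc
  refine le_of_mul_le_mul_left ?_ hc'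
  nlinarith [mul_nonneg (sub_nonneg.2 hac) (sub_nonneg.2 hbc)]

lemma two_mul_lintegral_mul_lintegral {α : Type*} [MeasurableSpace α] (μ : Measure α) [SFinite μ]
    {f g : α → ℝ≥0∞} (hf : Measurable f) (hg : Measurable g) :
    2 * ((∫⁻ x, f x ∂μ) * ∫⁻ x, g x ∂μ) =
      ∫⁻ p : α × α, (f p.1 * g p.2 + f p.2 * g p.1) ∂(μ.prod μ) := by
  have hfg := lintegral_prod_mul (μ := μ) (ν := μ) hf.aemeasurable hg.aemeasurable
  have hgf := lintegral_prod_mul (μ := μ) (ν := μ) hg.aemeasurable hf.aemeasurable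
  simp only [mul_comm (f (Prod.snd _)), mul_comm (∫⁻ x, f x ∂μ)] at *
  rw [lintegral_add_left (by fun_prop), hfg, hgf, two_mul]

-- Symmetrizing the double integral reduces the claim to comparing
-- `f₁ x f₂ y + f₁ y f₂ x` with `f₃ x f₄ y + f₃ y f₄ x` pointwise.
lemma lintegral_mul_lintegral_le {α : Type*} [LinearOrder α] [MeasurableSpace α]
    (μ : Measure α) [SFinite μ] {f₁ f₂ f₃ f₄ : α → ℝ≥0∞}
    (hf₁ : Measurable f₁) (hf₂ : Measurable f₂) (hf₃ : Measurable f₃) (hf₄ : Measurable f₄)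
    (h : ∀ x y, f₁ x * f₂ y ≤ f₃ (x ⊔ y) * f₄ (x ⊓ y)) :
    (∫⁻ x, f₁ x ∂μ) * ∫⁻ x, f₂ x ∂μ ≤ (∫⁻ x, f₃ x ∂μ) * ∫⁻ x, f₄ x ∂μ := by
  have hordered : ∀ x y, x ≤ y →
      f₁ y * f₂ x + f₁ x * f₂ y ≤ f₃ y * f₄ x + f₃ x * f₄ y := by
    intro x y hxy
    have hyx := h y x
    have hxy' := h x y
    rw [sup_eq_left.2 hxy, inf_eq_right.2 hxy] at hyx
    rw [sup_eq_right.2 hxy, inf_eq_left.2 hxy] at hxy'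
    refine add_le_add_of_mul_le_mul hyx hxy' ?_
    calc f₁ y * f₂ x * (f₁ x * f₂ y) = f₁ y * f₂ y * (f₁ x * f₂ x) := by ring
      _ ≤ f₃ y * f₄ y * (f₃ x * f₄ x) := by
        gcongr ?_ * ?_
        · simpa using h y y
        · simpa using h x x
      _ = f₃ y * f₄ x * (f₃ x * f₄ y) := by ring
  rw [← ENNReal.mul_le_mul_iff_right two_ne_zero ENNReal.ofNat_ne_top,
    two_mul_lintegral_mul_lintegral μ hf₁ hf₂, two_mul_lintegral_mul_lintegral μ hf₃ hf₄]
  refine lintegral_mono fun p => ?_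
  rcases le_total p.1 p.2 with hp | hp
  · simpa only [add_comm] using hordered p.1 p.2 hp
  · exact hordered p.2 p.1 hp

lemma lmarginal_mul_lmarginal_le {ι : Type*} {π : ι → Type*} [∀ i, LinearOrder (π i)]
    [∀ i, MeasurableSpace (π i)] (μ : ∀ i, Measure (π i)) [∀ i, SigmaFinite (μ i)] (s : Finset ι)
    {f₁ f₂ f₃ f₄ : (∀ i, π i) → ℝ≥0∞}
    (hf₁ : Measurable f₁) (hf₂ : Measurable f₂) (hf₃ : Measurable f₃) (hf₄ : Measurable f₄)
    (h : ∀ x y, f₁ x * f₂ y ≤ f₃ (x ⊔ y) * f₄ (x ⊓ y)) (x y : ∀ i, π i) :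
    lmarginal μ s f₁ x * lmarginal μ s f₂ y ≤
      lmarginal μ s f₃ (x ⊔ y) * lmarginal μ s f₄ (x ⊓ y) := by
  induction s using Finset.induction_on generalizing x y with
  | empty => simpa using h x y
  | insert i s hi ih =>
    simp only [lmarginal_insert _ hf₁ hi, lmarginal_insert _ hf₂ hi, lmarginal_insert _ hf₃ hi,
      lmarginal_insert _ hf₄ hi]
    refine lintegral_mul_lintegral_le (μ i) ((hf₁.lmarginal μ).comp (measurable_update x))
      ((hf₂.lmarginal μ).comp (measurable_update y))
      ((hf₃.lmarginal μ).comp (measurable_update (x ⊔ y)))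
      ((hf₄.lmarginal μ).comp (measurable_update (x ⊓ y))) fun a b => ?_
    have hsup : Function.update x i a ⊔ Function.update y i b
        = Function.update (x ⊔ y) i (a ⊔ b) := by
      ext j
      rcases eq_or_ne j i with rfl | hj <;> simp [*]
    have hinf : Function.update x i a ⊓ Function.update y i b
        = Function.update (x ⊓ y) i (a ⊓ b) := by
      ext j
      rcases eq_or_ne j i with rfl | hj <;> simp [*]
    simpa only [hsup, hinf] using ih (Function.update x i a) (Function.update y i b)

lemma lintegral_pi_mul_lintegral_pi_le {ι : Type*} [Fintype ι] {π : ι → Type*}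
    [∀ i, LinearOrder (π i)] [∀ i, MeasurableSpace (π i)] (μ : ∀ i, Measure (π i))
    [∀ i, SigmaFinite (μ i)] {f₁ f₂ f₃ f₄ : (∀ i, π i) → ℝ≥0∞}
    (hf₁ : Measurable f₁) (hf₂ : Measurable f₂) (hf₃ : Measurable f₃) (hf₄ : Measurable f₄)
    (h : ∀ x y, f₁ x * f₂ y ≤ f₃ (x ⊔ y) * f₄ (x ⊓ y)) :
    (∫⁻ x, f₁ x ∂Measure.pi μ) * ∫⁻ x, f₂ x ∂Measure.pi μ ≤
      (∫⁻ x, f₃ x ∂Measure.pi μ) * ∫⁻ x, f₄ x ∂Measure.pi μ := by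
  rcases isEmpty_or_nonempty (∀ i, π i) with _ | ⟨⟨x⟩⟩
  · simp [lintegral_of_isEmpty]
  · simpa only [lmarginal_univ] using
      lmarginal_mul_lmarginal_le μ Finset.univ hf₁ hf₂ hf₃ hf₄ h x x

end FourFunctions

section ProductMeasure

variable {ι : Type*} {π : ι → Type*} [∀ i, MeasurableSpace (π i)]

lemma lmarginal_prod (μ : ∀ i, Measure (π i)) [∀ i, SigmaFinite (μ i)] (s : Finset ι)
    {F : ∀ i, π i → ℝ≥0∞} (hF : ∀ i, Measurable (F i)) (x : ∀ i, π i) :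
    lmarginal μ s (fun φ => ∏ i ∈ s, F i (φ i)) x = ∏ i ∈ s, ∫⁻ u, F i u ∂μ i := by
  induction s using Finset.induction_on generalizing x with
  | empty => simp
  | insert i s hi ih =>
    have hupdate : ∀ (y : ∀ i, π i) (u : π i),
        ∏ j ∈ insert i s, F j (Function.update y i u j) = F i u * ∏ j ∈ s, F j (y j) := by
      intro y u
      rw [Finset.prod_insert hi, Function.update_self]
      congr 1
      refine Finset.prod_congr rfl fun j hj => ?_
      rw [Function.update_of_ne (ne_of_mem_of_not_mem hj hi)]
    rw [lmarginal_insert' _ (by fun_prop) hi, Finset.prod_insert hi, ← ih x]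
    simp only [hupdate, lintegral_mul_const _ (hF i)]
    refine lintegral_const_mul _ ?_
    exact (show Measurable fun φ : ∀ i, π i => ∏ j ∈ s, F j (φ j) by fun_prop).comp
      measurable_updateFinset

variable [Fintype ι]

lemma lintegral_pi_prod (μ : ∀ i, Measure (π i)) [∀ i, SigmaFinite (μ i)]
    {F : ∀ i, π i → ℝ≥0∞} (hF : ∀ i, Measurable (F i)) :
    ∫⁻ y, ∏ i, F i (y i) ∂Measure.pi μ = ∏ i, ∫⁻ u, F i u ∂μ i := by
  by_cases h : Nonempty (∀ i, π i)
  · obtain ⟨x⟩ := h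
    rw [lintegral_eq_lmarginal_univ x, lmarginal_prod μ Finset.univ hF]
  · simp only [Classical.nonempty_pi, not_forall, not_nonempty_iff] at h
    obtain ⟨i, hi⟩ := h
    have : IsEmpty (∀ i, π i) := ⟨fun y => hi.false (y i)⟩
    rw [lintegral_of_isEmpty, Finset.prod_eq_zero (Finset.mem_univ i) (lintegral_of_isEmpty _ _)]

lemma pi_withDensity (μ : ∀ i, Measure (π i)) [∀ i, SigmaFinite (μ i)]
    {F : ∀ i, π i → ℝ≥0∞} (hF : ∀ i, Measurable (F i))
    [∀ i, SigmaFinite ((μ i).withDensity (F i))] :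
    Measure.pi (fun i => (μ i).withDensity (F i)) =
      (Measure.pi μ).withDensity fun y => ∏ i, F i (y i) := by
  refine Measure.pi_eq fun s hs => ?_
  have hprod : ∀ y : ∀ i, π i, (Set.univ.pi s).indicator (fun y => ∏ i, F i (y i)) y =
      ∏ i, (s i).indicator (F i) (y i) := by
    intro y
    by_cases hy : ∀ i, y i ∈ s i
    · rw [Set.indicator_of_mem (by simpa using hy)]
      exact Finset.prod_congr rfl fun i _ => (Set.indicator_of_mem (hy i) _).symm
    · rw [Set.indicator_of_notMem (by simpa using hy)]
      obtain ⟨i, hi⟩ := not_forall.1 hy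
      exact (Finset.prod_eq_zero (Finset.mem_univ i) (Set.indicator_of_notMem hi _)).symm
  rw [withDensity_apply _ (MeasurableSet.univ_pi hs), ← lintegral_indicator (.univ_pi hs)]
  simp only [hprod, withDensity_apply _ (hs _), ← lintegral_indicator (hs _)]
  exact lintegral_pi_prod μ fun i => (hF i).indicator (hs i)

end ProductMeasure

section Specification

variable {V : Type*} {J : V → V → ℝ} {β M : ℝ} {ρ : Measure ℝ}

/-- The external field `∑_{y ∉ Λ} J_{x,y} ξ_y` which the boundary condition `ξ` exerts on `x`. -/
noncomputable def extField (J : V → V → ℝ) (Λ : Finset V) (ξ : V → ℝ) (x : V) : ℝ :=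
  ∑' y : {y : V // y ∉ Λ}, J x y.1 * ξ y.1

/-- The Boltzmann weight in `Λ`, as a function of a full configuration `φ` that provides both the
spins in `Λ` and the boundary condition. Its marginalizations can then be iterated with the
`lmarginal` calculus. -/
noncomputable def weight (J : V → V → ℝ) (β : ℝ) (Λ : Finset V) (φ : V → ℝ) : ℝ≥0∞ :=
  expE (hamil J β Λ φ (restrictTo Λ φ))

/-- The partition function in `Λ` with boundary condition `ξ`. -/
noncomputable def partitionFn (J : V → V → ℝ) (β : ℝ) (ρ : Measure ℝ) (Λ : Finset V)
    (ξ : V → ℝ) : ℝ≥0∞ :=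
  lmarginal (fun _ => ρ) Λ (weight J β Λ) ξ

/-- The Gibbs specification: the finite-volume measure in `Λ`, extended to a measure on `ℝ^V` by
keeping the spins outside `Λ` equal to `ξ`. -/
noncomputable def spec (J : V → V → ℝ) (β : ℝ) (ρ : Measure ℝ) (Λ : Finset V)
    (ξ : V → ℝ) : Measure (V → ℝ) :=
  (gibbs J β ρ Λ ξ).map (Function.updateFinset ξ Λ)

lemma hamil_eq (Λ : Finset V) (ξ : V → ℝ) (φ : Λ → ℝ) :
    hamil J β Λ ξ φ = β * ((1 / 2) * ∑ x : ↥Λ, ∑ y : ↥Λ,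
      (if x.1 ≠ y.1 then J x.1 y.1 * φ x * φ y else 0)
    + ∑ x : ↥Λ, φ x * extField J Λ ξ x) := rfl

lemma rhoMod_eq (b : ℝ) : rhoMod ρ b = ρ.withDensity fun u => expE (b * u ^ 2) := rfl

lemma extField_congr {Λ : Finset V} {ξ η : V → ℝ} (h : ∀ y ∉ Λ, ξ y = η y) (x : V) :
    extField J Λ ξ x = extField J Λ η x :=
  tsum_congr fun y => by rw [h y.1 y.2]

lemma hamil_congr {Λ : Finset V} {ξ η : V → ℝ} (h : ∀ y ∉ Λ, ξ y = η y) :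
    hamil J β Λ ξ = hamil J β Λ η := by
  funext φ
  simp only [hamil_eq, extField_congr h]

lemma gibbs_congr {Λ : Finset V} {ξ η : V → ℝ} (h : ∀ y ∉ Λ, ξ y = η y) :
    gibbs J β ρ Λ ξ = gibbs J β ρ Λ η := by
  simp only [gibbs, hamil_congr h]

lemma updateFinset_of_notMem {Λ : Finset V} (ξ : V → ℝ) (φ : Λ → ℝ) {y : V} (hy : y ∉ Λ) :
    Function.updateFinset ξ Λ φ y = ξ y := by
  simp [Function.updateFinset, hy]

lemma restrictTo_updateFinset (Λ : Finset V) (ξ : V → ℝ) (φ : Λ → ℝ) :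
    restrictTo Λ (Function.updateFinset ξ Λ φ) = φ :=
  Function.restrict_updateFinset ξ φ

lemma weight_updateFinset (Λ : Finset V) (ξ : V → ℝ) (φ : Λ → ℝ) :
    weight J β Λ (Function.updateFinset ξ Λ φ) = expE (hamil J β Λ ξ φ) := by
  rw [weight, restrictTo_updateFinset, hamil_congr fun y => updateFinset_of_notMem ξ φ]

@[fun_prop] lemma measurable_restrictTo (Λ : Finset V) :
    Measurable (restrictTo Λ : (V → ℝ) → _) := by
  unfold restrictTo
  fun_prop

@[fun_prop] lemma measurable_extField [Countable V] (Λ : Finset V) (x : V) :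
    Measurable fun ξ => extField J Λ ξ x :=
  Measurable.tsum fun _ => by fun_prop

@[fun_prop] lemma measurable_weight [Countable V] (Λ : Finset V) : Measurable (weight J β Λ) := by
  have hpair : ∀ x y : Λ, Measurable fun φ : V → ℝ =>
      if x.1 ≠ y.1 then J x.1 y.1 * restrictTo Λ φ x * restrictTo Λ φ y else 0 := by
    intro x y
    unfold restrictTo
    split_ifs <;> fun_prop
  unfold weight
  simp only [hamil_eq]
  fun_prop

lemma continuous_hamil (Λ : Finset V) (ξ : V → ℝ) : Continuous (hamil J β Λ ξ) := by
  have hpair : ∀ x y : Λ, Continuous fun φ : Λ → ℝ =>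
      if x.1 ≠ y.1 then J x.1 y.1 * φ x * φ y else 0 := by
    intro x y
    split_ifs <;> fun_prop
  unfold hamil
  fun_prop

lemma measurable_expE_hamil (Λ : Finset V) (ξ : V → ℝ) :
    Measurable fun φ => expE (hamil J β Λ ξ φ) :=
  measurable_expE.comp (continuous_hamil Λ ξ).measurable

lemma partitionFn_eq (Λ : Finset V) (ξ : V → ℝ) :
    partitionFn J β ρ Λ ξ = ∫⁻ φ, expE (hamil J β Λ ξ φ) ∂(Measure.pi fun _ : Λ => ρ) := by
  simp only [partitionFn, lmarginal, weight_updateFinset]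

lemma gibbs_eq (Λ : Finset V) (ξ : V → ℝ) :
    gibbs J β ρ Λ ξ = (partitionFn J β ρ Λ ξ)⁻¹ •
      (Measure.pi fun _ : Λ => ρ).withDensity fun φ => expE (hamil J β Λ ξ φ) := by
  rw [gibbs, withDensity_apply _ MeasurableSet.univ, Measure.restrict_univ, partitionFn_eq]
  rfl

lemma lintegral_gibbs (Λ : Finset V) (ξ : V → ℝ) (F : (Λ → ℝ) → ℝ≥0∞) :
    ∫⁻ φ, F φ ∂(gibbs J β ρ Λ ξ) = (partitionFn J β ρ Λ ξ)⁻¹ *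
      ∫⁻ φ, expE (hamil J β Λ ξ φ) * F φ ∂(Measure.pi fun _ : Λ => ρ) := by
  rw [gibbs_eq, lintegral_smul_measure, lintegral_withDensity_eq_lintegral_mul_non_measurable _
    (measurable_expE_hamil Λ ξ) (Eventually.of_forall fun _ => ENNReal.ofReal_lt_top)]
  rfl

lemma lintegral_spec (Λ : Finset V) (ξ : V → ℝ) {F : (V → ℝ) → ℝ≥0∞} (hF : Measurable F) :
    ∫⁻ φ, F φ ∂(spec J β ρ Λ ξ) =
      ∫⁻ φ, F (Function.updateFinset ξ Λ φ) ∂(gibbs J β ρ Λ ξ) :=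
  lintegral_map hF measurable_updateFinset

lemma lintegral_spec_eq_lmarginal (Λ : Finset V) (ξ : V → ℝ) {F : (V → ℝ) → ℝ≥0∞}
    (hF : Measurable F) :
    ∫⁻ φ, F φ ∂(spec J β ρ Λ ξ) = (partitionFn J β ρ Λ ξ)⁻¹ *
      lmarginal (fun _ => ρ) Λ (fun φ => weight J β Λ φ * F φ) ξ := by
  simp only [lintegral_spec Λ ξ hF, lintegral_gibbs, lmarginal, weight_updateFinset]

lemma map_restrictTo_spec (Λ : Finset V) (ξ : V → ℝ) :
    (spec J β ρ Λ ξ).map (restrictTo Λ) = gibbs J β ρ Λ ξ := by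
  have hid : restrictTo Λ ∘ Function.updateFinset ξ Λ = id :=
    funext (restrictTo_updateFinset Λ ξ)
  rw [spec, Measure.map_map (measurable_restrictTo Λ) measurable_updateFinset, hid, Measure.map_id]

end Specification

section GaussianMoments

/-- The Gaussian moment `∫ e^{a u²} dρ(u)`. -/
noncomputable def gaussMoment (ρ : Measure ℝ) (a : ℝ) : ℝ≥0∞ := ∫⁻ u, expE (a * u ^ 2) ∂ρ

/-- The single-site measures of the theory: nonzero measures all of whose Gaussian moments are
finite. -/
class HasGaussianMoments (ρ : Measure ℝ) : Prop where
  ne_zero : ρ ≠ 0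
  gaussMoment_ne_top : ∀ a, gaussMoment ρ a ≠ ⊤

lemma rhoMod_univ (ρ : Measure ℝ) (a : ℝ) : rhoMod ρ a Set.univ = gaussMoment ρ a := by
  rw [rhoMod_eq, withDensity_apply _ MeasurableSet.univ, Measure.restrict_univ, gaussMoment]

lemma gaussMoment_ne_zero (ρ : Measure ℝ) [NeZero ρ] (a : ℝ) : gaussMoment ρ a ≠ 0 := by
  rw [gaussMoment, Ne, lintegral_eq_zero_iff (by fun_prop)]
  intro h
  refine NeZero.ne ρ (ae_eq_bot.1 (Filter.eventually_false_iff_eq_bot.1 ?_))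
  filter_upwards [h] with u hu
  exact expE_ne_zero _ hu

variable (ρ : Measure ℝ) [HasGaussianMoments ρ]

instance : NeZero ρ := ⟨HasGaussianMoments.ne_zero⟩

instance : IsFiniteMeasure ρ :=
  ⟨by simpa [gaussMoment] using (HasGaussianMoments.gaussMoment_ne_top (ρ := ρ) 0).lt_top⟩

lemma gaussMoment_ne_top (a : ℝ) : gaussMoment ρ a ≠ ⊤ := HasGaussianMoments.gaussMoment_ne_top a

instance (a : ℝ) : IsFiniteMeasure (rhoMod ρ a) :=
  ⟨(rhoMod_univ ρ a).trans_lt (gaussMoment_ne_top ρ a).lt_top⟩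

end GaussianMoments

section Bounds

/-- `J` is a ferromagnetic interaction whose total interaction with any given vertex is at most
`M`. -/
structure IsFerromagnet {V : Type*} (J : V → V → ℝ) (M : ℝ) : Prop where
  symm : ∀ x y, J x y = J y x
  nonneg : ∀ x y, 0 ≤ J x y
  summable : ∀ x, Summable (J x)
  tsum_le : ∀ x, ∑' y, J x y ≤ M

variable {V : Type*} {J : V → V → ℝ} {β M κ : ℝ} {ρ : Measure ℝ}

lemma IsFerromagnet.sum_le (hJ : IsFerromagnet J M) (x : V) (s : Finset V) :
    ∑ y ∈ s, J x y ≤ M :=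
  ((hJ.summable x).sum_le_tsum s fun y _ => hJ.nonneg x y).trans (hJ.tsum_le x)

lemma IsFerromagnet.abs_pair_le (hJ : IsFerromagnet J M) (Λ : Finset V) (φ : Λ → ℝ) :
    |∑ x : ↥Λ, ∑ y : ↥Λ, (if x.1 ≠ y.1 then J x.1 y.1 * φ x * φ y else 0)| ≤
      M * ∑ x : Λ, φ x ^ 2 := by
  have hterm : ∀ x y : Λ, |if x.1 ≠ y.1 then J x.1 y.1 * φ x * φ y else 0| ≤
      1 / 2 * (J x.1 y.1 * φ x ^ 2) + 1 / 2 * (J x.1 y.1 * φ y ^ 2) := by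
    intro x y
    have hxy := hJ.nonneg x.1 y.1
    split_ifs
    · rw [abs_le]
      constructor <;> nlinarith [mul_nonneg hxy (sq_nonneg (φ x + φ y)),
        mul_nonneg hxy (sq_nonneg (φ x - φ y))]
    · rw [abs_zero]
      positivity
  have hswap : ∑ x : ↥Λ, ∑ y : ↥Λ, J x.1 y.1 * φ y ^ 2 =
      ∑ x : ↥Λ, ∑ y : ↥Λ, J x.1 y.1 * φ x ^ 2 := by
    rw [Finset.sum_comm]
    simp only [hJ.symm]
  calc |∑ x : ↥Λ, ∑ y : ↥Λ, (if x.1 ≠ y.1 then J x.1 y.1 * φ x * φ y else 0)|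
      ≤ ∑ x : ↥Λ, ∑ y : ↥Λ,
          (1 / 2 * (J x.1 y.1 * φ x ^ 2) + 1 / 2 * (J x.1 y.1 * φ y ^ 2)) := by
        refine (Finset.abs_sum_le_sum_abs _ _).trans (Finset.sum_le_sum fun x _ => ?_)
        exact (Finset.abs_sum_le_sum_abs _ _).trans (Finset.sum_le_sum fun y _ => hterm x y)
    _ = ∑ x : ↥Λ, (∑ y : ↥Λ, J x.1 y.1) * φ x ^ 2 := by
        simp only [Finset.sum_add_distrib, ← Finset.mul_sum, hswap, Finset.sum_mul]
        ring
    _ ≤ M * ∑ x : Λ, φ x ^ 2 := by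
        rw [Finset.mul_sum]
        gcongr with x
        rw [Finset.sum_coe_sort Λ fun y => J x y]
        exact hJ.sum_le x Λ

lemma IsFerromagnet.abs_hamil_le (hJ : IsFerromagnet J M) (hβ : 0 ≤ β) (hκ : 0 < κ) (Λ : Finset V)
    (ξ : V → ℝ) (φ : Λ → ℝ) :
    |hamil J β Λ ξ φ| ≤ β * (M / 2 + κ) * ∑ x : Λ, φ x ^ 2
      + β / (4 * κ) * ∑ x : Λ, extField J Λ ξ x ^ 2 := by
  have hamgm : ∀ u v : ℝ, |u * v| ≤ κ * u ^ 2 + 1 / (4 * κ) * v ^ 2 := by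
    intro u v
    have hplus : 0 ≤ κ * (u + v / (2 * κ)) ^ 2 := by positivity
    have hminus : 0 ≤ κ * (u - v / (2 * κ)) ^ 2 := by positivity
    have hplus' : κ * (u + v / (2 * κ)) ^ 2 = κ * u ^ 2 + 1 / (4 * κ) * v ^ 2 + u * v := by
      field_simp
      ring
    have hminus' : κ * (u - v / (2 * κ)) ^ 2 = κ * u ^ 2 + 1 / (4 * κ) * v ^ 2 - u * v := by
      field_simp
      ring
    rw [abs_le]
    constructor <;> linarith
  have hfield : |∑ x : ↥Λ, φ x * extField J Λ ξ x| ≤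
      κ * ∑ x : Λ, φ x ^ 2 + 1 / (4 * κ) * ∑ x : Λ, extField J Λ ξ x ^ 2 := by
    rw [Finset.mul_sum, Finset.mul_sum, ← Finset.sum_add_distrib]
    exact (Finset.abs_sum_le_sum_abs _ _).trans (Finset.sum_le_sum fun x _ => hamgm _ _)
  have hpair := hJ.abs_pair_le Λ φ
  rw [hamil_eq, abs_mul, abs_of_nonneg hβ]
  calc _ ≤ β * (1 / 2 * (M * ∑ x : Λ, φ x ^ 2) +
        (κ * ∑ x : Λ, φ x ^ 2 + 1 / (4 * κ) * ∑ x : Λ, extField J Λ ξ x ^ 2)) := by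
        gcongr
        refine (abs_add_le _ _).trans (add_le_add ?_ hfield)
        rw [abs_mul, abs_of_pos one_half_pos]
        gcongr
    _ = _ := by
        field_simp
        ring

lemma lintegral_pi_expE_sum_sq {ι : Type*} [Fintype ι] (ρ : Measure ℝ) [SigmaFinite ρ] (a : ℝ) :
    ∫⁻ φ : ι → ℝ, expE (a * ∑ x, φ x ^ 2) ∂(Measure.pi fun _ => ρ) =
      gaussMoment ρ a ^ Fintype.card ι := by
  simp only [Finset.mul_sum, expE_sum]
  rw [lintegral_pi_prod (fun _ => ρ) (F := fun _ u => expE (a * u ^ 2)) fun _ => by fun_prop,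
    Finset.prod_const, Finset.card_univ, gaussMoment]

lemma pi_rhoMod {ι : Type*} [Fintype ι] (ρ : Measure ℝ) [HasGaussianMoments ρ] (a : ℝ) :
    Measure.pi (fun _ : ι => rhoMod ρ a) =
      (Measure.pi fun _ => ρ).withDensity fun φ => expE (a * ∑ x, φ x ^ 2) := by
  have := fun _ : ι => (inferInstance : IsFiniteMeasure (rhoMod ρ a))
  simp only [rhoMod_eq] at *
  simp only [Finset.mul_sum, expE_sum]
  exact pi_withDensity (fun _ => ρ) fun _ => by fun_prop

lemma prodN_rhoMod (ρ : Measure ℝ) [HasGaussianMoments ρ] (a : ℝ) (Λ : Finset V) :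
    prodN (rhoMod ρ a) Λ = (gaussMoment ρ a ^ Λ.card)⁻¹ •
      (Measure.pi fun _ => ρ).withDensity fun φ => expE (a * ∑ x, φ x ^ 2) := by
  rw [prodN, Measure.pi_univ, pi_rhoMod, rhoMod_univ, Finset.prod_const, Finset.card_univ,
    Fintype.card_coe]

lemma IsFerromagnet.le_partitionFn (hJ : IsFerromagnet J M) (hβ : 0 ≤ β) (hκ : 0 < κ)
    (ρ : Measure ℝ) [SigmaFinite ρ] (Λ : Finset V) (ξ : V → ℝ) :
    gaussMoment ρ (-(β * (M / 2 + κ))) ^ Λ.card *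
      expE (-(β / (4 * κ) * ∑ x : Λ, extField J Λ ξ x ^ 2)) ≤ partitionFn J β ρ Λ ξ := by
  rw [partitionFn_eq, ← Fintype.card_coe Λ, ← lintegral_pi_expE_sum_sq,
    ← lintegral_mul_const _ (by fun_prop)]
  refine lintegral_mono fun φ => ?_
  rw [← expE_add]
  gcongr
  linarith [(abs_le.1 (hJ.abs_hamil_le hβ hκ Λ ξ φ)).1]

lemma IsFerromagnet.inv_partitionFn_le (hJ : IsFerromagnet J M) (hβ : 0 ≤ β) (hκ : 0 < κ)
    (ρ : Measure ℝ) [HasGaussianMoments ρ] (Λ : Finset V) (ξ : V → ℝ) :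
    (partitionFn J β ρ Λ ξ)⁻¹ ≤ (gaussMoment ρ (-(β * (M / 2 + κ))))⁻¹ ^ Λ.card *
      expE (β / (4 * κ) * ∑ x : Λ, extField J Λ ξ x ^ 2) := by
  refine (ENNReal.inv_le_inv.2 (hJ.le_partitionFn hβ hκ ρ Λ ξ)).trans_eq ?_
  rw [ENNReal.mul_inv (.inr (expE_ne_top _))
    (.inl (ENNReal.pow_ne_top (gaussMoment_ne_top ρ _))), ENNReal.inv_pow, inv_expE, neg_neg]

lemma IsFerromagnet.partitionFn_le (hJ : IsFerromagnet J M) (hβ : 0 ≤ β) (hκ : 0 < κ)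
    (ρ : Measure ℝ) [SigmaFinite ρ] (Λ : Finset V) (ξ : V → ℝ) :
    partitionFn J β ρ Λ ξ ≤ gaussMoment ρ (β * (M / 2 + κ)) ^ Λ.card *
      expE (β / (4 * κ) * ∑ x : Λ, extField J Λ ξ x ^ 2) := by
  rw [partitionFn_eq, ← Fintype.card_coe Λ, ← lintegral_pi_expE_sum_sq,
    ← lintegral_mul_const _ (by fun_prop)]
  refine lintegral_mono fun φ => ?_
  rw [← expE_add]
  gcongr
  exact (le_abs_self _).trans (hJ.abs_hamil_le hβ hκ Λ ξ φ)

lemma IsFerromagnet.partitionFn_ne_zero (hJ : IsFerromagnet J M) (hβ : 0 ≤ β)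
    (ρ : Measure ℝ) [SigmaFinite ρ] [NeZero ρ] (Λ : Finset V) (ξ : V → ℝ) :
    partitionFn J β ρ Λ ξ ≠ 0 := by
  refine ne_bot_of_le_ne_bot (mul_ne_zero (pow_ne_zero _ ?_) (expE_ne_zero _))
    (hJ.le_partitionFn hβ one_pos ρ Λ ξ)
  exact gaussMoment_ne_zero ρ _

lemma IsFerromagnet.partitionFn_ne_top (hJ : IsFerromagnet J M) (hβ : 0 ≤ β)
    (ρ : Measure ℝ) [HasGaussianMoments ρ] (Λ : Finset V) (ξ : V → ℝ) :
    partitionFn J β ρ Λ ξ ≠ ⊤ :=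
  ne_top_of_le_ne_top (ENNReal.mul_ne_top (ENNReal.pow_ne_top (gaussMoment_ne_top ρ _))
    (expE_ne_top _)) (hJ.partitionFn_le hβ one_pos ρ Λ ξ)

lemma IsFerromagnet.isProbabilityMeasure_gibbs (hJ : IsFerromagnet J M) (hβ : 0 ≤ β)
    (ρ : Measure ℝ) [HasGaussianMoments ρ] (Λ : Finset V) (ξ : V → ℝ) :
    IsProbabilityMeasure (gibbs J β ρ Λ ξ) := by
  constructor
  rw [← lintegral_one, lintegral_gibbs]
  simp only [mul_one, ← partitionFn_eq]
  exact ENNReal.inv_mul_cancel (hJ.partitionFn_ne_zero hβ ρ Λ ξ) (hJ.partitionFn_ne_top hβ ρ Λ ξ)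

lemma IsFerromagnet.isProbabilityMeasure_spec (hJ : IsFerromagnet J M) (hβ : 0 ≤ β)
    (ρ : Measure ℝ) [HasGaussianMoments ρ] (Λ : Finset V) (ξ : V → ℝ) :
    IsProbabilityMeasure (spec J β ρ Λ ξ) :=
  have := hJ.isProbabilityMeasure_gibbs hβ ρ Λ ξ
  Measure.isProbabilityMeasure_map measurable_updateFinset.aemeasurable

lemma IsFerromagnet.gibbs_le_smul_prodN (hJ : IsFerromagnet J M) (hβ : 0 ≤ β) (hκ : 0 < κ)
    (ρ : Measure ℝ) [HasGaussianMoments ρ] {a : ℝ} (ha : β * (M / 2 + κ) ≤ a) (Λ : Finset V)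
    (ξ : V → ℝ) :
    gibbs J β ρ Λ ξ ≤
      (((gaussMoment ρ (-(β * (M / 2 + κ))))⁻¹ * gaussMoment ρ a) ^ Λ.card *
        expE (β / (2 * κ) * ∑ x : Λ, extField J Λ ξ x ^ 2)) • prodN (rhoMod ρ a) Λ := by
  set S := ∑ x : Λ, extField J Λ ξ x ^ 2 with hS
  have hweight : (Measure.pi fun _ : Λ => ρ).withDensity (fun φ => expE (hamil J β Λ ξ φ)) ≤
      expE (β / (4 * κ) * S) •
        (Measure.pi fun _ => ρ).withDensity fun φ => expE (a * ∑ x, φ x ^ 2) := by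
    rw [← withDensity_smul _ (by fun_prop)]
    refine withDensity_mono (Eventually.of_forall fun φ => ?_)
    change expE _ ≤ expE _ * expE _
    rw [← expE_add, add_comm]
    refine expE_le_expE ?_
    refine (le_abs_self _).trans ((hJ.abs_hamil_le hβ hκ Λ ξ φ).trans ?_)
    exact add_le_add (mul_le_mul_of_nonneg_right ha (by positivity)) le_rfl
  have hexp : expE (β / (2 * κ) * S) = expE (β / (4 * κ) * S) * expE (β / (4 * κ) * S) := by
    rw [← expE_add]
    congr 1
    field_simp
    ring
  have hcancel : gaussMoment ρ a ^ Λ.card * (gaussMoment ρ a ^ Λ.card)⁻¹ = 1 :=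
    ENNReal.mul_inv_cancel (pow_ne_zero _ (gaussMoment_ne_zero ρ a))
      (ENNReal.pow_ne_top (gaussMoment_ne_top ρ a))
  rw [gibbs_eq]
  refine Measure.le_iff.2 fun s _ => ?_
  refine (mul_le_mul' (hJ.inv_partitionFn_le hβ hκ ρ Λ ξ) (hweight s)).trans_eq ?_
  simp only [prodN_rhoMod, Measure.smul_apply, smul_eq_mul, hexp, mul_pow]
  rw [← hS, ← mul_assoc _ (_ ^ _)⁻¹, mul_right_comm _ _ (_ ^ _)⁻¹, mul_assoc _ (_ ^ _) (_ ^ _)⁻¹,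
    hcancel]
  ring

lemma lintegral_prodN_expE_sum_sq (ρ : Measure ℝ) [HasGaussianMoments ρ] (A a : ℝ)
    (Λ : Finset V) :
    ∫⁻ φ, expE (A * ∑ x, φ x ^ 2) ∂prodN (rhoMod ρ a) Λ =
      ((gaussMoment ρ a)⁻¹ * gaussMoment ρ (A + a)) ^ Λ.card := by
  rw [prodN_rhoMod, lintegral_smul_measure,
    lintegral_withDensity_eq_lintegral_mul _ (by fun_prop) (by fun_prop)]
  simp only [Pi.mul_apply, ← expE_add, ← add_mul, add_comm a]
  rw [lintegral_pi_expE_sum_sq, Fintype.card_coe, smul_eq_mul, mul_pow, ENNReal.inv_pow]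

lemma IsFerromagnet.exists_lintegral_gibbs_expE_le (hJ : IsFerromagnet J M) (hβ : 0 ≤ β)
    (ρ : Measure ℝ) [HasGaussianMoments ρ] (A : ℝ) {ε : ℝ} (hε : 0 < ε) :
    ∃ D : ℝ, 0 ≤ D ∧ ∀ (Λ : Finset V) (ξ : V → ℝ),
      ∫⁻ φ, expE (A * ∑ x : Λ, φ x ^ 2) ∂(gibbs J β ρ Λ ξ) ≤
        expE (D * Λ.card + ε * ∑ x : Λ, extField J Λ ξ x ^ 2) := by
  obtain ⟨κ, hκ, hκε⟩ : ∃ κ : ℝ, 0 < κ ∧ β / (2 * κ) ≤ ε := by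
    refine ⟨(β + 1) / (2 * ε), by positivity, ?_⟩
    rw [div_le_iff₀ (by positivity)]
    field_simp
    linarith
  set a := β * (M / 2 + κ)
  set I := (gaussMoment ρ (-a))⁻¹ * gaussMoment ρ a
  set K := (gaussMoment ρ a)⁻¹ * gaussMoment ρ (A + a)
  have hK : I * K ≠ ⊤ := by
    simp [I, K, ENNReal.mul_ne_top, gaussMoment_ne_top, gaussMoment_ne_zero]
  obtain ⟨D, hD, hID⟩ := exists_le_expE hK
  refine ⟨D, hD, fun Λ ξ => ?_⟩
  set S := ∑ x : Λ, extField J Λ ξ x ^ 2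
  calc ∫⁻ φ, expE (A * ∑ x : Λ, φ x ^ 2) ∂(gibbs J β ρ Λ ξ)
      ≤ I ^ Λ.card * expE (β / (2 * κ) * S) * K ^ Λ.card := by
        rw [← lintegral_prodN_expE_sum_sq, ← smul_eq_mul, ← lintegral_smul_measure]
        exact lintegral_mono' (hJ.gibbs_le_smul_prodN hβ hκ ρ le_rfl Λ ξ) le_rfl
    _ = (I * K) ^ Λ.card * expE (β / (2 * κ) * S) := by ring
    _ ≤ expE D ^ Λ.card * expE (ε * S) := by
        gcongr
    _ = expE (D * Λ.card + ε * S) := by rw [expE_pow, expE_add]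

end Bounds

section Consistency

variable {V : Type*} {J : V → V → ℝ} {β M : ℝ} {ρ : Measure ℝ} {Δ Λ : Finset V}

/-- The configurations whose interaction field at every vertex is absolutely convergent. Off this
set the field is a junk value, and the finite-volume measures need not be consistent. -/
def FieldSummable (J : V → V → ℝ) (ξ : V → ℝ) : Prop := ∀ x, Summable fun y => J x y * ξ y

/-- The part of the Hamiltonian in `Λ` that does not involve the spins in `Δ ⊆ Λ`. -/
noncomputable def hamilOff (J : V → V → ℝ) (β : ℝ) (Δ Λ : Finset V) (φ : V → ℝ) : ℝ :=
  β * ((1 / 2) * ∑ x ∈ Λ \ Δ, ∑ y ∈ Λ \ Δ, (if x ≠ y then J x y * φ x * φ y else 0) +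
    ∑ x ∈ Λ \ Δ, φ x * extField J Λ φ x)

lemma FieldSummable.congr {ξ η : V → ℝ} (hξ : FieldSummable J ξ) (h : ∀ y ∉ Λ, ξ y = η y) :
    FieldSummable J η := by
  intro x
  refine (summable_congr_cofinite ?_).1 (hξ x)
  filter_upwards [Λ.finite_toSet.compl_mem_cofinite] with y hy
  rw [h y (by simpa using hy)]

lemma FieldSummable.updateFinset {ξ : V → ℝ} (hξ : FieldSummable J ξ) (Λ : Finset V)
    (φ : Λ → ℝ) : FieldSummable J (Function.updateFinset ξ Λ φ) :=
  hξ.congr fun _ hy => (updateFinset_of_notMem ξ φ hy).symm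

lemma spec_congr {ξ η : V → ℝ} (h : ∀ y ∉ Λ, ξ y = η y) :
    spec J β ρ Λ ξ = spec J β ρ Λ η := by
  have hupdate : Function.updateFinset ξ Λ = Function.updateFinset η Λ := by
    funext φ y
    simp only [Function.updateFinset]
    split_ifs with hy
    exacts [rfl, h y hy]
  rw [spec, spec, gibbs_congr h, hupdate]

lemma spec_updateFinset (Λ : Finset V) (ξ : V → ℝ) (φ : Λ → ℝ) :
    spec J β ρ Λ (Function.updateFinset ξ Λ φ) = spec J β ρ Λ ξ :=
  spec_congr fun _ => updateFinset_of_notMem ξ φ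

lemma extField_eq_sub {φ : V → ℝ} (hφ : FieldSummable J φ) (Λ : Finset V) (x : V) :
    extField J Λ φ x = ∑' y, J x y * φ y - ∑ y ∈ Λ, J x y * φ y :=
  eq_sub_of_add_eq' ((hφ x).sum_add_tsum_compl (s := Λ))

lemma extField_eq_sum_add {φ : V → ℝ} (hφ : FieldSummable J φ) (h : Δ ⊆ Λ) (x : V) :
    extField J Δ φ x = ∑ y ∈ Λ \ Δ, J x y * φ y + extField J Λ φ x := by
  rw [extField_eq_sub hφ, extField_eq_sub hφ, ← Finset.sum_sdiff h]
  ring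

lemma hamil_restrictTo (Λ : Finset V) (φ : V → ℝ) :
    hamil J β Λ φ (restrictTo Λ φ) = β * ((1 / 2) * ∑ x ∈ Λ, ∑ y ∈ Λ,
      (if x ≠ y then J x y * φ x * φ y else 0) + ∑ x ∈ Λ, φ x * extField J Λ φ x) := by
  rw [hamil_eq, ← Finset.sum_coe_sort Λ (fun x => φ x * extField J Λ φ x),
    ← Finset.sum_coe_sort Λ (fun x => ∑ y ∈ Λ, (if x ≠ y then J x y * φ x * φ y else 0))]
  simp_rw [← Finset.sum_coe_sort Λ (fun y => (if _ ≠ y then J _ y * φ _ * φ y else 0))]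
  rfl

lemma hamilOff_congr (hΔ : Δ ⊆ Λ) {ξ η : V → ℝ} (h : ∀ y ∉ Δ, ξ y = η y) :
    hamilOff J β Δ Λ ξ = hamilOff J β Δ Λ η := by
  have hoff : ∀ x ∈ Λ \ Δ, ξ x = η x := fun x hx => h x (Finset.mem_sdiff.1 hx).2
  have hfield : ∀ x, extField J Λ ξ x = extField J Λ η x :=
    extField_congr fun y hy => h y fun hyΔ => hy (hΔ hyΔ)
  unfold hamilOff
  congr 2
  · congr 1
    exact Finset.sum_congr rfl fun x hx => Finset.sum_congr rfl fun y hy => by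
      rw [hoff x hx, hoff y hy]
  · exact Finset.sum_congr rfl fun x hx => by rw [hoff x hx, hfield]

lemma hamil_eq_add_hamilOff (hsymm : ∀ x y, J x y = J y x) {φ : V → ℝ} (hφ : FieldSummable J φ)
    (h : Δ ⊆ Λ) :
    hamil J β Λ φ (restrictTo Λ φ) = hamil J β Δ φ (restrictTo Δ φ) + hamilOff J β Δ Λ φ := by
  have hinner : ∀ x ∈ Δ, ∑ y ∈ Λ \ Δ, (if x ≠ y then J x y * φ x * φ y else 0) =
      φ x * ∑ y ∈ Λ \ Δ, J x y * φ y := by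
    intro x hx
    rw [Finset.mul_sum]
    refine Finset.sum_congr rfl fun y hy => ?_
    rw [if_pos (ne_of_mem_of_not_mem hx (Finset.mem_sdiff.1 hy).2)]
    ring
  have hcross : ∑ x ∈ Λ \ Δ, ∑ y ∈ Δ, (if x ≠ y then J x y * φ x * φ y else 0) =
      ∑ x ∈ Δ, φ x * ∑ y ∈ Λ \ Δ, J x y * φ y := by
    rw [Finset.sum_comm, ← Finset.sum_congr rfl hinner]
    refine Finset.sum_congr rfl fun y _ => Finset.sum_congr rfl fun x _ => ?_
    simp only [hsymm x y, ne_comm (a := x)]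
    split_ifs
    · ring
    · rfl
  rw [hamil_restrictTo, hamil_restrictTo, hamilOff]
  simp_rw [extField_eq_sum_add hφ h]
  rw [← Finset.sum_sdiff h, ← Finset.sum_sdiff h]
  simp_rw [← Finset.sum_sdiff h (f := fun y => (if _ ≠ y then J _ y * φ _ * φ y else 0))]
  simp only [Finset.sum_add_distrib, mul_add]
  rw [Finset.sum_congr rfl hinner, hcross]
  ring

lemma weight_eq_mul (hsymm : ∀ x y, J x y = J y x) {φ : V → ℝ} (hφ : FieldSummable J φ)
    (h : Δ ⊆ Λ) : weight J β Λ φ = expE (hamilOff J β Δ Λ φ) * weight J β Δ φ := by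
  rw [weight, hamil_eq_add_hamilOff hsymm hφ h, add_comm, expE_add, weight]

variable [HasGaussianMoments ρ]

lemma IsFerromagnet.lmarginal_weight_mul (hJ : IsFerromagnet J M) (hβ : 0 ≤ β) (Λ : Finset V)
    (ξ : V → ℝ) {F : (V → ℝ) → ℝ≥0∞} (hF : Measurable F) :
    lmarginal (fun _ => ρ) Λ (fun φ => weight J β Λ φ * F φ) ξ =
      partitionFn J β ρ Λ ξ * ∫⁻ φ, F φ ∂(spec J β ρ Λ ξ) := by
  rw [lintegral_spec_eq_lmarginal Λ ξ hF, ← mul_assoc, ENNReal.mul_inv_cancel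
    (hJ.partitionFn_ne_zero hβ ρ Λ ξ) (hJ.partitionFn_ne_top hβ ρ Λ ξ), one_mul]

lemma IsFerromagnet.lintegral_lintegral_spec_self (hJ : IsFerromagnet J M)
    (hβ : 0 ≤ β) (Λ : Finset V) (ξ : V → ℝ) {F : (V → ℝ) → ℝ≥0∞}
    (hF' : Measurable fun ξ => ∫⁻ φ, F φ ∂(spec J β ρ Λ ξ)) :
    ∫⁻ η, ∫⁻ φ, F φ ∂(spec J β ρ Λ η) ∂(spec J β ρ Λ ξ) = ∫⁻ φ, F φ ∂(spec J β ρ Λ ξ) := by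
  have := hJ.isProbabilityMeasure_gibbs hβ ρ Λ ξ
  simp only [lintegral_spec Λ ξ hF', spec_updateFinset, lintegral_const, measure_univ, mul_one]

lemma IsFerromagnet.lmarginal_weight_mul_of_subset (hJ : IsFerromagnet J M) (hβ : 0 ≤ β)
    (h : Δ ⊆ Λ) {ξ : V → ℝ} (hξ : FieldSummable J ξ) {F : (V → ℝ) → ℝ≥0∞} (hF : Measurable F) :
    lmarginal (fun _ => ρ) Δ (fun φ => weight J β Λ φ * F φ) ξ = expE (hamilOff J β Δ Λ ξ) *
      (partitionFn J β ρ Δ ξ * ∫⁻ φ, F φ ∂(spec J β ρ Δ ξ)) := by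
  rw [← hJ.lmarginal_weight_mul hβ Δ ξ hF, lmarginal, lmarginal,
    ← lintegral_const_mul' _ _ (expE_ne_top _)]
  refine lintegral_congr fun φ => ?_
  rw [weight_eq_mul hJ.symm (hξ.updateFinset Δ φ) h, mul_assoc,
    hamilOff_congr h fun _ => updateFinset_of_notMem ξ φ]

variable [Countable V]

lemma measurable_lintegral_spec (Λ : Finset V) {F : (V → ℝ) → ℝ≥0∞} (hF : Measurable F) :
    Measurable fun ξ => ∫⁻ φ, F φ ∂(spec J β ρ Λ ξ) := by
  simp_rw [lintegral_spec_eq_lmarginal Λ _ hF]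
  exact ((measurable_weight Λ).lmarginal _).inv.mul (((measurable_weight Λ).mul hF).lmarginal _)

lemma IsFerromagnet.lintegral_spec_of_subset (hJ : IsFerromagnet J M) (hβ : 0 ≤ β) (h : Δ ⊆ Λ)
    {ξ : V → ℝ} (hξ : FieldSummable J ξ) {F : (V → ℝ) → ℝ≥0∞} (hF : Measurable F) :
    ∫⁻ φ, F φ ∂(spec J β ρ Λ ξ) =
      ∫⁻ η, ∫⁻ φ, F φ ∂(spec J β ρ Δ η) ∂(spec J β ρ Λ ξ) := by
  have hF' := measurable_lintegral_spec (J := J) (β := β) (ρ := ρ) Δ hF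
  have hsplit : ∀ {K : (V → ℝ) → ℝ≥0∞}, Measurable K → lmarginal (fun _ => ρ) Λ K ξ =
      ∫⁻ φ, lmarginal (fun _ => ρ) Δ K (Function.updateFinset ξ (Λ \ Δ) φ)
        ∂(Measure.pi fun _ => ρ) := by
    intro K hK
    rw [← Finset.sdiff_union_of_subset h, lmarginal_union _ _ hK Finset.sdiff_disjoint, lmarginal,
      Finset.sdiff_union_of_subset h]
  rw [lintegral_spec_eq_lmarginal Λ ξ hF, lintegral_spec_eq_lmarginal Λ ξ hF',
    hsplit (by fun_prop), hsplit (by fun_prop)]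
  congr 1
  refine lintegral_congr fun φ => ?_
  have hξφ := hξ.updateFinset (Λ \ Δ) φ
  rw [hJ.lmarginal_weight_mul_of_subset hβ h hξφ hF,
    hJ.lmarginal_weight_mul_of_subset hβ h hξφ hF', hJ.lintegral_lintegral_spec_self hβ Δ _ hF']

end Consistency

section Monotonicity

variable {V : Type*} {J : V → V → ℝ} {β M : ℝ} {ρ : Measure ℝ} {ξ η : V → ℝ}

lemma extField_mono (hJ : ∀ x y, 0 ≤ J x y) {Λ : Finset V} (hη : FieldSummable J η)
    (hξ : FieldSummable J ξ) (h : ∀ y ∉ Λ, η y ≤ ξ y) (x : V) :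
    extField J Λ η x ≤ extField J Λ ξ x :=
  Summable.tsum_le_tsum (fun y => mul_le_mul_of_nonneg_left (h y.1 y.2) (hJ _ _))
    ((hη x).subtype _) ((hξ x).subtype _)

lemma mul_add_mul_le_sup_mul_add_inf_mul {a b s t : ℝ} (h : s ≤ t) :
    a * s + b * t ≤ (a ⊔ b) * t + (a ⊓ b) * s := by
  rcases le_total a b with hab | hab
  · rw [sup_eq_right.2 hab, inf_eq_left.2 hab]
    linarith
  · rw [sup_eq_left.2 hab, inf_eq_right.2 hab]
    nlinarith

lemma mul_add_mul_le_sup_mul_sup_add_inf_mul_inf (a b c d : ℝ) :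
    a * c + b * d ≤ (a ⊔ b) * (c ⊔ d) + (a ⊓ b) * (c ⊓ d) := by
  rcases le_total c d with hcd | hcd
  · rw [sup_eq_right.2 hcd, inf_eq_left.2 hcd]
    exact mul_add_mul_le_sup_mul_add_inf_mul hcd
  · rw [sup_eq_left.2 hcd, inf_eq_right.2 hcd, add_comm, sup_comm, inf_comm]
    exact mul_add_mul_le_sup_mul_add_inf_mul hcd

lemma hamil_add_hamil_le (hJ : ∀ x y, 0 ≤ J x y) (hβ : 0 ≤ β) {Λ : Finset V}
    (h : ∀ x, extField J Λ η x ≤ extField J Λ ξ x) (φ ψ : Λ → ℝ) :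
    hamil J β Λ η φ + hamil J β Λ ξ ψ ≤ hamil J β Λ ξ (φ ⊔ ψ) + hamil J β Λ η (φ ⊓ ψ) := by
  have hfield : ∑ x, φ x * extField J Λ η x + ∑ x, ψ x * extField J Λ ξ x ≤
      ∑ x, (φ ⊔ ψ) x * extField J Λ ξ x + ∑ x, (φ ⊓ ψ) x * extField J Λ η x := by
    rw [← Finset.sum_add_distrib, ← Finset.sum_add_distrib]
    exact Finset.sum_le_sum fun x _ => mul_add_mul_le_sup_mul_add_inf_mul (h x)
  have hpair : (∑ x : Λ, ∑ y : Λ, if x.1 ≠ y.1 then J x.1 y.1 * φ x * φ y else 0) +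
      (∑ x : Λ, ∑ y : Λ, if x.1 ≠ y.1 then J x.1 y.1 * ψ x * ψ y else 0) ≤
      (∑ x : Λ, ∑ y : Λ, if x.1 ≠ y.1 then J x.1 y.1 * (φ ⊔ ψ) x * (φ ⊔ ψ) y else 0) +
      (∑ x : Λ, ∑ y : Λ, if x.1 ≠ y.1 then J x.1 y.1 * (φ ⊓ ψ) x * (φ ⊓ ψ) y else 0) := by
    simp_rw [← Finset.sum_add_distrib]
    refine Finset.sum_le_sum fun x _ => Finset.sum_le_sum fun y _ => ?_
    split_ifs
    · simp_rw [mul_assoc, ← mul_add]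
      exact mul_le_mul_of_nonneg_left
        (mul_add_mul_le_sup_mul_sup_add_inf_mul_inf (φ x) (ψ x) (φ y) (ψ y)) (hJ _ _)
    · exact le_rfl
  simp only [hamil_eq]
  rw [← mul_add, ← mul_add]
  refine mul_le_mul_of_nonneg_left ?_ hβ
  linarith

lemma updateFinset_le_updateFinset {Λ : Finset V} (h : ∀ y ∉ Λ, η y ≤ ξ y) {φ ψ : Λ → ℝ}
    (hφψ : φ ≤ ψ) : Function.updateFinset η Λ φ ≤ Function.updateFinset ξ Λ ψ := by
  intro y
  simp only [Function.updateFinset]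
  split_ifs with hy
  exacts [hφψ _, h y hy]

lemma IsFerromagnet.lintegral_expE_hamil_mul_indicator [HasGaussianMoments ρ]
    (hJ : IsFerromagnet J M) (hβ : 0 ≤ β) (Λ : Finset V) (ξ : V → ℝ) {U : Set (V → ℝ)}
    (hU : MeasurableSet U) :
    ∫⁻ φ, expE (hamil J β Λ ξ φ) * U.indicator 1 (Function.updateFinset ξ Λ φ)
      ∂(Measure.pi fun _ : Λ => ρ) = partitionFn J β ρ Λ ξ * spec J β ρ Λ ξ U := by
  rw [← lintegral_indicator_one hU,
    ← hJ.lmarginal_weight_mul hβ Λ ξ (measurable_one.indicator hU)]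
  simp only [lmarginal, weight_updateFinset]

lemma IsFerromagnet.spec_mono [HasGaussianMoments ρ] (hJ : IsFerromagnet J M) (hβ : 0 ≤ β)
    {Λ : Finset V} (hη : FieldSummable J η) (hξ : FieldSummable J ξ) (h : ∀ y ∉ Λ, η y ≤ ξ y)
    {U : Set (V → ℝ)} (hU : IsUpperSet U) (hUm : MeasurableSet U) :
    spec J β ρ Λ η U ≤ spec J β ρ Λ ξ U := by
  have hmeas : ∀ ξ : V → ℝ, Measurable fun φ : Λ → ℝ =>
      expE (hamil J β Λ ξ φ) * U.indicator 1 (Function.updateFinset ξ Λ φ) := fun ξ =>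
    (measurable_expE_hamil Λ ξ).mul
      ((measurable_one.indicator hUm).comp measurable_updateFinset)
  have hlattice : ∀ φ ψ : Λ → ℝ,
      expE (hamil J β Λ η φ) * U.indicator 1 (Function.updateFinset η Λ φ) *
        expE (hamil J β Λ ξ ψ) ≤
      expE (hamil J β Λ ξ (φ ⊔ ψ)) * U.indicator 1 (Function.updateFinset ξ Λ (φ ⊔ ψ)) *
        expE (hamil J β Λ η (φ ⊓ ψ)) := by
    intro φ ψ
    by_cases hφ : Function.updateFinset η Λ φ ∈ U
    · have hsup : Function.updateFinset ξ Λ (φ ⊔ ψ) ∈ U :=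
        hU (updateFinset_le_updateFinset h le_sup_left) hφ
      simp only [Set.indicator_of_mem hφ, Set.indicator_of_mem hsup, Pi.one_apply, mul_one,
        ← expE_add]
      exact expE_le_expE (hamil_add_hamil_le hJ.nonneg hβ (extField_mono hJ.nonneg hη hξ h) φ ψ)
    · simp [Set.indicator_of_notMem hφ]
  have hfour := lintegral_pi_mul_lintegral_pi_le (fun _ => ρ) (hmeas η)
    (measurable_expE_hamil Λ ξ) (hmeas ξ) (measurable_expE_hamil Λ η) hlattice
  simp only [hJ.lintegral_expE_hamil_mul_indicator hβ Λ _ hUm, ← partitionFn_eq] at hfour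
  refine (ENNReal.mul_le_mul_iff_right (mul_ne_zero (hJ.partitionFn_ne_zero hβ ρ Λ η)
    (hJ.partitionFn_ne_zero hβ ρ Λ ξ)) (ENNReal.mul_ne_top (hJ.partitionFn_ne_top hβ ρ Λ η)
    (hJ.partitionFn_ne_top hβ ρ Λ ξ))).1 ?_
  convert hfour using 1 <;> ring

end Monotonicity

section FieldBounds

variable {V : Type*} {J : V → V → ℝ} {M ε : ℝ} {Δ : Finset V}

/-- The contribution of a finite set `F` of exterior vertices to the field at `x`, set to zero when
the whole field diverges, so that it always converges to `extField`. -/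
noncomputable def truncField (J : V → V → ℝ) (Δ : Finset V) (ξ : V → ℝ)
    (F : Finset {y : V // y ∉ Δ}) (x : V) : ℝ :=
  if Summable fun y : {y : V // y ∉ Δ} => J x y * ξ y then ∑ y ∈ F, J x y * ξ y else 0

lemma tendsto_truncField (Δ : Finset V) (ξ : V → ℝ) (x : V) :
    Tendsto (fun F => truncField J Δ ξ F x) atTop (nhds (extField J Δ ξ x)) := by
  unfold truncField extField
  split_ifs with h
  · exact h.hasSum
  · rw [tsum_eq_zero_of_not_summable h]
    exact tendsto_const_nhds

lemma expE_extField_sq_le_of_forall {s : Finset V} {ξ : V → ℝ} {B : ℝ≥0∞}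
    (h : ∀ F, expE (ε * ∑ x ∈ s, truncField J Δ ξ F x ^ 2) ≤ B) :
    expE (ε * ∑ x ∈ s, extField J Δ ξ x ^ 2) ≤ B :=
  le_of_tendsto' ((continuous_expE.tendsto _).comp
    ((tendsto_finsetSum _ fun x _ => (tendsto_truncField Δ ξ x).pow 2).const_mul ε)) h

lemma IsFerromagnet.truncField_sq_le (hJ : IsFerromagnet J M) (ξ : V → ℝ)
    (F : Finset {y : V // y ∉ Δ}) (x : V) :
    truncField J Δ ξ F x ^ 2 ≤ M * ∑ y ∈ F, J x y * ξ y ^ 2 := by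
  have hsq : ∀ y ∈ F, 0 ≤ J x y * ξ y ^ 2 := fun y _ => mul_nonneg (hJ.nonneg _ _) (sq_nonneg _)
  unfold truncField
  split_ifs
  · refine (Finset.sum_sq_le_sum_mul_sum_of_sq_le_mul F (fun y _ => hJ.nonneg x y) hsq
      fun y _ => (by ring : _ = _).le).trans ?_
    refine mul_le_mul_of_nonneg_right ?_ (Finset.sum_nonneg hsq)
    simpa using hJ.sum_le x (F.map (.subtype _))
  · rw [zero_pow two_ne_zero]
    exact mul_nonneg (hJ.sum_le x ∅) (Finset.sum_nonneg hsq)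

lemma IsFerromagnet.expE_extField_le_iSup (hJ : IsFerromagnet J M) (hε : 0 ≤ ε) (Δ : Finset V)
    (ξ : V → ℝ) :
    expE (ε * ∑ x ∈ Δ, extField J Δ ξ x ^ 2) ≤
      ⨆ F : Finset {y : V // y ∉ Δ}, expE (∑ y ∈ F, (ε * M * ∑ x ∈ Δ, J x y) * ξ y ^ 2) := by
  refine expE_extField_sq_le_of_forall fun F => le_iSup_of_le F (expE_le_expE ?_)
  calc ε * ∑ x ∈ Δ, truncField J Δ ξ F x ^ 2
      ≤ ε * ∑ x ∈ Δ, M * ∑ y ∈ F, J x y * ξ y ^ 2 :=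
        mul_le_mul_of_nonneg_left (Finset.sum_le_sum fun x _ => hJ.truncField_sq_le ξ F x) hε
    _ = ∑ y ∈ F, (ε * M * ∑ x ∈ Δ, J x y) * ξ y ^ 2 := by
        rw [← Finset.mul_sum, Finset.sum_comm, ← mul_assoc, Finset.mul_sum]
        exact Finset.sum_congr rfl fun y _ => by rw [← Finset.sum_mul, mul_assoc _ (∑ x ∈ Δ, J x y)]

lemma convexOn_exp_mul_sq {K : ℝ} (hK : 0 ≤ K) :
    ConvexOn ℝ Set.univ fun u : ℝ => Real.exp (K * u ^ 2) := by
  have hsq : ConvexOn ℝ Set.univ fun u : ℝ => K * u ^ 2 := by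
    simpa using (even_two.convexOn_pow (𝕜 := ℝ)).smul hK
  refine ⟨convex_univ, fun u _ v _ a b ha hb hab => ?_⟩
  exact (Real.exp_le_exp.2 (hsq.2 trivial trivial ha hb hab)).trans
    (convexOn_exp.2 trivial trivial ha hb hab)

lemma exp_mul_sum_sq_le {ι : Type*} {K : ℝ} (hK : 0 ≤ K) {s : Finset ι} {w : ι → ℝ}
    (hw : ∀ i ∈ s, 0 ≤ w i) (hw1 : ∑ i ∈ s, w i ≤ 1) (u : ι → ℝ) :
    Real.exp (K * (∑ i ∈ s, w i * u i) ^ 2) ≤ 1 + ∑ i ∈ s, w i * Real.exp (K * u i ^ 2) := by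
  have hjensen := (convexOn_exp_mul_sq hK).map_add_sum_le (t := s) (w := w) (p := u)
    (v := 1 - ∑ i ∈ s, w i) (q := 0) hw (by ring) (fun _ _ => trivial) (by linarith) trivial
  simp only [smul_eq_mul, mul_zero, zero_add, ne_eq, OfNat.ofNat_ne_zero, not_false_eq_true,
    zero_pow, Real.exp_zero, mul_one] at hjensen
  linarith [Finset.sum_nonneg hw]

/-- A ferromagnetic interaction `J`, with summable enhancement `J g`, under which the profile `ζ`
grows in a controlled way along interacting pairs. Configurations of growth at most `ζ` then have
finite fields, and `ζ` may serve as a boundary condition. -/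
structure IsTempered (J g : V → V → ℝ) (M L : ℝ) (ζ : V → ℝ) : Prop where
  symm : ∀ x y, J x y = J y x
  nonneg : ∀ x y, 0 ≤ J x y
  one_le : ∀ x y, 1 ≤ g x y
  summable_mul : ∀ x, Summable fun y => J x y * g x y
  tsum_mul_le : ∀ x, ∑' y, J x y * g x y ≤ M
  bound_pos : 0 < M
  ratio_pos : 0 < L
  profile_pos : ∀ x, 0 < ζ x
  profile_le : ∀ x y, x ≠ y → J x y ≠ 0 → ζ y ≤ L * g x y * ζ x
  summable_exp : Summable fun x => Real.exp (-(2 * ζ x ^ 2))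

variable {g : V → V → ℝ} {L : ℝ} {ζ : V → ℝ}

lemma IsTempered.pos (H : IsTempered J g M L ζ) (x y : V) : 0 < g x y :=
  one_pos.trans_le (H.one_le x y)

lemma IsTempered.mul_nonneg (H : IsTempered J g M L ζ) (x y : V) : 0 ≤ J x y * g x y :=
  _root_.mul_nonneg (H.nonneg x y) (H.pos x y).le

lemma IsTempered.isFerromagnet (H : IsTempered J g M L ζ) : IsFerromagnet J M := by
  have hle : ∀ x y, J x y ≤ J x y * g x y := fun x y =>
    le_mul_of_one_le_right (H.nonneg x y) (H.one_le x y)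
  have hsummable : ∀ x, Summable (J x) := fun x =>
    .of_nonneg_of_le (H.nonneg x) (hle x) (H.summable_mul x)
  exact ⟨H.symm, H.nonneg, hsummable, fun x =>
    ((hsummable x).tsum_le_tsum (hle x) (H.summable_mul x)).trans (H.tsum_mul_le x)⟩

lemma IsTempered.expE_extField_le (H : IsTempered J g M L ζ) (hε : 0 ≤ ε) (Δ : Finset V)
    (ξ : V → ℝ) (x : V) :
    expE (ε * extField J Δ ξ x ^ 2) ≤
      1 + ∑' y : {y : V // y ∉ Δ}, ENNReal.ofReal (J x y * g x y / M) *
        expE (ε * M ^ 2 * (ξ y / g x y) ^ 2) := by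
  have hM := H.bound_pos
  set w : {y : V // y ∉ Δ} → ℝ := fun y => J x y * g x y / M
  set u : {y : V // y ∉ Δ} → ℝ := fun y => ξ y / g x y
  have hw : ∀ y, 0 ≤ w y := fun y => div_nonneg (H.mul_nonneg x y) hM.le
  have hterm : ∀ y, 0 ≤ w y * Real.exp (ε * M ^ 2 * u y ^ 2) := fun y =>
    _root_.mul_nonneg (hw y) (Real.exp_pos _).le
  rw [← Finset.sum_singleton (fun x => extField J Δ ξ x ^ 2) x]
  refine expE_extField_sq_le_of_forall fun F => ?_
  rw [Finset.sum_singleton]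
  unfold truncField
  split_ifs
  · have hw1 : ∑ y ∈ F, w y ≤ 1 := by
      rw [← Finset.sum_div, div_le_one hM]
      simpa using ((H.summable_mul x).sum_le_tsum (F.map (.subtype _))
        fun y _ => H.mul_nonneg x y).trans (H.tsum_mul_le x)
    have hfield : ε * (∑ y ∈ F, J x y * ξ y) ^ 2 = ε * M ^ 2 * (∑ y ∈ F, w y * u y) ^ 2 := by
      have hwu : ∀ y ∈ F, w y * u y = J x y * ξ y / M := fun y _ => by
        have := (H.pos x y).ne'
        simp only [w, u]
        field_simp
      rw [Finset.sum_congr rfl hwu, ← Finset.sum_div]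
      field_simp
    rw [hfield]
    refine (ENNReal.ofReal_le_ofReal (exp_mul_sum_sq_le (by positivity) (fun y _ => hw y) hw1
      u)).trans ?_
    rw [ENNReal.ofReal_add zero_le_one (Finset.sum_nonneg fun y _ => hterm y),
      ENNReal.ofReal_one, ENNReal.ofReal_sum_of_nonneg fun y _ => hterm y]
    refine add_le_add le_rfl (le_trans (Finset.sum_le_sum fun y _ => ?_) (ENNReal.sum_le_tsum F))
    rw [ENNReal.ofReal_mul (hw y), expE]
  · simp

end FieldBounds

section Iteration

lemma expE_add_mul_le {a b : ℝ} (ha : 0 ≤ a) (hb : 0 ≤ b) (hab : a + b = 1) (s t : ℝ) :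
    expE (a * s + b * t) ≤ ENNReal.ofReal a * expE s + ENNReal.ofReal b * expE t := by
  rw [expE, expE, expE, ← ENNReal.ofReal_mul ha, ← ENNReal.ofReal_mul hb, ← ENNReal.ofReal_add
    (mul_nonneg ha (Real.exp_pos s).le) (mul_nonneg hb (Real.exp_pos t).le)]
  exact ENNReal.ofReal_le_ofReal (convexOn_exp.2 trivial trivial ha hb hab)

lemma lintegral_expE_mul_le {Ω : Type*} [MeasurableSpace Ω] {μ : Measure Ω} [IsProbabilityMeasure μ]
    {X : Ω → ℝ} {p n : ℝ} (hp : 0 ≤ p) (hp1 : p ≤ 1) (h : ∫⁻ ω, expE (X ω) ∂μ ≤ expE n) :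
    ∫⁻ ω, expE (p * X ω) ∂μ ≤ expE (p * n) := by
  have hconvex : ∀ t, expE (p * t) ≤ ENNReal.ofReal (1 - p) + ENNReal.ofReal p * expE t := by
    intro t
    simpa using expE_add_mul_le (sub_nonneg.2 hp1) hp (by ring) 0 t
  calc ∫⁻ ω, expE (p * X ω) ∂μ
      ≤ ∫⁻ ω, expE (p * n) * (ENNReal.ofReal (1 - p) +
          ENNReal.ofReal p * (expE (-n) * expE (X ω))) ∂μ := by
        refine lintegral_mono fun ω => ?_
        rw [← expE_add (-n), (by ring : p * X ω = p * n + p * (-n + X ω)), expE_add]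
        gcongr
        exact hconvex _
    _ = expE (p * n) * (ENNReal.ofReal (1 - p) +
          ENNReal.ofReal p * (expE (-n) * ∫⁻ ω, expE (X ω) ∂μ)) := by
        rw [lintegral_const_mul' _ _ (expE_ne_top _), lintegral_add_left measurable_const,
          lintegral_const_mul' _ _ ENNReal.ofReal_ne_top, lintegral_const_mul' _ _ (expE_ne_top _),
          lintegral_const, measure_univ, mul_one]
    _ ≤ expE (p * n) * (ENNReal.ofReal (1 - p) + ENNReal.ofReal p * (expE (-n) * expE n)) := by
        gcongr
    _ = expE (p * n) := by
        rw [← expE_add, neg_add_cancel, expE_zero, mul_one,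
          ← ENNReal.ofReal_add (sub_nonneg.2 hp1) hp, sub_add_cancel, ENNReal.ofReal_one, mul_one]

lemma le_expE_of_forall_add_div_two_pow {m : ℝ≥0∞} {a b : ℝ}
    (h : ∀ n : ℕ, m ≤ expE (a + b / 2 ^ n)) : m ≤ expE a := by
  have hexponent : Tendsto (fun n : ℕ => a + b / 2 ^ n) atTop (nhds a) := by
    simpa using (tendsto_const_nhds.div_atTop
      (tendsto_pow_atTop_atTop_of_one_lt (one_lt_two (α := ℝ)))).const_add a
  exact ge_of_tendsto' ((continuous_expE.tendsto a).comp hexponent) h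

variable {V : Type*} {m : V → ℝ≥0∞} {ζ : V → ℝ} {c : ℝ}

lemma le_expE_of_contraction_on {Λ : Finset V} {κ A : ℝ} (hc : 0 ≤ c) (hκ : κ ≤ 1) (hA : 0 ≤ A)
    (hfinite : ∀ y ∈ Λ, m y ≠ ⊤) (hout : ∀ y ∉ Λ, m y ≤ expE (A * ζ y ^ 2))
    (hstep : ∀ x ∈ Λ, ∀ s, 0 ≤ s → (∀ y, m y ≤ expE (s + A * ζ y ^ 2)) →
      m x ≤ expE (c + s / 2 + κ * A * ζ x ^ 2)) {x : V} (hx : x ∈ Λ) :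
    m x ≤ expE (2 * c + κ * A * ζ x ^ 2) := by
  have hAζ : ∀ y, 0 ≤ A * ζ y ^ 2 := fun y => by positivity
  obtain ⟨s, hs, hms⟩ : ∃ s : ℝ, 0 ≤ s ∧ ∀ y ∈ Λ, m y ≤ expE s := by
    obtain ⟨s, hs, hle⟩ := exists_le_expE (ENNReal.sum_ne_top.2 hfinite)
    exact ⟨s, hs, fun y hy => (Finset.single_le_sum (fun _ _ => zero_le) hy).trans hle⟩
  have hiter : ∀ n : ℕ, ∀ y, m y ≤ expE (2 * c + s / 2 ^ n + A * ζ y ^ 2) := by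
    intro n
    induction n with
    | zero =>
      intro y
      rw [pow_zero, div_one]
      by_cases hy : y ∈ Λ
      · exact (hms y hy).trans (expE_le_expE (by linarith [hAζ y]))
      · exact (hout y hy).trans (expE_le_expE (by linarith))
    | succ n ih =>
      intro y
      by_cases hy : y ∈ Λ
      · refine (hstep y hy _ (by positivity) ih).trans (expE_le_expE ?_)
        have hle : κ * A * ζ y ^ 2 ≤ A * ζ y ^ 2 := by
          rw [mul_assoc]
          exact mul_le_of_le_one_left (hAζ y) hκ
        rw [pow_succ (2 : ℝ), ← div_div]
        linarith
      · exact (hout y hy).trans (expE_le_expE (le_add_of_nonneg_left (by positivity)))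
  have hlimit : ∀ y, m y ≤ expE (2 * c + A * ζ y ^ 2) := fun y =>
    le_expE_of_forall_add_div_two_pow (b := s) fun n => by
      rw [add_right_comm]
      exact hiter n y
  refine (hstep x hx _ (by positivity) hlimit).trans_eq ?_
  congr 2
  ring

lemma le_expE_of_contraction {s : ℝ} (hc : 0 ≤ c) (hs : 0 ≤ s)
    (hm : ∀ y, m y ≤ expE (s + ζ y ^ 2))
    (hstep : ∀ x s τ, 0 ≤ s → 0 ≤ τ → (∀ y, m y ≤ expE (s + τ * ζ y ^ 2)) →
      m x ≤ expE (c + s / 2 + 1 / 2 * τ * ζ x ^ 2)) (x : V) :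
    m x ≤ expE (2 * c) := by
  have hiter : ∀ n : ℕ, ∀ y, m y ≤ expE (2 * c + s / 2 ^ n + 1 / 2 ^ n * ζ y ^ 2) := by
    intro n
    induction n with
    | zero =>
      intro y
      refine (hm y).trans (expE_le_expE ?_)
      simp only [pow_zero, div_one, one_mul]
      linarith
    | succ n ih =>
      intro y
      refine (hstep y _ _ (by positivity) (by positivity) ih).trans_eq ?_
      congr 1
      field_simp
      ring
  refine le_expE_of_forall_add_div_two_pow (b := s + ζ x ^ 2) fun n => (hiter n x).trans_eq ?_
  congr 1
  ring

end Iteration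

section Moments

variable {V : Type*} {J g : V → V → ℝ} {β M L : ℝ} {ρ : Measure ℝ} {ζ : V → ℝ}

/-- The DLR equation of `μ` in `Δ`. Unlike in `IsGibbsMeasure`, the test function may depend on the
whole configuration. -/
def IsDLR (J : V → V → ℝ) (β : ℝ) (ρ : Measure ℝ) (Δ : Finset V) (μ : Measure (V → ℝ)) : Prop :=
  ∀ F : (V → ℝ) → ℝ≥0∞, Measurable F →
    ∫⁻ φ, F φ ∂μ = ∫⁻ η, ∫⁻ φ, F φ ∂(spec J β ρ Δ η) ∂μ

/-- The Gaussian moment of the spin at `y`. -/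
noncomputable def sqMoment (μ : Measure (V → ℝ)) (A : ℝ) (y : V) : ℝ≥0∞ :=
  ∫⁻ φ, expE (A * φ y ^ 2) ∂μ

lemma IsTempered.fieldSummable (H : IsTempered J g M L ζ) {t : ℝ} {ξ : V → ℝ}
    (h : ∀ x, |ξ x| ≤ t * ζ x) : FieldSummable J ξ := by
  intro x
  refine (summable_congr_cofinite (f := fun y => if y = x then 0 else J x y * ξ y) ?_).1 ?_
  · filter_upwards [(Set.finite_singleton x).compl_mem_cofinite] with y hy
    rw [if_neg (by simpa using hy)]
  refine .of_norm_bounded ((H.summable_mul x).mul_left (|t| * (L * ζ x))) fun y => ?_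
  have hbound : 0 ≤ |t| * (L * ζ x) * (J x y * g x y) :=
    _root_.mul_nonneg (by have := H.ratio_pos; have := H.profile_pos x; positivity)
      (H.mul_nonneg x y)
  have hJ := H.nonneg x y
  split_ifs with hyx
  · rwa [norm_zero]
  · rw [Real.norm_eq_abs, abs_mul, abs_of_nonneg hJ]
    rcases eq_or_ne (J x y) 0 with hJ0 | hJ0
    · simpa only [hJ0, zero_mul] using hbound
    · calc J x y * |ξ y| ≤ J x y * (|t| * ζ y) := by
            gcongr
            exact (h y).trans (mul_le_mul_of_nonneg_right (le_abs_self t) (H.profile_pos y).le)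
        _ ≤ J x y * (|t| * (L * g x y * ζ x)) := by
            gcongr
            exact H.profile_le x y (Ne.symm hyx) hJ0
        _ = |t| * (L * ζ x) * (J x y * g x y) := by ring

lemma IsTempered.tsum_ofReal_le_one (H : IsTempered J g M L ζ) (s : Set V) (x : V) :
    ∑' y : s, ENNReal.ofReal (J x y * g x y / M) ≤ 1 := by
  refine (ENNReal.tsum_comp_le_tsum_of_injective Subtype.val_injective
    fun y => ENNReal.ofReal (J x y * g x y / M)).trans ?_
  rw [← ENNReal.ofReal_tsum_of_nonneg (fun y => div_nonneg (H.mul_nonneg x y) H.bound_pos.le)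
    ((H.summable_mul x).div_const M), ENNReal.ofReal_le_one, tsum_div_const, div_le_one H.bound_pos]
  exact H.tsum_mul_le x

lemma IsTempered.lintegral_expE_div_sq_le (H : IsTempered J g M L ζ) {μ : Measure (V → ℝ)}
    [IsProbabilityMeasure μ] {A θ κ s τ : ℝ} {x y : V} (hθ : 0 ≤ θ) (hθ2 : θ ≤ 1 / 2)
    (hθκ : θ * L ^ 2 ≤ κ) (hs : 0 ≤ s) (hτ : 0 ≤ τ) (hxy : x ≠ y) (hJ : J x y ≠ 0)
    (hm : sqMoment μ A y ≤ expE (s + τ * ζ y ^ 2)) :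
    ∫⁻ η, expE (θ * A * (η y / g x y) ^ 2) ∂μ ≤ expE (s / 2 + κ * τ * ζ x ^ 2) := by
  have hg := H.pos x y
  set p := θ / g x y ^ 2 with hp
  have hp0 : 0 ≤ p := by positivity
  have hp2 : p ≤ 1 / 2 := (div_le_self hθ (one_le_pow₀ (H.one_le x y))).trans hθ2
  have hpζ : p * ζ y ^ 2 ≤ κ * ζ x ^ 2 :=
    calc p * ζ y ^ 2 ≤ p * (L * g x y * ζ x) ^ 2 := by
          gcongr
          exacts [(H.profile_pos y).le, H.profile_le x y hxy hJ]
      _ = θ * L ^ 2 * ζ x ^ 2 := by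
          rw [hp]
          field_simp
      _ ≤ κ * ζ x ^ 2 := by gcongr
  calc ∫⁻ η, expE (θ * A * (η y / g x y) ^ 2) ∂μ = ∫⁻ η, expE (p * (A * η y ^ 2)) ∂μ := by
        refine lintegral_congr fun η => ?_
        rw [hp]
        congr 1
        ring
    _ ≤ expE (p * (s + τ * ζ y ^ 2)) := lintegral_expE_mul_le hp0 (by linarith) hm
    _ ≤ expE (s / 2 + κ * τ * ζ x ^ 2) := by
        refine expE_le_expE ?_
        calc p * (s + τ * ζ y ^ 2) = p * s + τ * (p * ζ y ^ 2) := by ring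
          _ ≤ 1 / 2 * s + τ * (κ * ζ x ^ 2) := by gcongr
          _ = s / 2 + κ * τ * ζ x ^ 2 := by ring

variable [HasGaussianMoments ρ]

lemma IsTempered.exists_sqMoment_spec_singleton_le (H : IsTempered J g M L ζ) (hβ : 0 ≤ β)
    (ρ : Measure ℝ) [HasGaussianMoments ρ] (A : ℝ) {θ : ℝ} (hθ : 0 < θ) :
    ∃ D : ℝ, 0 ≤ D ∧ ∀ (x : V) (η : V → ℝ), sqMoment (spec J β ρ {x} η) A x ≤
      expE D * (1 + ∑' y : {y : V // y ∉ ({x} : Finset V)},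
        ENNReal.ofReal (J x y * g x y / M) * expE (θ * (η y / g x y) ^ 2)) := by
  have hM := H.bound_pos
  obtain ⟨D, hD, hmoment⟩ := H.isFerromagnet.exists_lintegral_gibbs_expE_le hβ ρ A
    (ε := θ / M ^ 2) (by positivity)
  refine ⟨D, hD, fun x η => ?_⟩
  have hfield := H.expE_extField_le (ε := θ / M ^ 2) (by positivity) {x} η x
  rw [div_mul_cancel₀ _ (by positivity)] at hfield
  have hupdate : ∀ φ : ({x} : Finset V) → ℝ,
      A * Function.updateFinset η {x} φ x ^ 2 = A * ∑ y : ({x} : Finset V), φ y ^ 2 := by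
    intro φ
    simp [Function.updateFinset, Subsingleton.elim default
      (⟨x, Finset.mem_singleton_self x⟩ : ({x} : Finset V))]
  calc sqMoment (spec J β ρ {x} η) A x
      = ∫⁻ φ, expE (A * ∑ y : ({x} : Finset V), φ y ^ 2) ∂(gibbs J β ρ {x} η) := by
        rw [sqMoment, lintegral_spec _ _ (by fun_prop)]
        simp_rw [hupdate]
    _ ≤ expE D * expE (θ / M ^ 2 * extField J {x} η x ^ 2) := by
        refine (hmoment {x} η).trans_eq ?_
        rw [Finset.sum_coe_sort {x} fun y => extField J {x} η y ^ 2, Finset.sum_singleton,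
          Finset.card_singleton, Nat.cast_one, mul_one, expE_add]
    _ ≤ _ := by gcongr

lemma IsTempered.exists_sqMoment_contraction [Countable V] (H : IsTempered J g M L ζ) (hβ : 0 ≤ β)
    (ρ : Measure ℝ) [HasGaussianMoments ρ] {A κ : ℝ} (hA : 0 < A) (hκ : 0 < κ) :
    ∃ D : ℝ, 0 ≤ D ∧ ∀ μ : Measure (V → ℝ), IsProbabilityMeasure μ → ∀ x, IsDLR J β ρ {x} μ →
      ∀ s τ : ℝ, 0 ≤ s → 0 ≤ τ → (∀ y, sqMoment μ A y ≤ expE (s + τ * ζ y ^ 2)) →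
        sqMoment μ A x ≤ expE (D + s / 2 + κ * τ * ζ x ^ 2) := by
  have hL := H.ratio_pos
  obtain ⟨θ, hθ, hθ2, hθκ⟩ : ∃ θ : ℝ, 0 < θ ∧ θ ≤ 1 / 2 ∧ θ * L ^ 2 ≤ κ :=
    ⟨min (1 / 2) (κ / L ^ 2), by positivity, min_le_left _ _,
      (le_div_iff₀ (by positivity)).1 (min_le_right _ _)⟩
  obtain ⟨D, hD, hsite⟩ := H.exists_sqMoment_spec_singleton_le hβ ρ A (mul_pos hθ hA)
  refine ⟨D + Real.log 2, by positivity, fun μ hμ x hx s τ hs hτ hm => ?_⟩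
  set w : {y : V // y ∉ ({x} : Finset V)} → ℝ≥0∞ := fun y => ENNReal.ofReal (J x y * g x y / M)
  set E := expE (s / 2 + κ * τ * ζ x ^ 2) with hE
  have hmeas : ∀ y : {y : V // y ∉ ({x} : Finset V)},
      Measurable fun η : V → ℝ => w y * expE (θ * A * (η y / g x y) ^ 2) := by fun_prop
  have hterm : ∀ y, ∫⁻ η, w y * expE (θ * A * (η y / g x y) ^ 2) ∂μ ≤ w y * E := by
    intro y
    rw [lintegral_const_mul' _ _ ENNReal.ofReal_ne_top]
    rcases eq_or_ne (J x y) 0 with hJ | hJ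
    · simp [w, hJ]
    · have hxy : x ≠ y := fun h => y.2 (by simp [← h])
      exact mul_le_mul_right (H.lintegral_expE_div_sq_le hθ.le hθ2 hθκ hs hτ hxy hJ (hm y)) _
  calc sqMoment μ A x = ∫⁻ η, sqMoment (spec J β ρ {x} η) A x ∂μ := hx _ (by fun_prop)
    _ ≤ ∫⁻ η, expE D * (1 + ∑' y, w y * expE (θ * A * (η y / g x y) ^ 2)) ∂μ :=
        lintegral_mono (hsite x)
    _ = expE D * (1 + ∑' y, ∫⁻ η, w y * expE (θ * A * (η y / g x y) ^ 2) ∂μ) := by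
        rw [lintegral_const_mul' _ _ (expE_ne_top _), lintegral_add_left measurable_const,
          lintegral_one, measure_univ, lintegral_tsum fun y => (hmeas y).aemeasurable]
    _ ≤ expE D * (1 + (∑' y, w y) * E) := by
        rw [← ENNReal.tsum_mul_right]
        gcongr with y
        exact hterm y
    _ ≤ expE D * (E + 1 * E) := by
        gcongr
        exacts [one_le_expE (by positivity), H.tsum_ofReal_le_one {y | y ∉ ({x} : Finset V)} x]
    _ = expE (D + Real.log 2 + s / 2 + κ * τ * ζ x ^ 2) := by
        rw [one_mul, ← two_mul, ← expE_log_two, hE, ← expE_add, ← expE_add]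
        congr 1
        ring

lemma IsFerromagnet.sqMoment_spec_ne_top (hJ : IsFerromagnet J M) (hβ : 0 ≤ β) {A : ℝ}
    (hA : 0 ≤ A) {Λ : Finset V} (ξ : V → ℝ) {y : V} (hy : y ∈ Λ) :
    sqMoment (spec J β ρ Λ ξ) A y ≠ ⊤ := by
  obtain ⟨D, -, hmoment⟩ := hJ.exists_lintegral_gibbs_expE_le hβ ρ A one_pos
  refine ne_top_of_le_ne_top (expE_ne_top _) (le_trans ?_ (hmoment Λ ξ))
  rw [sqMoment, lintegral_spec _ _ (by fun_prop)]
  refine lintegral_mono fun φ => expE_le_expE (mul_le_mul_of_nonneg_left ?_ hA)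
  simp only [Function.updateFinset, hy, dite_true]
  exact Finset.single_le_sum (f := fun i : Λ => φ i ^ 2) (fun _ _ => sq_nonneg _)
    (Finset.mem_univ _)

lemma IsFerromagnet.sqMoment_spec_of_notMem (hJ : IsFerromagnet J M) (hβ : 0 ≤ β) (A : ℝ)
    {Λ : Finset V} (ξ : V → ℝ) {y : V} (hy : y ∉ Λ) :
    sqMoment (spec J β ρ Λ ξ) A y = expE (A * ξ y ^ 2) := by
  have := hJ.isProbabilityMeasure_gibbs hβ ρ Λ ξ
  rw [sqMoment, lintegral_spec _ _ (by fun_prop)]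
  simp only [updateFinset_of_notMem ξ _ hy, lintegral_const, measure_univ, mul_one]

lemma IsTempered.isDLR_spec [Countable V] (H : IsTempered J g M L ζ) (hβ : 0 ≤ β)
    {Δ Λ : Finset V} (h : Δ ⊆ Λ) {ξ : V → ℝ} (hξ : ∀ x, |ξ x| ≤ ζ x) :
    IsDLR J β ρ Δ (spec J β ρ Λ ξ) := fun _ =>
  H.isFerromagnet.lintegral_spec_of_subset hβ h (H.fieldSummable (t := 1) (by simpa using hξ))

lemma IsTempered.exists_sqMoment_spec_le [Countable V] (H : IsTempered J g M L ζ) (hβ : 0 ≤ β)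
    (ρ : Measure ℝ) [HasGaussianMoments ρ] {A : ℝ} (hA : 1 ≤ A) :
    ∃ D : ℝ, 0 ≤ D ∧ ∀ (Λ : Finset V) (ξ : V → ℝ), (∀ x, |ξ x| ≤ ζ x) → ∀ x ∈ Λ,
      sqMoment (spec J β ρ Λ ξ) A x ≤ expE (D + ζ x ^ 2) := by
  have hA0 : 0 < A := one_pos.trans_le hA
  obtain ⟨D, hD, hstep⟩ := H.exists_sqMoment_contraction hβ ρ hA0 (inv_pos.2 hA0)
  refine ⟨2 * D, by positivity, fun Λ ξ hξ x hx => ?_⟩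
  have hout : ∀ y ∉ Λ, sqMoment (spec J β ρ Λ ξ) A y ≤ expE (A * ζ y ^ 2) := fun y hy => by
    rw [H.isFerromagnet.sqMoment_spec_of_notMem hβ A ξ hy]
    exact expE_le_expE
      (mul_le_mul_of_nonneg_left (sq_le_sq.2 ((hξ y).trans (le_abs_self _))) hA0.le)
  have hcontract := le_expE_of_contraction_on hD (inv_le_one_of_one_le₀ hA) hA0.le
    (fun y hy => H.isFerromagnet.sqMoment_spec_ne_top hβ hA0.le ξ hy) hout
    (fun x hx s hs => hstep _ (H.isFerromagnet.isProbabilityMeasure_spec hβ ρ Λ ξ) x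
      (H.isDLR_spec hβ (Finset.singleton_subset_iff.2 hx) hξ) s A hs hA0.le) hx
  rwa [inv_mul_cancel₀ hA0.ne', one_mul] at hcontract

lemma IsTempered.exists_sqMoment_le [Countable V] (H : IsTempered J g M L ζ) (hβ : 0 ≤ β)
    (ρ : Measure ℝ) [HasGaussianMoments ρ] {A : ℝ} (hA : 0 < A) :
    ∃ D : ℝ, 0 ≤ D ∧ ∀ μ : Measure (V → ℝ), IsProbabilityMeasure μ → (∀ x, IsDLR J β ρ {x} μ) →
      ∀ s : ℝ, 0 ≤ s → (∀ y, sqMoment μ A y ≤ expE (s + ζ y ^ 2)) →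
        ∀ y, sqMoment μ A y ≤ expE D := by
  obtain ⟨D, hD, hstep⟩ := H.exists_sqMoment_contraction hβ ρ hA one_half_pos
  exact ⟨2 * D, by positivity, fun μ hμ hdlr s hs hm =>
    le_expE_of_contraction hD hs hm fun x => hstep μ hμ x (hdlr x)⟩

end Moments

section Rounding

variable {ι : Type*} [Fintype ι]

/-- The points of the unit cube whose coordinates sum to at most `m`. Its vertices are the
indicators of the sets of at most `m` indices. -/
def cappedCube (ι : Type*) [Fintype ι] (m : ℕ) : Set (ι → ℝ) :=
  Set.Icc 0 1 ∩ {u | ∑ i, u i ≤ m}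

lemma eq_zero_of_mem_extremePoints_cappedCube {m : ℕ} {u v : ι → ℝ}
    (hu : u ∈ (cappedCube ι m).extremePoints ℝ) (hv : ∀ i, |v i| ≤ min (u i) (1 - u i))
    (hsum : ∑ i, u i + |∑ i, v i| ≤ m) : v = 0 := by
  have hmem : ∀ w : ι → ℝ, (∀ i, |w i| = |v i|) → |∑ i, w i| = |∑ i, v i| →
      u + w ∈ cappedCube ι m := by
    intro w hw hwsum
    have hbox : ∀ i, |w i| ≤ u i ∧ |w i| ≤ 1 - u i := fun i => by
      rw [hw]
      exact le_min_iff.1 (hv i)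
    refine ⟨⟨fun i => ?_, fun i => ?_⟩, ?_⟩
    · change 0 ≤ u i + w i
      linarith [neg_abs_le (w i), hbox i]
    · change u i + w i ≤ 1
      linarith [le_abs_self (w i), hbox i]
    · change ∑ i, (u i + w i) ≤ m
      rw [Finset.sum_add_distrib]
      linarith [le_abs_self (∑ i, w i)]
  have hneg : u + -v ∈ cappedCube ι m := hmem (-v) (fun i => abs_neg _) (by simp)
  have hmid : u ∈ openSegment ℝ (u + v) (u + -v) :=
    ⟨1 / 2, 1 / 2, by norm_num, by norm_num, by norm_num, by module⟩
  simpa using (mem_extremePoints.1 hu).2 _ (hmem v (fun _ => rfl) rfl) _ hneg hmid |>.1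

lemma min_pos_of_mem_cappedCube {m : ℕ} {u : ι → ℝ} (hu : u ∈ cappedCube ι m) {i : ι}
    (hi : u i ≠ 0 ∧ u i ≠ 1) : 0 < min (u i) (1 - u i) :=
  lt_min ((hu.1.1 i).lt_of_ne' hi.1) (sub_pos.2 ((hu.1.2 i).lt_of_ne hi.2))

lemma min_nonneg_of_mem_cappedCube {m : ℕ} {u : ι → ℝ} (hu : u ∈ cappedCube ι m) (i : ι) :
    0 ≤ min (u i) (1 - u i) :=
  le_min (hu.1.1 i) (sub_nonneg.2 (hu.1.2 i))

lemma eq_of_mem_extremePoints_cappedCube {m : ℕ} {u : ι → ℝ}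
    (hu : u ∈ (cappedCube ι m).extremePoints ℝ) {i j : ι} (hi : u i ≠ 0 ∧ u i ≠ 1)
    (hj : u j ≠ 0 ∧ u j ≠ 1) : i = j := by
  by_contra hij
  have hsum : ∑ j, u j ≤ m := hu.1.2
  set ε := min (min (u i) (1 - u i)) (min (u j) (1 - u j)) with hε_def
  have hε : 0 < ε :=
    lt_min (min_pos_of_mem_cappedCube hu.1 hi) (min_pos_of_mem_cappedCube hu.1 hj)
  have hv : ∀ k, |(Pi.single i ε - Pi.single j ε : ι → ℝ) k| ≤ min (u k) (1 - u k) := by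
    intro k
    rcases eq_or_ne k i with rfl | hki
    · rw [Pi.sub_apply, Pi.single_eq_same, Pi.single_eq_of_ne hij, sub_zero, abs_of_pos hε]
      exact min_le_left _ _
    rcases eq_or_ne k j with rfl | hkj
    · rw [Pi.sub_apply, Pi.single_eq_same, Pi.single_eq_of_ne hki, zero_sub, abs_neg,
        abs_of_pos hε]
      exact min_le_right _ _
    · rw [Pi.sub_apply, Pi.single_eq_of_ne hki, Pi.single_eq_of_ne hkj, sub_zero, abs_zero]
      exact min_nonneg_of_mem_cappedCube hu.1 k
  have hzero := eq_zero_of_mem_extremePoints_cappedCube hu hv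
    (by simpa [Finset.sum_sub_distrib] using hsum)
  simpa [hij, hε.ne'] using congrFun hzero i

lemma eq_zero_or_one_of_mem_extremePoints_cappedCube {m : ℕ} {u : ι → ℝ}
    (hu : u ∈ (cappedCube ι m).extremePoints ℝ) (i : ι) : u i = 0 ∨ u i = 1 := by
  by_contra! hi
  have hsum : ∑ j, u j ≤ m := hu.1.2
  set ε := min (u i) (1 - u i) with hε_def
  have hε : 0 < ε := min_pos_of_mem_cappedCube hu.1 hi
  set T : Finset ι := (Finset.univ.erase i).filter fun k => u k ≠ 0
  have hinteger : ∑ k ∈ Finset.univ.erase i, u k = T.card := by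
    rw [← Finset.sum_filter_ne_zero, Finset.sum_congr rfl fun k hk => ?_, Finset.sum_const,
      nsmul_one]
    have hk' := Finset.mem_filter.1 hk
    by_contra hk1
    exact Finset.ne_of_mem_erase hk'.1 (eq_of_mem_extremePoints_cappedCube hu ⟨hk'.2, hk1⟩ hi)
  -- An integer plus the single fractional coordinate stays strictly below the integer `m`.
  have hslack : ∑ k, u k + ε ≤ m := by
    rw [← Finset.add_sum_erase _ _ (Finset.mem_univ i), hinteger] at hsum ⊢
    have hTm : T.card < m := by
      have hui : 0 < u i := hε.trans_le (min_le_left _ _)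
      exact_mod_cast (by linarith : (T.card : ℝ) < m)
    have hTm' : (T.card : ℝ) + 1 ≤ m := by exact_mod_cast hTm
    linarith [min_le_right (u i) (1 - u i)]
  have hv : ∀ k, |(Pi.single i ε : ι → ℝ) k| ≤ min (u k) (1 - u k) := by
    intro k
    rcases eq_or_ne k i with rfl | hki
    · rw [Pi.single_eq_same, abs_of_pos hε]
    · rw [Pi.single_eq_of_ne hki, abs_zero]
      exact min_nonneg_of_mem_cappedCube hu.1 k
  have hzero := eq_zero_of_mem_extremePoints_cappedCube hu hv
    (by simpa [abs_of_pos hε] using hslack)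
  simpa [hε.ne'] using congrFun hzero i

lemma cappedCube_subset_convexHull (m : ℕ) : cappedCube ι m ⊆
    convexHull ℝ ((fun s : Finset ι => (s : Set ι).indicator 1) '' {s | s.card ≤ m}) := by
  have hlinear : IsLinearMap ℝ fun u : ι → ℝ => ∑ i, u i :=
    ⟨fun u v => Finset.sum_add_distrib, fun a u => (Finset.mul_sum ..).symm⟩
  have hconvex : Convex ℝ (cappedCube ι m) :=
    (convex_Icc 0 1).inter (convex_halfSpace_le hlinear m)
  have hcompact : IsCompact (cappedCube ι m) :=
    isCompact_Icc.inter_right (isClosed_le (by fun_prop) continuous_const)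
  have hfinite : ((fun s : Finset ι => (s : Set ι).indicator (1 : ι → ℝ)) ''
      {s | s.card ≤ m}).Finite := (Set.toFinite _).image _
  rw [← closure_convexHull_extremePoints hcompact hconvex]
  refine closure_minimal (convexHull_mono fun u hu => ?_) (hfinite.isClosed_convexHull ℝ)
  have hindicator : ((Finset.univ.filter fun i => u i ≠ 0 : Finset ι) : Set ι).indicator 1 = u := by
    ext i
    rcases eq_zero_or_one_of_mem_extremePoints_cappedCube hu i with hi | hi <;> simp [hi]
  refine ⟨_, ?_, hindicator⟩
  have hcard : ((Finset.univ.filter fun i => u i ≠ 0).card : ℝ) = ∑ i, u i := by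
    conv_rhs => rw [← hindicator]
    simp [Set.indicator_apply, Finset.sum_ite]
  have hsum : ∑ i, u i ≤ m := hu.1.2
  rw [← hcard] at hsum
  exact_mod_cast hsum

variable {Ω : Type*} [MeasurableSpace Ω]

lemma convex_setOf_lintegral_expE_le (ν : Measure Ω) {q : ι → Ω → ℝ} (hq : ∀ i, Measurable (q i))
    (B : ℝ≥0∞) : Convex ℝ {u : ι → ℝ | ∫⁻ ω, expE (∑ i, u i * q i ω) ∂ν ≤ B} := by
  intro u hu v hv a b ha hb hab
  have hcombine : ∀ ω, ∑ i, (a • u + b • v) i * q i ω =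
      a * ∑ i, u i * q i ω + b * ∑ i, v i * q i ω := by
    intro ω
    rw [Finset.mul_sum, Finset.mul_sum, ← Finset.sum_add_distrib]
    refine Finset.sum_congr rfl fun i _ => ?_
    simp only [Pi.add_apply, Pi.smul_apply, smul_eq_mul]
    ring
  calc ∫⁻ ω, expE (∑ i, (a • u + b • v) i * q i ω) ∂ν
      ≤ ∫⁻ ω, ENNReal.ofReal a * expE (∑ i, u i * q i ω) +
          ENNReal.ofReal b * expE (∑ i, v i * q i ω) ∂ν := by
        refine lintegral_mono fun ω => ?_
        rw [hcombine]
        exact expE_add_mul_le ha hb hab _ _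
    _ = ENNReal.ofReal a * ∫⁻ ω, expE (∑ i, u i * q i ω) ∂ν +
          ENNReal.ofReal b * ∫⁻ ω, expE (∑ i, v i * q i ω) ∂ν := by
        rw [lintegral_add_left (by fun_prop), lintegral_const_mul' _ _ ENNReal.ofReal_ne_top,
          lintegral_const_mul' _ _ ENNReal.ofReal_ne_top]
    _ ≤ ENNReal.ofReal a * B + ENNReal.ofReal b * B := by
        gcongr
        exacts [hu, hv]
    _ = B := by rw [← add_mul, ← ENNReal.ofReal_add ha hb, hab, ENNReal.ofReal_one, one_mul]

lemma lintegral_expE_sum_mul_le (ν : Measure Ω) {q : ι → Ω → ℝ} (hq : ∀ i, Measurable (q i))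
    {W : ℝ} (hW : 0 < W) {m : ℕ} {B : ℝ≥0∞}
    (hB : ∀ s : Finset ι, s.card ≤ m → ∫⁻ ω, expE (W * ∑ i ∈ s, q i ω) ∂ν ≤ B)
    {u : ι → ℝ} (hu : ∀ i, 0 ≤ u i) (huW : ∀ i, u i ≤ W) (hsum : ∑ i, u i ≤ W * m) :
    ∫⁻ ω, expE (∑ i, u i * q i ω) ∂ν ≤ B := by
  have hmem : (fun i => u i / W) ∈ cappedCube ι m := by
    refine ⟨⟨fun i => div_nonneg (hu i) hW.le, fun i => (div_le_one hW).2 (huW i)⟩, ?_⟩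
    change ∑ i, u i / W ≤ m
    rw [← Finset.sum_div]
    exact (div_le_iff₀' hW).2 hsum
  have hvertices : (fun s : Finset ι => (s : Set ι).indicator (1 : ι → ℝ)) '' {s | s.card ≤ m} ⊆
      {u | ∫⁻ ω, expE (∑ i, u i * (W * q i ω)) ∂ν ≤ B} := by
    rintro _ ⟨s, hs, rfl⟩
    simpa [Set.indicator_apply, Finset.mul_sum] using hB s hs
  have hle : ∫⁻ ω, expE (∑ i, u i / W * (W * q i ω)) ∂ν ≤ B := convexHull_min hvertices
    (convex_setOf_lintegral_expE_le ν (fun i => (hq i).const_mul W) B)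
    (cappedCube_subset_convexHull m hmem)
  have hcancel : ∀ i ω, u i / W * (W * q i ω) = u i * q i ω := fun i ω => by field_simp
  simpa only [hcancel] using hle

end Rounding

section BlockMoments

variable {V : Type*} {J g : V → V → ℝ} {β M L : ℝ} {ρ : Measure ℝ} {ζ : V → ℝ}

lemma sum_restrictTo_sq (Δ : Finset V) (φ : V → ℝ) :
    ∑ y : Δ, restrictTo Δ φ y ^ 2 = ∑ y ∈ Δ, φ y ^ 2 :=
  Finset.sum_coe_sort Δ fun y => φ y ^ 2

lemma IsFerromagnet.lintegral_expE_extField_le [Countable V] (hJ : IsFerromagnet J M)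
    (ν : Measure (V → ℝ)) {W ε : ℝ} (hW : 0 < W) (hε : 0 ≤ ε) (hM : 0 ≤ M) {m : ℕ} {B : ℝ≥0∞}
    (hB : ∀ Δ : Finset V, Δ.card ≤ m → ∫⁻ φ, expE (W * ∑ y ∈ Δ, φ y ^ 2) ∂ν ≤ B)
    {Δ : Finset V} (hεW : ε * M ^ 2 ≤ W) (hcard : ε * M ^ 2 * Δ.card ≤ W * m) :
    ∫⁻ η, expE (ε * ∑ x ∈ Δ, extField J Δ η x ^ 2) ∂ν ≤ B := by
  have hu : ∀ y, 0 ≤ ε * M * ∑ x ∈ Δ, J x y := fun y =>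
    mul_nonneg (mul_nonneg hε hM) (Finset.sum_nonneg fun x _ => hJ.nonneg x y)
  refine (lintegral_mono fun η => hJ.expE_extField_le_iSup hε Δ η).trans ?_
  rw [lintegral_iSup_directed_of_measurable (f := fun (F : Finset {y // y ∉ Δ}) (η : V → ℝ) =>
      expE (∑ y ∈ F, (ε * M * ∑ x ∈ Δ, J x y) * η y ^ 2)) (fun F => by fun_prop)
    (Monotone.directed_le fun F F' hF η => expE_le_expE
      (Finset.sum_le_sum_of_subset_of_nonneg hF fun y _ _ => mul_nonneg (hu y) (sq_nonneg _)))]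
  refine iSup_le fun F => ?_
  simp_rw [← Finset.sum_coe_sort F]
  refine lintegral_expE_sum_mul_le ν (q := fun (y : F) φ => φ y ^ 2) (fun y => by fun_prop) hW
    (m := m) (fun s hs => ?_) (fun y => hu y) (fun y => ?_) ?_
  · simpa using hB (s.map ((Function.Embedding.subtype _).trans (.subtype _))) (by simpa using hs)
  · calc ε * M * ∑ x ∈ Δ, J x y ≤ ε * M * M := by
          gcongr
          simpa only [hJ.symm _ y.1.1] using hJ.sum_le y Δ
      _ ≤ W := by linarith
  · calc ∑ y : F, ε * M * ∑ x ∈ Δ, J x y = ε * M * ∑ x ∈ Δ, ∑ y ∈ F, J x y := by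
          rw [Finset.sum_coe_sort F fun y => ε * M * ∑ x ∈ Δ, J x y, ← Finset.mul_sum,
            Finset.sum_comm]
      _ ≤ ε * M * ∑ _x ∈ Δ, M := by
          gcongr
          simpa using hJ.sum_le _ (F.map (.subtype _))
      _ ≤ W * m := by
          rw [Finset.sum_const, nsmul_eq_mul]
          linarith

lemma IsFerromagnet.lintegral_expE_sum_sq_le_of_card_le_two_mul [Countable V]
    (hJ : IsFerromagnet J M) (hM : 0 < M) {ν : Measure (V → ℝ)} {Δ : Finset V}
    (hdlr : IsDLR J β ρ Δ ν) {W C : ℝ} (hW : 0 < W)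
    (hmoment : ∀ η : V → ℝ, ∫⁻ ψ, expE (W * ∑ y : Δ, ψ y ^ 2) ∂(gibbs J β ρ Δ η) ≤
      expE (C + W / (2 * M ^ 2) * ∑ x : Δ, extField J Δ η x ^ 2))
    {m : ℕ} (hΔ : Δ.card ≤ 2 * m) {B : ℝ≥0∞}
    (hB : ∀ Δ' : Finset V, Δ'.card ≤ m → ∫⁻ φ, expE (W * ∑ y ∈ Δ', φ y ^ 2) ∂ν ≤ B) :
    ∫⁻ φ, expE (W * ∑ y ∈ Δ, φ y ^ 2) ∂ν ≤ expE C * B := by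
  have hε : W / (2 * M ^ 2) * M ^ 2 = W / 2 := by field_simp
  have hΔm : (Δ.card : ℝ) ≤ 2 * m := by exact_mod_cast hΔ
  calc ∫⁻ φ, expE (W * ∑ y ∈ Δ, φ y ^ 2) ∂ν
      = ∫⁻ η, ∫⁻ φ, expE (W * ∑ y ∈ Δ, φ y ^ 2) ∂(spec J β ρ Δ η) ∂ν := hdlr _ (by fun_prop)
    _ ≤ ∫⁻ η, expE C * expE (W / (2 * M ^ 2) * ∑ x ∈ Δ, extField J Δ η x ^ 2) ∂ν := by
        refine lintegral_mono fun η => ?_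
        rw [lintegral_spec _ _ (by fun_prop), ← expE_add]
        simp_rw [← sum_restrictTo_sq Δ, restrictTo_updateFinset]
        exact hmoment η
    _ = expE C * ∫⁻ η, expE (W / (2 * M ^ 2) * ∑ x ∈ Δ, extField J Δ η x ^ 2) ∂ν :=
        lintegral_const_mul' _ _ (expE_ne_top _)
    _ ≤ expE C * B := by
        gcongr
        refine hJ.lintegral_expE_extField_le ν hW (by positivity) hM.le hB ?_ ?_
        · linarith
        · rw [hε]
          nlinarith

-- Conditioning on the spins outside `Δ` leaves the field created by them, whose exponential moment
-- is controlled by blocks of half the size of `Δ`.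
lemma IsTempered.exists_lintegral_expE_sum_sq_le [Countable V] (H : IsTempered J g M L ζ)
    (hβ : 0 ≤ β) (ρ : Measure ℝ) [HasGaussianMoments ρ] {W D : ℝ} (hW : 0 < W) (hD : 0 ≤ D) :
    ∃ K : ℝ, 0 ≤ K ∧ ∀ ν : Measure (V → ℝ), IsProbabilityMeasure ν → (∀ Δ, IsDLR J β ρ Δ ν) →
      (∀ y, sqMoment ν W y ≤ expE D) → ∀ Δ : Finset V,
        ∫⁻ φ, expE (W * ∑ y ∈ Δ, φ y ^ 2) ∂ν ≤ expE (D + K * Δ.card) := by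
  have hM := H.bound_pos
  obtain ⟨C, hC, hmoment⟩ := H.isFerromagnet.exists_lintegral_gibbs_expE_le hβ ρ W
    (ε := W / (2 * M ^ 2)) (by positivity)
  refine ⟨4 * C, by positivity, fun ν hν hdlr hm => ?_⟩
  suffices hblock : ∀ (n : ℕ) (Δ : Finset V), Δ.card ≤ n →
      ∫⁻ φ, expE (W * ∑ y ∈ Δ, φ y ^ 2) ∂ν ≤ expE (D + 4 * C * n) from
    fun Δ => hblock _ Δ le_rfl
  intro n
  induction n using Nat.strong_induction_on with
  | _ n ih =>
  intro Δ hΔ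
  rcases Nat.lt_or_ge n 2 with hn | hn
  · refine le_trans ?_ (expE_le_expE (le_add_of_nonneg_right (by positivity : 0 ≤ 4 * C * n)))
    rcases Δ.eq_empty_or_nonempty with rfl | hne
    · simpa using one_le_expE hD
    · obtain ⟨x, rfl⟩ := Finset.card_eq_one.1 (le_antisymm (by omega) hne.card_pos)
      simpa only [Finset.sum_singleton, sqMoment] using hm x
  · refine (H.isFerromagnet.lintegral_expE_sum_sq_le_of_card_le_two_mul hM (hdlr Δ) hW
      (hmoment Δ) (m := (n + 1) / 2) (by omega) (ih _ (by omega))).trans ?_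
    rw [← expE_add]
    refine expE_le_expE ?_
    have hΔn : (Δ.card : ℝ) ≤ n := by exact_mod_cast hΔ
    have hhalf : (n + 4 * ((n + 1) / 2 : ℕ) : ℝ) ≤ 4 * n := by
      exact_mod_cast (by omega : n + 4 * ((n + 1) / 2) ≤ 4 * n)
    nlinarith

lemma IsTempered.exists_lintegral_expE_extField_le [Countable V] (H : IsTempered J g M L ζ)
    (hβ : 0 ≤ β) (ρ : Measure ℝ) [HasGaussianMoments ρ] {W D ε : ℝ} (hW : 0 < W) (hD : 0 ≤ D)
    (hε : 0 ≤ ε) (hεW : ε * M ^ 2 ≤ W) :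
    ∃ K : ℝ, 0 ≤ K ∧ ∀ ν : Measure (V → ℝ), IsProbabilityMeasure ν → (∀ Δ, IsDLR J β ρ Δ ν) →
      (∀ y, sqMoment ν W y ≤ expE D) → ∀ Δ : Finset V,
        ∫⁻ η, expE (ε * ∑ x ∈ Δ, extField J Δ η x ^ 2) ∂ν ≤ expE (K * Δ.card) := by
  obtain ⟨K, hK, hmoment⟩ := H.exists_lintegral_expE_sum_sq_le hβ ρ hW hD
  refine ⟨D + K, by positivity, fun ν hν hdlr hm Δ => ?_⟩
  rcases Δ.eq_empty_or_nonempty with rfl | hne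
  · simp
  · have hcard : (1 : ℝ) ≤ Δ.card := by exact_mod_cast hne.card_pos
    refine (H.isFerromagnet.lintegral_expE_extField_le ν hW hε H.bound_pos.le (m := Δ.card)
      (B := expE (D + K * Δ.card)) (fun Δ' hΔ' => (hmoment ν hν hdlr hm Δ').trans ?_) hεW
      (by gcongr)).trans (expE_le_expE ?_)
    · gcongr
    · nlinarith

end BlockMoments

section DLREquation

open ProbabilityTheory in
lemma integral_bind {α γ : Type*} [MeasurableSpace α] [MeasurableSpace γ] {μ : Measure α}
    {κ : α → Measure γ} (hκ : Measurable κ) {f : γ → ℝ} (hf : Integrable f (μ.bind κ)) :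
    ∫ c, f c ∂(μ.bind κ) = ∫ a, ∫ c, f c ∂κ a ∂μ := by
  let K : Kernel α γ := ⟨κ, hκ⟩
  have hcomp : μ.bind κ = (K ∘ₖ Kernel.const Unit μ) () :=
    Measure.comp_eq_comp_const_apply (κ := K)
  rw [hcomp] at hf ⊢
  exact Kernel.integral_comp hf

variable {V : Type*} {J g : V → V → ℝ} {β M L : ℝ} {ρ : Measure ℝ} {ζ : V → ℝ}

lemma gibbs_eq_map_spec (J : V → V → ℝ) (β : ℝ) (ρ : Measure ℝ) (Λ : Finset V) :
    gibbs J β ρ Λ = fun ξ => (spec J β ρ Λ ξ).map (restrictTo Λ) :=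
  funext fun ξ => (map_restrictTo_spec Λ ξ).symm

variable [Countable V] [HasGaussianMoments ρ]

lemma measurable_spec (J : V → V → ℝ) (β : ℝ) (ρ : Measure ℝ) [HasGaussianMoments ρ]
    (Λ : Finset V) : Measurable (spec J β ρ Λ) :=
  Measure.measurable_of_measurable_coe _ fun s hs => by
    simpa only [lintegral_indicator_one hs] using
      measurable_lintegral_spec (J := J) (β := β) (ρ := ρ) Λ (measurable_one.indicator hs)

lemma measurable_gibbs (J : V → V → ℝ) (β : ℝ) (ρ : Measure ℝ) [HasGaussianMoments ρ]
    (Λ : Finset V) : Measurable (gibbs J β ρ Λ) := by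
  rw [gibbs_eq_map_spec]
  exact (Measure.measurable_map _ (by fun_prop)).comp (measurable_spec J β ρ Λ)

lemma isDLR_iff_bind_eq {Λ : Finset V} {ν : Measure (V → ℝ)} :
    IsDLR J β ρ Λ ν ↔ ν.bind (spec J β ρ Λ) = ν := by
  have hspec := (measurable_spec J β ρ Λ).aemeasurable (μ := ν)
  refine ⟨fun h => Measure.ext_of_lintegral _ fun F hF => ?_, fun h F hF => ?_⟩
  · rw [Measure.lintegral_bind hspec hF.aemeasurable, h F hF]
  · rw [← Measure.lintegral_bind hspec hF.aemeasurable, h]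

lemma IsDLR.map_restrictTo {Λ : Finset V} {ν : Measure (V → ℝ)} (h : IsDLR J β ρ Λ ν) :
    ν.map (restrictTo Λ) = ν.bind (gibbs J β ρ Λ) := by
  have hrestrict := measurable_restrictTo Λ
  ext s hs
  conv_lhs => rw [← isDLR_iff_bind_eq.1 h]
  rw [Measure.map_apply hrestrict hs,
    Measure.bind_apply (hrestrict hs) (measurable_spec J β ρ Λ).aemeasurable,
    Measure.bind_apply hs (measurable_gibbs J β ρ Λ).aemeasurable, gibbs_eq_map_spec]
  exact lintegral_congr fun η => (Measure.map_apply hrestrict hs).symm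

lemma IsFerromagnet.isGibbsMeasure_iff (hJ : IsFerromagnet J M) (hβ : 0 ≤ β)
    {ν : Measure (V → ℝ)} [IsProbabilityMeasure ν] :
    IsGibbsMeasure J β ρ ν ↔ ∀ Λ, ν.map (restrictTo Λ) = ν.bind (gibbs J β ρ Λ) := by
  have hgibbs := measurable_gibbs J β ρ
  have (Λ : Finset V) : IsProbabilityMeasure (ν.bind (gibbs J β ρ Λ)) :=
    isProbabilityMeasure_bind (hgibbs Λ).aemeasurable
      (.of_forall fun η => hJ.isProbabilityMeasure_gibbs hβ ρ Λ η)
  have (Λ : Finset V) : IsProbabilityMeasure (ν.map (restrictTo Λ)) :=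
    Measure.isProbabilityMeasure_map (measurable_restrictTo Λ).aemeasurable
  have hrestrict : ∀ (Λ : Finset V) {G : (Λ → ℝ) → ℝ}, Measurable G →
      ∫ φ, G (restrictTo Λ φ) ∂ν = ∫ ψ, G ψ ∂(ν.map (restrictTo Λ)) := fun Λ G hG =>
    (integral_map (measurable_restrictTo Λ).aemeasurable hG.aestronglyMeasurable).symm
  have hdisintegrate : ∀ (Λ : Finset V) {G : (Λ → ℝ) → ℝ}, Measurable G → (∃ K, ∀ ψ, |G ψ| ≤ K) →
      ∫ η, ∫ ψ, G ψ ∂(gibbs J β ρ Λ η) ∂ν = ∫ ψ, G ψ ∂(ν.bind (gibbs J β ρ Λ)) :=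
    fun Λ G hG ⟨K, hK⟩ => (integral_bind (hgibbs Λ)
      (.of_bound hG.aestronglyMeasurable K (.of_forall hK))).symm
  refine ⟨fun h Λ => Measure.ext fun s hs => ?_, fun h Λ G hG hK => ?_⟩
  · have hs' : Measurable (s.indicator (1 : (Λ → ℝ) → ℝ)) := measurable_one.indicator hs
    have hbound : ∃ K : ℝ, ∀ ψ, |s.indicator (1 : (Λ → ℝ) → ℝ) ψ| ≤ K :=
      ⟨1, fun ψ => by by_cases hψ : ψ ∈ s <;> simp [hψ]⟩
    rw [← measureReal_eq_measureReal_iff, ← integral_indicator_one hs, ← integral_indicator_one hs,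
      ← hrestrict Λ hs', ← hdisintegrate Λ hs' hbound]
    exact h Λ _ hs' hbound
  · rw [hrestrict Λ hG, hdisintegrate Λ hG hK, h]

lemma IsTempered.isRegularWRT (H : IsTempered J g M L ζ) (hβ : 0 ≤ β) {ν : Measure (V → ℝ)}
    [hν : IsProbabilityMeasure ν] (hdlr : ∀ Λ, IsDLR J β ρ Λ ν) {W D a : ℝ} (hW : 0 < W)
    (hβW : β * M / 2 ≤ W) (hD : 0 ≤ D) (hm : ∀ y, sqMoment ν W y ≤ expE D)
    (ha : 3 * (β * M) / 2 ≤ a) : IsRegularWRT (rhoMod ρ a) ν := by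
  have hM := H.bound_pos
  obtain ⟨K, hK, hfield⟩ := H.exists_lintegral_expE_extField_le hβ ρ hW hD
    (ε := β / (2 * M)) (by positivity) (le_of_eq_of_le (by field_simp) hβW)
  set R := (gaussMoment ρ (-(β * (M / 2 + M))))⁻¹ * gaussMoment ρ a
  obtain ⟨r, hr, hRr⟩ : ∃ r, 0 ≤ r ∧ R ≤ expE r := exists_le_expE
    (ENNReal.mul_ne_top (ENNReal.inv_ne_top.2 (gaussMoment_ne_zero ρ _)) (gaussMoment_ne_top ρ a))
  refine ⟨r + K, by positivity, fun Λ => Measure.le_iff.2 fun s hs => ?_⟩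
  have hmeas : Measurable fun η => expE (β / (2 * M) * ∑ x : Λ, extField J Λ η x ^ 2) := by fun_prop
  calc ν.map (restrictTo Λ) s = ∫⁻ η, gibbs J β ρ Λ η s ∂ν := by
        rw [(hdlr Λ).map_restrictTo, Measure.bind_apply hs (measurable_gibbs J β ρ Λ).aemeasurable]
    _ ≤ ∫⁻ η, expE (β / (2 * M) * ∑ x : Λ, extField J Λ η x ^ 2) *
          (R ^ Λ.card * prodN (rhoMod ρ a) Λ s) ∂ν := by
        refine lintegral_mono fun η => ?_
        refine (H.isFerromagnet.gibbs_le_smul_prodN hβ hM ρ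
          (le_of_eq_of_le (by ring) ha) Λ η s).trans_eq ?_
        rw [Measure.smul_apply, smul_eq_mul, ← mul_assoc, mul_comm (expE _)]
    _ ≤ expE (K * Λ.card) * (expE r ^ Λ.card * prodN (rhoMod ρ a) Λ s) := by
        rw [lintegral_mul_const _ hmeas]
        gcongr
        refine (lintegral_congr fun η => ?_).trans_le (hfield ν hν hdlr hm Λ)
        rw [Finset.sum_coe_sort Λ fun x => extField J Λ η x ^ 2]
    _ = _ := by
        rw [Measure.smul_apply, smul_eq_mul, expE_pow, ← mul_assoc, ← expE_add, ← expE]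
        congr 2
        ring

end DLREquation

section GaussianTails

variable {V : Type*} {ζ : V → ℝ} {D t : ℝ} {μ : Measure (V → ℝ)}

/-- The configurations whose spin at each vertex `y` has absolute value at most `t * ζ y`. -/
def box (ζ : V → ℝ) (t : ℝ) : Set (V → ℝ) := {φ | ∀ y, |φ y| ≤ t * ζ y}

lemma isCompact_box (ζ : V → ℝ) (t : ℝ) : IsCompact (box ζ t) := by
  have hpi : box ζ t = Set.univ.pi fun y => Set.Icc (-(t * ζ y)) (t * ζ y) := by
    ext φ
    simp only [box, abs_le, Set.mem_ofPred_eq, Set.mem_univ_pi, Set.mem_Icc]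
  rw [hpi]
  exact isCompact_univ_pi fun _ => isCompact_Icc

/-- The spins have Gaussian tails at the scale of the profile `ζ`, uniformly over the vertices; this
is the form in which moment bounds give tightness and control of the boundary condition. -/
def HasGaussianTail (ζ : V → ℝ) (D : ℝ) (μ : Measure (V → ℝ)) : Prop :=
  ∀ t : ℝ, 1 ≤ t → ∀ y, μ {φ | t * ζ y < |φ y|} ≤ expE (D - 2 * t ^ 2 * ζ y ^ 2)

/-- The union bound on the probability of leaving `box ζ t` given by a Gaussian tail with
constant `D`. -/
noncomputable def boxTail (ζ : V → ℝ) (D t : ℝ) : ℝ≥0∞ := ∑' y, expE (D - 2 * t ^ 2 * ζ y ^ 2)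

lemma HasGaussianTail.measure_compl_box_le [Countable V] (h : HasGaussianTail ζ D μ)
    (ht : 1 ≤ t) : μ (box ζ t)ᶜ ≤ boxTail ζ D t := by
  have hunion : (box ζ t)ᶜ = ⋃ y, {φ | t * ζ y < |φ y|} := by
    ext φ
    simp [box]
  rw [hunion]
  exact (measure_iUnion_le _).trans (ENNReal.tsum_le_tsum fun y => h t ht y)

lemma exp_tail_le (ht : 1 ≤ t) (z : ℝ) :
    Real.exp (D - 2 * t ^ 2 * z ^ 2) ≤ Real.exp D * Real.exp (-(2 * z ^ 2)) := by
  rw [← Real.exp_add]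
  refine Real.exp_le_exp.2 ?_
  nlinarith [mul_nonneg (sub_nonneg.2 (one_le_pow₀ (n := 2) ht)) (sq_nonneg z)]

lemma boxTail_eq (hζ : Summable fun y => Real.exp (-(2 * ζ y ^ 2))) (ht : 1 ≤ t) :
    boxTail ζ D t = ENNReal.ofReal (∑' y, Real.exp (D - 2 * t ^ 2 * ζ y ^ 2)) :=
  (ENNReal.ofReal_tsum_of_nonneg (fun _ => (Real.exp_pos _).le)
    (.of_nonneg_of_le (fun _ => (Real.exp_pos _).le) (fun y => exp_tail_le ht (ζ y))
      (hζ.mul_left _))).symm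

lemma tendsto_boxTail (hζ : ∀ y, 0 < ζ y) (hsum : Summable fun y => Real.exp (-(2 * ζ y ^ 2)))
    (D : ℝ) : Tendsto (boxTail ζ D) atTop (nhds 0) := by
  have hterm : ∀ y, Tendsto (fun t : ℝ => Real.exp (D - 2 * t ^ 2 * ζ y ^ 2)) atTop (nhds 0) := by
    intro y
    have hsq : Tendsto (fun t : ℝ => 2 * ζ y ^ 2 * t ^ 2) atTop atTop :=
      (tendsto_pow_atTop two_ne_zero).const_mul_atTop (by have := hζ y; positivity)
    refine Real.tendsto_exp_atBot.comp
      ((tendsto_atBot_add_const_left _ D (tendsto_neg_atTop_atBot.comp hsq)).congr fun t => ?_)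
    simp only [Function.comp_apply]
    ring
  have hreal : Tendsto (fun t : ℝ => ∑' y, Real.exp (D - 2 * t ^ 2 * ζ y ^ 2)) atTop (nhds 0) := by
    suffices Tendsto (fun t : ℝ => ∑' y, Real.exp (D - 2 * t ^ 2 * ζ y ^ 2)) atTop
        (nhds (∑' _ : V, 0)) by simpa using this
    refine tendsto_tsum_of_dominated_convergence (hsum.mul_left (Real.exp D)) hterm ?_
    filter_upwards [eventually_ge_atTop 1] with t ht y
    rw [Real.norm_of_nonneg (Real.exp_pos _).le]
    exact exp_tail_le ht (ζ y)
  rw [← ENNReal.ofReal_zero]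
  refine (ENNReal.tendsto_ofReal hreal).congr' ?_
  filter_upwards [eventually_ge_atTop 1] with t ht using (boxTail_eq hsum ht).symm

lemma HasGaussianTail.tsum_measure_ne_top (hsum : Summable fun y => Real.exp (-(2 * ζ y ^ 2)))
    (h : HasGaussianTail ζ D μ) : ∑' y, μ {φ | ζ y < |φ y|} ≠ ⊤ := by
  refine ne_top_of_le_ne_top ?_ (ENNReal.tsum_le_tsum fun y => by simpa using h 1 le_rfl y)
  simpa [boxTail] using (boxTail_eq (D := D) hsum le_rfl).trans_ne ENNReal.ofReal_ne_top

lemma measure_lt_abs_le_of_sqMoment_le {A z : ℝ} {y : V} (hA : 3 ≤ A) (hz : 0 ≤ z) (ht : 1 ≤ t)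
    (h : sqMoment μ A y ≤ expE (D + z ^ 2)) :
    μ {φ | t * z < |φ y|} ≤ expE (D - 2 * t ^ 2 * z ^ 2) := by
  have hsub : {φ : V → ℝ | t * z < |φ y|} ⊆
      {φ | expE (A * (t * z) ^ 2) ≤ expE (A * φ y ^ 2)} := fun φ (hφ : t * z < |φ y|) =>
    expE_le_expE (mul_le_mul_of_nonneg_left
      (sq_le_sq.2 ((abs_of_nonneg (by positivity)).trans_le hφ.le)) (by linarith))
  have hmarkov := meas_ge_le_lintegral_div (μ := μ) (f := fun φ : V → ℝ => expE (A * φ y ^ 2))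
    (Measurable.aemeasurable (by fun_prop)) (expE_ne_zero (A * (t * z) ^ 2)) (expE_ne_top _)
  calc μ {φ | t * z < |φ y|} ≤ expE (D + z ^ 2) / expE (A * (t * z) ^ 2) :=
        (measure_mono hsub).trans (hmarkov.trans (ENNReal.div_le_div_right h _))
    _ = expE (D + z ^ 2 - A * (t * z) ^ 2) := by
        rw [div_eq_mul_inv, inv_expE, ← expE_add, sub_eq_add_neg]
    _ ≤ _ := expE_le_expE (by
        nlinarith [mul_nonneg (sub_nonneg.2 hA) (sq_nonneg (t * z)),
          mul_nonneg (sub_nonneg.2 (one_le_pow₀ (n := 2) ht)) (sq_nonneg z)])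

lemma HasGaussianTail.of_sqMoment_le (hζ : ∀ y, 0 ≤ ζ y) {A : ℝ} (hA : 3 ≤ A)
    (h : ∀ y, sqMoment μ A y ≤ expE D) : HasGaussianTail ζ D μ := fun _ ht y =>
  measure_lt_abs_le_of_sqMoment_le hA (hζ y) ht
    ((h y).trans (expE_le_expE (le_add_of_nonneg_right (sq_nonneg _))))

lemma hasGaussianTail_spec {J : V → V → ℝ} {β : ℝ} {ρ : Measure ℝ}
    {Λ : Finset V} {ξ : V → ℝ} (hξ : ∀ x, |ξ x| ≤ ζ x) {A : ℝ} (hA : 3 ≤ A)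
    (h : ∀ x ∈ Λ, sqMoment (spec J β ρ Λ ξ) A x ≤ expE (D + ζ x ^ 2)) :
    HasGaussianTail ζ D (spec J β ρ Λ ξ) := by
  intro t ht y
  have hζ : 0 ≤ ζ y := (abs_nonneg _).trans (hξ y)
  by_cases hy : y ∈ Λ
  · exact measure_lt_abs_le_of_sqMoment_le hA hζ ht (h y hy)
  · have hmeas : MeasurableSet {φ : V → ℝ | t * ζ y < |φ y|} :=
      measurableSet_lt (by fun_prop) (by fun_prop)
    have hnull : Function.updateFinset ξ Λ ⁻¹' {φ : V → ℝ | t * ζ y < |φ y|} = ∅ :=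
      Set.eq_empty_of_forall_notMem fun φ hφ => by
        change t * ζ y < |Function.updateFinset ξ Λ φ y| at hφ
        rw [updateFinset_of_notMem ξ φ hy] at hφ
        exact (hξ y).not_gt ((le_mul_of_one_le_left hζ ht).trans_lt hφ)
    rw [spec, Measure.map_apply measurable_updateFinset hmeas, hnull, measure_empty]
    exact zero_le

lemma exists_tendsto_of_hasGaussianTail [Countable V] (hζ : ∀ y, 0 < ζ y)
    (hsum : Summable fun y => Real.exp (-(2 * ζ y ^ 2))) {ι : Type*}
    {P : ι → ProbabilityMeasure (V → ℝ)} (h : ∀ i, HasGaussianTail ζ D (P i : Measure (V → ℝ)))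
    (U : Ultrafilter ι) : ∃ ν, Tendsto P U (nhds ν) := by
  have htight : IsTightMeasureSet
      {((μ : ProbabilityMeasure (V → ℝ)) : Measure (V → ℝ)) | μ ∈ Set.range P} := by
    refine isTightMeasureSet_iff_exists_isCompact_measure_compl_le.2 fun ε hε => ?_
    obtain ⟨t, htail, ht⟩ := (((tendsto_boxTail hζ hsum D).eventually_le_const hε).and
      (eventually_ge_atTop 1)).exists
    refine ⟨box ζ t, isCompact_box ζ t, ?_⟩
    rintro _ ⟨_, ⟨i, rfl⟩, rfl⟩
    exact ((h i).measure_compl_box_le ht).trans htail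
  obtain ⟨ν, -, hν⟩ := (isCompact_closure_of_isTightMeasureSet htight).ultrafilter_le_nhds
    (U.map P) (le_principal_iff.2 (mem_map.2 (univ_mem' fun i => subset_closure ⟨i, rfl⟩)))
  exact ⟨ν, hν⟩

lemma HasGaussianTail.of_tendsto [Countable V] {ι : Type*} {l : Filter ι} [NeBot l]
    {P : ι → ProbabilityMeasure (V → ℝ)} {ν : ProbabilityMeasure (V → ℝ)}
    (hν : Tendsto P l (nhds ν)) (h : ∀ i, HasGaussianTail ζ D (P i : Measure (V → ℝ))) :
    HasGaussianTail ζ D (ν : Measure (V → ℝ)) := by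
  intro t ht y
  have hopen : IsOpen {φ : V → ℝ | t * ζ y < |φ y|} := isOpen_lt (by fun_prop) (by fun_prop)
  refine (ProbabilityMeasure.le_liminf_measure_open_of_tendsto hν hopen).trans ?_
  exact liminf_le_of_frequently_le' (.of_forall fun i => h i t ht y)

lemma lintegral_le_of_tendsto {Ω ι : Type*} [MeasurableSpace Ω] [TopologicalSpace Ω]
    [OpensMeasurableSpace Ω] {l : Filter ι} [NeBot l] {P : ι → ProbabilityMeasure Ω}
    {ν : ProbabilityMeasure Ω} (hν : Tendsto P l (nhds ν)) {f : Ω → NNReal} (hf : Continuous f)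
    {B : ℝ≥0∞} (h : ∀ᶠ i in l, ∫⁻ ω, f ω ∂(P i : Measure Ω) ≤ B) :
    ∫⁻ ω, f ω ∂(ν : Measure Ω) ≤ B := by
  have hcap : ∀ n : ℕ, ∫⁻ ω, (min (f ω) n : NNReal) ∂(ν : Measure Ω) ≤ B := by
    intro n
    let F : BoundedContinuousFunction Ω NNReal := .mkOfBound ⟨fun ω => min (f ω) n, by fun_prop⟩ n
      fun a b => abs_sub_le_of_nonneg_of_le (NNReal.coe_nonneg _)
        (by exact_mod_cast min_le_right _ _) (NNReal.coe_nonneg _)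
        (by exact_mod_cast min_le_right _ _)
    refine le_of_tendsto (ProbabilityMeasure.tendsto_iff_forall_lintegral_tendsto.1 hν F)
      (h.mono fun i hi => (lintegral_mono fun ω => ?_).trans hi)
    exact ENNReal.coe_le_coe.2 (min_le_left _ _)
  have hsup : ∀ ω, (f ω : ℝ≥0∞) = ⨆ n : ℕ, ((min (f ω) n : NNReal) : ℝ≥0∞) := by
    intro ω
    obtain ⟨n, hn⟩ := exists_nat_ge (f ω)
    refine le_antisymm (le_iSup_of_le n (by rw [min_eq_left hn])) ?_
    exact iSup_le fun n => ENNReal.coe_le_coe.2 (min_le_left _ _)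
  simp_rw [hsup]
  rw [lintegral_iSup (fun n => (hf.min continuous_const).measurable.coe_nnreal_ennreal)
    (fun m n hmn ω => ENNReal.coe_le_coe.2 (min_le_min_left _ (by exact_mod_cast hmn)))]
  exact iSup_le hcap

end GaussianTails

open scoped NNReal BoundedContinuousFunction

section ContinuityInBoundaryCondition

variable {V X : Type*} [TopologicalSpace X] {J : V → V → ℝ} {β M : ℝ} {ξ : X → V → ℝ}
  {Λ : Finset V}

/-- The kernel `spec` at the boundary condition `ξ`, bundled as a probability measure so that
weak convergence makes sense. -/
noncomputable def IsFerromagnet.specProb (hJ : IsFerromagnet J M) (hβ : 0 ≤ β) (ρ : Measure ℝ)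
    [HasGaussianMoments ρ] (Λ : Finset V) (ξ : V → ℝ) : ProbabilityMeasure (V → ℝ) :=
  ⟨spec J β ρ Λ ξ, hJ.isProbabilityMeasure_spec hβ ρ Λ ξ⟩

@[simp]
lemma IsFerromagnet.coe_specProb (hJ : IsFerromagnet J M) (hβ : 0 ≤ β) (ρ : Measure ℝ)
    [HasGaussianMoments ρ] (Λ : Finset V) (ξ : V → ℝ) :
    (hJ.specProb hβ ρ Λ ξ : Measure (V → ℝ)) = spec J β ρ Λ ξ :=
  rfl

lemma continuous_updateFinset (hξ : Continuous ξ) (Λ : Finset V) :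
    Continuous fun p : X × (Λ → ℝ) => Function.updateFinset (ξ p.1) Λ p.2 := by
  refine continuous_pi fun y => ?_
  unfold Function.updateFinset
  split_ifs <;> fun_prop

variable [FirstCountableTopology X] [Countable V]

lemma IsFerromagnet.continuous_lintegral_expE_hamil_mul (hJ : IsFerromagnet J M) (hβ : 0 ≤ β)
    (ρ : Measure ℝ) [HasGaussianMoments ρ] (hξ : Continuous ξ)
    (hfield : ∀ x, Continuous fun a => extField J Λ (ξ a) x) (F : (V → ℝ) →ᵇ ℝ≥0) :
    Continuous fun a => ∫⁻ φ, expE (hamil J β Λ (ξ a) φ) *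
      F (Function.updateFinset (ξ a) Λ φ) ∂(Measure.pi fun _ : Λ => ρ) := by
  have hmerge := continuous_updateFinset hξ Λ
  rw [continuous_iff_continuousAt]
  intro a₀
  set S : ℝ := β / (4 * 1) * (∑ x : Λ, extField J Λ (ξ a₀) x ^ 2 + 1)
  have hS : ∀ᶠ a in nhds a₀, β / (4 * 1) * ∑ x : Λ, extField J Λ (ξ a) x ^ 2 ≤ S := by
    have hcont : Continuous fun a => ∑ x : Λ, extField J Λ (ξ a) x ^ 2 := by fun_prop
    filter_upwards [hcont.continuousAt.eventually_le_const (lt_add_one _)] with a ha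
    exact mul_le_mul_of_nonneg_left ha (by positivity)
  refine tendsto_lintegral_filter_of_dominated_convergence (fun φ => expE S * edist 0 F *
    expE (β * (M / 2 + 1) * ∑ x : Λ, φ x ^ 2)) (.of_forall fun a => ?_)
    (hS.mono fun a ha => .of_forall fun φ => ?_) ?_ (.of_forall fun φ => ?_)
  · exact (measurable_expE_hamil Λ _).mul (F.continuous.comp
      (hmerge.comp (.prodMk_right a))).measurable.coe_nnreal_ennreal
  · have hhamil := (abs_le.1 (hJ.abs_hamil_le hβ one_pos Λ (ξ a) φ)).2
    rw [mul_right_comm, ← expE_add]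
    gcongr
    · linarith
    · exact F.apply_le_edist_zero _
  · rw [lintegral_const_mul' _ _ (ENNReal.mul_ne_top (expE_ne_top _) (edist_ne_top _ _)),
      lintegral_pi_expE_sum_sq]
    exact ENNReal.mul_ne_top (ENNReal.mul_ne_top (expE_ne_top _) (edist_ne_top _ _))
      (ENNReal.pow_ne_top (gaussMoment_ne_top ρ _))
  · have hweight : Continuous fun a => expE (hamil J β Λ (ξ a) φ) := by
      refine continuous_expE.comp ?_
      simp_rw [hamil_eq]
      fun_prop
    refine ENNReal.Tendsto.mul hweight.continuousAt (.inr ENNReal.coe_ne_top)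
      (ENNReal.continuous_coe.comp (F.continuous.comp (hmerge.comp (.prodMk_left φ)))).continuousAt
      (.inr (expE_ne_top _))

lemma IsFerromagnet.continuous_specProb_comp (hJ : IsFerromagnet J M) (hβ : 0 ≤ β)
    (ρ : Measure ℝ) [HasGaussianMoments ρ] (hξ : Continuous ξ)
    (hfield : ∀ x, Continuous fun a => extField J Λ (ξ a) x) :
    Continuous fun a => hJ.specProb hβ ρ Λ (ξ a) := by
  refine continuous_iff_continuousAt.2 fun a₀ =>
    ProbabilityMeasure.tendsto_iff_forall_lintegral_tendsto.2 fun F => ?_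
  have hmeas : Measurable fun φ => (F φ : ℝ≥0∞) := F.continuous.measurable.coe_nnreal_ennreal
  have hpartition : Continuous fun a => partitionFn J β ρ Λ (ξ a) := by
    simpa [partitionFn_eq] using hJ.continuous_lintegral_expE_hamil_mul hβ ρ hξ hfield 1
  simp only [IsFerromagnet.coe_specProb, lintegral_spec Λ _ hmeas, lintegral_gibbs]
  refine ENNReal.Tendsto.mul (hpartition.inv.tendsto a₀) (.inr ?_)
    ((hJ.continuous_lintegral_expE_hamil_mul hβ ρ hξ hfield F).tendsto a₀)
    (.inr (ENNReal.inv_ne_top.2 (hJ.partitionFn_ne_zero hβ ρ Λ _)))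
  refine ne_top_of_le_ne_top (ENNReal.mul_ne_top (hJ.partitionFn_ne_top hβ ρ Λ (ξ a₀))
    (edist_ne_top 0 F)) ?_
  rw [partitionFn_eq, ← lintegral_mul_const' _ _ (edist_ne_top _ _)]
  exact lintegral_mono fun φ => mul_le_mul_right (F.apply_le_edist_zero _) _

end ContinuityInBoundaryCondition

section Clamp

variable {V : Type*} {J g : V → V → ℝ} {β M L t : ℝ} {ζ : V → ℝ}

/-- The configuration truncated to the interval `[-(t * ζ y), t * ζ y]` at each vertex `y`. -/
def clamp (ζ : V → ℝ) (t : ℝ) (η : V → ℝ) : V → ℝ :=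
  fun y => max (-(t * ζ y)) (min (t * ζ y) (η y))

lemma continuous_clamp (ζ : V → ℝ) (t : ℝ) : Continuous (clamp ζ t) := by
  unfold clamp
  fun_prop

lemma abs_clamp_le (h : ∀ y, 0 ≤ t * ζ y) (η : V → ℝ) (y : V) : |clamp ζ t η y| ≤ t * ζ y :=
  abs_le.2 ⟨le_max_left _ _, max_le (neg_le_self (h y)) (min_le_left _ _)⟩

lemma clamp_apply_eq_self {η : V → ℝ} {y : V} (h : |η y| ≤ t * ζ y) : clamp ζ t η y = η y := by
  rw [clamp, min_eq_right (abs_le.1 h).2, max_eq_right (abs_le.1 h).1]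

lemma IsTempered.continuous_extField_clamp (H : IsTempered J g M L ζ) (ht : 0 ≤ t)
    (Λ : Finset V) (x : V) : Continuous fun η => extField J Λ (clamp ζ t η) x := by
  have hζ : ∀ y, 0 ≤ t * ζ y := fun y => _root_.mul_nonneg ht (H.profile_pos y).le
  have hsummable : Summable fun y => J x y * (t * ζ y) :=
    H.fieldSummable (t := t) (fun y => (abs_of_nonneg (hζ y)).le) x
  refine continuous_tsum (fun y => ?_) (hsummable.subtype {y | y ∉ Λ}) fun y η => ?_
  · have := continuous_clamp ζ t
    fun_prop
  · rw [Real.norm_eq_abs, abs_mul, abs_of_nonneg (H.nonneg x y)]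
    exact mul_le_mul_of_nonneg_left (abs_clamp_le hζ η y) (H.nonneg x y)

lemma IsTempered.continuous_integral_spec_clamp [Countable V] (H : IsTempered J g M L ζ)
    (hβ : 0 ≤ β) (ρ : Measure ℝ) [HasGaussianMoments ρ] (ht : 0 ≤ t) (Λ : Finset V)
    (F : (V → ℝ) →ᵇ ℝ) : Continuous fun η => ∫ φ, F φ ∂(spec J β ρ Λ (clamp ζ t η)) :=
  continuous_iff_continuousAt.2 fun _ =>
    ProbabilityMeasure.tendsto_iff_forall_integral_tendsto.1
      ((H.isFerromagnet.continuous_specProb_comp hβ ρ (continuous_clamp ζ t)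
        (H.continuous_extField_clamp ht Λ)).tendsto _) F

end Clamp

section LimitOfDLR

lemma abs_integral_sub_le_of_eqOn {Ω : Type*} [MeasurableSpace Ω] {μ : Measure Ω}
    [IsProbabilityMeasure μ] {h k : Ω → ℝ} (hh : Measurable h) (hk : Measurable k) {C : ℝ}
    (hhC : ∀ ω, |h ω| ≤ C) (hkC : ∀ ω, |k ω| ≤ C) {s : Set Ω} (hs : MeasurableSet s)
    (heq : Set.EqOn h k s) : |∫ ω, h ω ∂μ - ∫ ω, k ω ∂μ| ≤ 2 * C * μ.real sᶜ := by
  have hhint : Integrable h μ := .of_bound hh.aestronglyMeasurable C (.of_forall hhC)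
  have hkint : Integrable k μ := .of_bound hk.aestronglyMeasurable C (.of_forall hkC)
  rw [← integral_sub hhint hkint]
  calc |∫ ω, (h ω - k ω) ∂μ| ≤ ∫ ω, sᶜ.indicator (fun _ => 2 * C) ω ∂μ := by
        rw [← Real.norm_eq_abs]
        refine norm_integral_le_of_norm_le ((integrable_const _).indicator hs.compl)
          (.of_forall fun ω => ?_)
        by_cases hω : ω ∈ s
        · simp [hω, heq hω]
        · rw [Set.indicator_of_mem hω, Real.norm_eq_abs, two_mul]
          exact (abs_sub _ _).trans (add_le_add (hhC ω) (hkC ω))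
    _ = 2 * C * μ.real sᶜ := by
        rw [integral_indicator_const _ hs.compl, smul_eq_mul, mul_comm]

lemma tendsto_integral_of_forall_exists_eqOn {Ω ι : Type*} [MeasurableSpace Ω]
    [TopologicalSpace Ω] [OpensMeasurableSpace Ω] {l : Filter ι} {P : ι → ProbabilityMeasure Ω}
    {ν : ProbabilityMeasure Ω} (hν : Tendsto P l (nhds ν)) {h : Ω → ℝ} (hh : Measurable h) {C : ℝ}
    (hC : ∀ ω, |h ω| ≤ C)
    (happrox : ∀ ε : ℝ, 0 < ε → ∃ (k : Ω → ℝ) (s : Set Ω), Continuous k ∧ (∀ ω, |k ω| ≤ C) ∧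
      MeasurableSet s ∧ Set.EqOn h k s ∧ (∀ i, (P i : Measure Ω).real sᶜ ≤ ε) ∧
      (ν : Measure Ω).real sᶜ ≤ ε) :
    Tendsto (fun i => ∫ ω, h ω ∂(P i : Measure Ω)) l (nhds (∫ ω, h ω ∂(ν : Measure Ω))) := by
  rw [Metric.tendsto_nhds]
  intro δ hδ
  have hC' : 0 < 2 * |C| + 1 := by positivity
  obtain ⟨k, s, hk, hkC, hs, heq, hP, hνs⟩ := happrox (δ / 3 / (2 * |C| + 1)) (by positivity)
  have herr (μ : ProbabilityMeasure Ω) (hμ : (μ : Measure Ω).real sᶜ ≤ δ / 3 / (2 * |C| + 1)) :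
      |∫ ω, h ω ∂(μ : Measure Ω) - ∫ ω, k ω ∂(μ : Measure Ω)| ≤ δ / 3 := by
    calc _ ≤ 2 * C * (μ : Measure Ω).real sᶜ :=
          abs_integral_sub_le_of_eqOn hh hk.measurable hC hkC hs heq
      _ ≤ (2 * |C| + 1) * (δ / 3 / (2 * |C| + 1)) := by
          gcongr
          linarith [le_abs_self C]
      _ = δ / 3 := mul_div_cancel₀ _ hC'.ne'
  have hlim := ProbabilityMeasure.tendsto_iff_forall_integral_tendsto.1 hν
    (.ofNormedAddCommGroup k hk C hkC)
  filter_upwards [Metric.tendsto_nhds.1 hlim (δ / 3) (by positivity)] with i hi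
  have h₁ := abs_le.1 (herr (P i) (hP i))
  have h₂ := abs_le.1 (herr ν hνs)
  have h₃ := abs_lt.1 hi
  rw [Real.dist_eq, abs_lt]
  simp only [BoundedContinuousFunction.coe_ofNormedAddCommGroup] at h₃
  constructor <;> linarith

variable {V : Type*} [Countable V] {J g : V → V → ℝ} {β M L D : ℝ} {ρ : Measure ℝ}
  [HasGaussianMoments ρ] {ζ : V → ℝ}

lemma IsTempered.isDLR_of_tendsto (H : IsTempered J g M L ζ) (hβ : 0 ≤ β) {ι : Type*}
    {l : Filter ι} [NeBot l] {P : ι → ProbabilityMeasure (V → ℝ)}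
    {ν : ProbabilityMeasure (V → ℝ)} (hν : Tendsto P l (nhds ν))
    (htail : ∀ i, HasGaussianTail ζ D (P i : Measure (V → ℝ))) {Δ : Finset V}
    (hdlr : ∀ᶠ i in l, IsDLR J β ρ Δ (P i : Measure (V → ℝ))) :
    IsDLR J β ρ Δ (ν : Measure (V → ℝ)) := by
  have hspec := measurable_spec J β ρ Δ
  have := H.isFerromagnet.isProbabilityMeasure_spec hβ ρ Δ
  have (μ : ProbabilityMeasure (V → ℝ)) :
      IsProbabilityMeasure ((μ : Measure (V → ℝ)).bind (spec J β ρ Δ)) :=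
    isProbabilityMeasure_bind hspec.aemeasurable (.of_forall this)
  rw [isDLR_iff_bind_eq]
  refine ext_of_forall_integral_eq_of_IsFiniteMeasure fun F => ?_
  rw [integral_bind hspec (F.integrable _)]
  set h : (V → ℝ) → ℝ := fun η => ∫ φ, F φ ∂(spec J β ρ Δ η)
  have hmeas : Measurable h :=
    (F.continuous.stronglyMeasurable.integral_kernel (κ := ⟨spec J β ρ Δ, hspec⟩)).measurable
  have hbound : ∀ η, |h η| ≤ ‖F‖ := fun η => F.norm_integral_le_norm _
  have hlim : Tendsto (fun i => ∫ η, h η ∂(P i : Measure (V → ℝ))) l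
      (nhds (∫ η, h η ∂(ν : Measure (V → ℝ)))) := by
    refine tendsto_integral_of_forall_exists_eqOn hν hmeas hbound fun ε hε => ?_
    obtain ⟨t, hτ, ht⟩ := (((tendsto_boxTail H.profile_pos H.summable_exp D).eventually_le_const
      (ENNReal.ofReal_pos.2 hε)).and (eventually_ge_atTop 1)).exists
    exact ⟨fun η => h (clamp ζ t η), box ζ t,
      H.continuous_integral_spec_clamp hβ ρ (zero_le_one.trans ht) Δ F, fun η => hbound _,
      (isCompact_box ζ t).isClosed.measurableSet,
      fun η hη => congrArg h (funext fun y => clamp_apply_eq_self (hη y)).symm,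
      fun i => ENNReal.toReal_le_of_le_ofReal hε.le
        (((htail i).measure_compl_box_le ht).trans hτ),
      ENNReal.toReal_le_of_le_ofReal hε.le
        (((HasGaussianTail.of_tendsto hν htail).measure_compl_box_le ht).trans hτ)⟩
  refine tendsto_nhds_unique hlim (Tendsto.congr' ?_
    (ProbabilityMeasure.tendsto_iff_forall_integral_tendsto.1 hν F))
  filter_upwards [hdlr] with i hi
  conv_lhs => rw [← isDLR_iff_bind_eq.1 hi]
  exact integral_bind hspec (F.integrable _)

end LimitOfDLR

section StochasticDomination

lemma continuous_restrictTo {V : Type*} (Λ : Finset V) :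
    Continuous (restrictTo Λ : (V → ℝ) → Λ → ℝ) := by
  unfold restrictTo
  fun_prop

lemma isClosed_upperClosure_restrictTo_image {V : Type*} {K : Set (V → ℝ)} (hK : IsCompact K)
    (Δ : Finset V) : IsClosed (upperClosure (restrictTo Δ '' K) : Set (Δ → ℝ)) :=
  have hΔ := hK.image (continuous_restrictTo Δ)
  hΔ.isClosed.upperClosure_pi
    (bddBelow_pi.2 fun x => (hΔ.image (continuous_apply x)).bddBelow)

lemma mem_upperClosure_of_forall_restrictTo {V : Type*} {K : Set (V → ℝ)} (hK : IsCompact K)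
    {φ : V → ℝ} (h : ∀ Δ : Finset V, restrictTo Δ φ ∈ upperClosure (restrictTo Δ '' K)) :
    φ ∈ upperClosure K := by
  let below : Finset V → Set (V → ℝ) := fun Δ => K ∩ {ψ | ∀ x ∈ Δ, ψ x ≤ φ x}
  have hclosed : ∀ Δ : Finset V, IsClosed {ψ : V → ℝ | ∀ x ∈ Δ, ψ x ≤ φ x} := fun Δ => by
    simp only [Set.ofPred_forall]
    exact isClosed_biInter fun x _ => isClosed_le (continuous_apply x) continuous_const
  have hanti : Antitone below := fun A B hAB ψ hψ => ⟨hψ.1, fun x hx => hψ.2 x (hAB hx)⟩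
  obtain ⟨ψ, hψ⟩ := IsCompact.nonempty_iInter_of_directed_nonempty_isCompact_isClosed below
    (directed_of_isDirected_le hanti)
    (fun Δ => by
      obtain ⟨_, ⟨ψ, hψ, rfl⟩, hle⟩ := mem_upperClosure.1 (h Δ)
      exact ⟨ψ, hψ, fun x hx => hle ⟨x, hx⟩⟩)
    (fun Δ => hK.inter_right (hclosed Δ)) fun Δ => hK.isClosed.inter (hclosed Δ)
  rw [Set.mem_iInter] at hψ
  exact mem_upperClosure.2
    ⟨ψ, (hψ ∅).1, fun x => (hψ {x}).2 x (Finset.mem_singleton_self x)⟩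

lemma stochDom_of_map_neg {ι : Type*} {μ ν : Measure (ι → ℝ)}
    (h : StochDom (ν.map Neg.neg) (μ.map Neg.neg)) : StochDom μ ν := by
  rintro F hF hmono ⟨K, hK⟩
  have hneg : Measurable fun φ => -F (-φ) := by fun_prop
  have hle := h (fun φ => -F (-φ)) hneg (fun φ ψ hφψ => neg_le_neg (hmono (neg_le_neg hφψ)))
    ⟨K, fun φ => by rw [abs_neg]; exact hK _⟩
  rw [integral_map measurable_neg.aemeasurable hneg.aestronglyMeasurable,
    integral_map measurable_neg.aemeasurable hneg.aestronglyMeasurable] at hle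
  simpa only [neg_neg, integral_neg, neg_le_neg_iff] using hle

variable {ι : Type*} {μ ν : Measure (ι → ℝ)} [IsProbabilityMeasure μ] [IsProbabilityMeasure ν]

lemma measure_le_of_forall_isClosed_isUpperSet [Countable ι]
    (h : ∀ (Δ : Finset ι) (S : Set (Δ → ℝ)), IsClosed S → IsUpperSet S →
      μ (restrictTo Δ ⁻¹' S) ≤ ν (restrictTo Δ ⁻¹' S))
    {U : Set (ι → ℝ)} (hU : IsUpperSet U) (hUm : MeasurableSet U) : μ U ≤ ν U := by
  rw [hUm.measure_eq_iSup_isCompact μ]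
  refine iSup₂_le fun K hKU => iSup_le fun hK => ?_
  let S : Finset ι → Set (ι → ℝ) := fun Δ => restrictTo Δ ⁻¹' upperClosure (restrictTo Δ '' K)
  have hKS : ∀ Δ, K ⊆ S Δ := fun Δ φ hφ => subset_upperClosure (Set.mem_image_of_mem _ hφ)
  have hSanti : Antitone S := by
    rintro A B hAB φ hφ
    obtain ⟨_, ⟨ψ, hψ, rfl⟩, hle⟩ := mem_upperClosure.1 hφ
    exact mem_upperClosure.2 ⟨_, Set.mem_image_of_mem _ hψ, fun x => hle ⟨x, hAB x.2⟩⟩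
  have hSU : ⋂ Δ, S Δ ⊆ U := fun φ hφ => upperClosure_min hKU hU
    (mem_upperClosure_of_forall_restrictTo hK (Set.mem_iInter.1 hφ))
  have hSm : ∀ Δ, NullMeasurableSet (S Δ) ν := fun Δ =>
    ((isClosed_upperClosure_restrictTo_image hK Δ).measurableSet.preimage
      (measurable_restrictTo Δ)).nullMeasurableSet
  calc μ K ≤ ⨅ Δ, ν (S Δ) := le_iInf fun Δ => (measure_mono (hKS Δ)).trans
        (h Δ _ (isClosed_upperClosure_restrictTo_image hK Δ) (upperClosure _).upper)
    _ = ν (⋂ Δ, S Δ) := (Directed.measure_iInter hSm (directed_of_isDirected_le hSanti)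
        ⟨∅, measure_ne_top _ _⟩).symm
    _ ≤ ν U := measure_mono hSU

lemma stochDom_of_forall_isUpperSet
    (h : ∀ U : Set (ι → ℝ), IsUpperSet U → MeasurableSet U → μ U ≤ ν U) : StochDom μ ν := by
  rintro F hF hmono ⟨K, hK⟩
  have hnonneg : ∀ φ, 0 ≤ F φ + K := fun φ => by linarith [(abs_le.1 (hK φ)).1]
  have hFint (κ : Measure (ι → ℝ)) [IsProbabilityMeasure κ] : Integrable F κ :=
    .of_bound hF.aestronglyMeasurable K (.of_forall hK)
  have hshift (κ : Measure (ι → ℝ)) [IsProbabilityMeasure κ] :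
      ∫ φ, F φ + K ∂κ = ∫ φ, F φ ∂κ + K := by
    rw [integral_add (hFint κ) (integrable_const _), integral_const, probReal_univ, one_smul]
  have hlayer (κ : Measure (ι → ℝ)) [IsProbabilityMeasure κ] :
      ENNReal.ofReal (∫ φ, F φ + K ∂κ) = ∫⁻ t in Set.Ioi (0 : ℝ), κ {φ | t ≤ F φ + K} := by
    have hint : Integrable (fun φ => F φ + K) κ := (hFint κ).add (integrable_const _)
    rw [ofReal_integral_eq_lintegral_ofReal hint (.of_forall hnonneg),
      lintegral_eq_lintegral_meas_le _ (.of_forall hnonneg) (by fun_prop)]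
  have hle : ENNReal.ofReal (∫ φ, F φ + K ∂μ) ≤ ENNReal.ofReal (∫ φ, F φ + K ∂ν) := by
    rw [hlayer μ, hlayer ν]
    exact lintegral_mono fun t => h _
      (fun _ _ hφψ hφ => hφ.trans (add_le_add_left (hmono hφψ) K))
      (measurableSet_le measurable_const (by fun_prop))
  rw [ENNReal.ofReal_le_ofReal_iff (integral_nonneg hnonneg), hshift μ, hshift ν] at hle
  linarith

lemma measure_le_of_stochDom (h : StochDom μ ν) {U : Set (ι → ℝ)} (hU : IsUpperSet U)
    (hUm : MeasurableSet U) : μ U ≤ ν U := by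
  have hmono : Monotone (U.indicator (1 : (ι → ℝ) → ℝ)) := fun φ ψ hφψ => by
    by_cases hφ : φ ∈ U
    · simp [hφ, hU hφψ hφ]
    · rw [Set.indicator_of_notMem hφ]
      exact Set.indicator_nonneg (fun _ _ => zero_le_one) ψ
  have hle := h _ (measurable_one.indicator hUm) hmono
    ⟨1, fun φ => by by_cases hφ : φ ∈ U <;> simp [hφ]⟩
  rw [integral_indicator_one hUm, integral_indicator_one hUm] at hle
  exact (ENNReal.toReal_le_toReal (measure_ne_top _ _) (measure_ne_top _ _)).1 hle

lemma generateFrom_isUpperSet :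
    MeasurableSpace.generateFrom {U : Set (ι → ℝ) | IsUpperSet U ∧ MeasurableSet U} =
      MeasurableSpace.pi := by
  refine le_antisymm (MeasurableSpace.generateFrom_le fun U hU => hU.2) (iSup_le fun x => ?_)
  refine Measurable.comap_le (measurable_of_Ici fun a => ?_)
  exact MeasurableSpace.measurableSet_generateFrom ⟨(isUpperSet_Ici a).preimage
    (Function.monotone_eval x), measurableSet_Ici.preimage (measurable_pi_apply x)⟩

lemma stochDom_antisymm (h : StochDom μ ν) (h' : StochDom ν μ) : μ = ν := by
  refine ext_of_generate_finite _ generateFrom_isUpperSet.symm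
    (fun U hU W hW _ => ⟨hU.1.inter hW.1, hU.2.inter hW.2⟩)
    (fun U hU => (measure_le_of_stochDom h hU.1 hU.2).antisymm
      (measure_le_of_stochDom h' hU.1 hU.2)) ?_
  rw [measure_univ, measure_univ]

lemma stochDom_of_forall_isClosed_isUpperSet [Countable ι]
    (h : ∀ (Δ : Finset ι) (S : Set (Δ → ℝ)), IsClosed S → IsUpperSet S →
      μ (restrictTo Δ ⁻¹' S) ≤ ν (restrictTo Δ ⁻¹' S)) : StochDom μ ν :=
  stochDom_of_forall_isUpperSet fun _ => measure_le_of_forall_isClosed_isUpperSet h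

lemma stochDom_of_forall_isClosed_isLowerSet [Countable ι]
    (h : ∀ (Δ : Finset ι) (S : Set (Δ → ℝ)), IsClosed S → IsLowerSet S →
      ν (restrictTo Δ ⁻¹' S) ≤ μ (restrictTo Δ ⁻¹' S)) : StochDom μ ν := by
  have := Measure.isProbabilityMeasure_map (μ := μ) (measurable_neg (G := ι → ℝ)).aemeasurable
  have := Measure.isProbabilityMeasure_map (μ := ν) (measurable_neg (G := ι → ℝ)).aemeasurable
  refine stochDom_of_map_neg (stochDom_of_forall_isClosed_isUpperSet fun Δ S hS hU => ?_)
  have hSm := hS.measurableSet.preimage (measurable_restrictTo Δ)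
  rw [Measure.map_apply measurable_neg hSm, Measure.map_apply measurable_neg hSm]
  exact h Δ (Neg.neg ⁻¹' S) (hS.preimage continuous_neg) fun _ _ hst => hU (neg_le_neg hst)

end StochasticDomination

section Extremality

variable {V : Type*} [Countable V] {J g : V → V → ℝ} {β M L : ℝ} {ρ : Measure ℝ}
  [HasGaussianMoments ρ] {ζ : V → ℝ} {ν : Measure (V → ℝ)} [IsProbabilityMeasure ν]

lemma IsTempered.measure_restrictTo_le_add_tsum (H : IsTempered J g M L ζ) (hβ : 0 ≤ β)
    {Δ Λ : Finset V} (h : ν.map (restrictTo Λ) = ν.bind (gibbs J β ρ Λ)) (hΔ : Δ ⊆ Λ)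
    {S : Set (Δ → ℝ)} (hS : MeasurableSet S) {b : ℝ≥0∞}
    (hb : ∀ η : V → ℝ, (∀ x, |η x| ≤ ζ x) → spec J β ρ Λ η (restrictTo Δ ⁻¹' S) ≤ b) :
    ν (restrictTo Δ ⁻¹' S) ≤ b + ∑' y : {y // y ∉ Λ}, ν {φ | ζ y < |φ y|} := by
  have := H.isFerromagnet.isProbabilityMeasure_spec hβ ρ Λ
  set E : Set (V → ℝ) := ⋃ y : {y // y ∉ Λ}, {φ | ζ y < |φ y|}
  have hE : MeasurableSet E :=
    .iUnion fun y => measurableSet_lt measurable_const (by fun_prop)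
  let T : Set (Λ → ℝ) := {ψ | (fun x : Δ => ψ ⟨x, hΔ x.2⟩) ∈ S}
  have hT : MeasurableSet T := hS.preimage (by fun_prop)
  calc ν (restrictTo Δ ⁻¹' S) = (ν.map (restrictTo Λ)) T :=
        (Measure.map_apply (measurable_restrictTo Λ) hT).symm
    _ = ∫⁻ η, spec J β ρ Λ η (restrictTo Δ ⁻¹' S) ∂ν := by
        rw [h, Measure.bind_apply hT (measurable_gibbs J β ρ Λ).aemeasurable, gibbs_eq_map_spec]
        exact lintegral_congr fun η => Measure.map_apply (measurable_restrictTo Λ) hT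
    _ ≤ ∫⁻ η, b + E.indicator 1 η ∂ν := by
        refine lintegral_mono fun η => ?_
        by_cases hη : η ∈ E
        · simpa [hη] using prob_le_one.trans le_add_self
        · have hle : ∀ y ∉ Λ, |η y| ≤ 1 * ζ y := by simpa [E] using hη
          rw [Set.indicator_of_notMem hη, add_zero,
            spec_congr fun y hy => (clamp_apply_eq_self (hle y hy)).symm]
          exact hb _ fun x => by
            simpa using abs_clamp_le (t := 1) (fun y => by simpa using (H.profile_pos y).le) η x
    _ = b + ν E := by
        rw [lintegral_add_left measurable_const, lintegral_const, measure_univ, mul_one,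
          lintegral_indicator_one hE]
    _ ≤ _ := by
        gcongr
        exact measure_iUnion_le _

lemma le_of_limsup_le_of_eventually_le_add {ι : Type*} (U : Ultrafilter ι) {u e : ι → ℝ≥0∞}
    {a b : ℝ≥0∞} (hu : limsup u U ≤ b) (he : Tendsto e U (nhds 0))
    (h : ∀ᶠ i in (U : Filter ι), a ≤ u i + e i) : a ≤ b := by
  obtain ⟨l, -, hl⟩ := isCompact_univ.ultrafilter_le_nhds (U.map u) (by simp)
  have hl : Tendsto u U (nhds l) := hl
  have hadd := hl.add he
  rw [add_zero] at hadd
  exact (ge_of_tendsto hadd h).trans (hl.limsup_eq ▸ hu)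

lemma IsTempered.measure_restrictTo_le_of_tendsto (H : IsTempered J g M L ζ) (hβ : 0 ≤ β)
    (hν : IsGibbsMeasure J β ρ ν) (hsum : ∑' x, ν {φ | ζ x < |φ x|} ≠ ⊤)
    {U : Ultrafilter (Finset V)} (hU : (U : Filter (Finset V)) ≤ atTop)
    {ξ : V → ℝ} {μ : ProbabilityMeasure (V → ℝ)}
    (hμ : Tendsto (fun Λ => H.isFerromagnet.specProb hβ ρ Λ ξ) U (nhds μ)) {Δ : Finset V}
    {S : Set (Δ → ℝ)} (hS : IsClosed S)
    (hmax : ∀ Λ (η : V → ℝ), (∀ x, |η x| ≤ ζ x) →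
      spec J β ρ Λ η (restrictTo Δ ⁻¹' S) ≤ spec J β ρ Λ ξ (restrictTo Δ ⁻¹' S)) :
    ν (restrictTo Δ ⁻¹' S) ≤ (μ : Measure (V → ℝ)) (restrictTo Δ ⁻¹' S) :=
  le_of_limsup_le_of_eventually_le_add U
    (ProbabilityMeasure.limsup_measure_closed_le_of_tendsto hμ
      (hS.preimage (continuous_restrictTo Δ)))
    ((ENNReal.tendsto_tsum_compl_atTop_zero hsum).mono_left hU)
    (hU ((eventually_ge_atTop Δ).mono fun Λ hΛ =>
      H.measure_restrictTo_le_add_tsum hβ ((H.isFerromagnet.isGibbsMeasure_iff hβ).1 hν Λ) hΛ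
        hS.measurableSet (hmax Λ)))

lemma IsTempered.stochDom_of_tendsto (H : IsTempered J g M L ζ) (hβ : 0 ≤ β)
    (hν : IsGibbsMeasure J β ρ ν) (hsum : ∑' x, ν {φ | ζ x < |φ x|} ≠ ⊤)
    {U : Ultrafilter (Finset V)} (hU : (U : Filter (Finset V)) ≤ atTop)
    {μ : ProbabilityMeasure (V → ℝ)}
    (hμ : Tendsto (fun Λ => H.isFerromagnet.specProb hβ ρ Λ ζ) U (nhds μ)) :
    StochDom ν (μ : Measure (V → ℝ)) := by
  refine stochDom_of_forall_isClosed_isUpperSet fun Δ S hS hup =>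
    H.measure_restrictTo_le_of_tendsto hβ hν hsum hU hμ hS fun Λ η hη => ?_
  exact H.isFerromagnet.spec_mono hβ (H.fieldSummable (t := 1) (by simpa using hη))
    (H.fieldSummable (t := 1) fun x => by simp [abs_of_pos (H.profile_pos x)])
    (fun y _ => (abs_le.1 (hη y)).2) (fun φ ψ hφψ hφ => hup (fun x => hφψ x) hφ)
    (hS.measurableSet.preimage (measurable_restrictTo Δ))

lemma IsTempered.stochDom_of_tendsto_neg (H : IsTempered J g M L ζ) (hβ : 0 ≤ β)
    (hν : IsGibbsMeasure J β ρ ν) (hsum : ∑' x, ν {φ | ζ x < |φ x|} ≠ ⊤)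
    {U : Ultrafilter (Finset V)} (hU : (U : Filter (Finset V)) ≤ atTop)
    {μ : ProbabilityMeasure (V → ℝ)}
    (hμ : Tendsto (fun Λ => H.isFerromagnet.specProb hβ ρ Λ (-ζ)) U (nhds μ)) :
    StochDom (μ : Measure (V → ℝ)) ν := by
  refine stochDom_of_forall_isClosed_isLowerSet fun Δ S hS hlow =>
    H.measure_restrictTo_le_of_tendsto hβ hν hsum hU hμ hS fun Λ η hη => ?_
  have hSm : MeasurableSet (restrictTo Δ ⁻¹' S) :=
    hS.measurableSet.preimage (measurable_restrictTo Δ)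
  have hcompl := H.isFerromagnet.spec_mono (ρ := ρ) hβ (Λ := Λ) (η := -ζ) (ξ := η)
    (H.fieldSummable (t := 1) fun x => by simp [abs_of_pos (H.profile_pos x)])
    (H.fieldSummable (t := 1) (by simpa using hη)) (fun y _ => (abs_le.1 (hη y)).1)
    (U := (restrictTo Δ ⁻¹' S)ᶜ)
    (fun φ ψ hφψ hφ hψ => hφ (hlow (fun x => hφψ x) hψ)) hSm.compl
  have := H.isFerromagnet.isProbabilityMeasure_spec hβ ρ Λ
  rw [prob_compl_eq_one_sub hSm, prob_compl_eq_one_sub hSm] at hcompl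
  exact (ENNReal.sub_le_sub_iff_left prob_le_one ENNReal.one_ne_top).1 hcompl

end Extremality

section Limits

lemma exists_tendsto_of_forall_ultrafilter {ι X : Type*} [TopologicalSpace X] {l : Filter ι}
    [NeBot l] {P : ι → X} {Q : X → Prop}
    (hexists : ∀ U : Ultrafilter ι, (U : Filter ι) ≤ l → ∃ ν, Tendsto P U (nhds ν) ∧ Q ν)
    (hunique : ∀ U W : Ultrafilter ι, (U : Filter ι) ≤ l → (W : Filter ι) ≤ l → ∀ ν ω,
      Tendsto P U (nhds ν) → Tendsto P W (nhds ω) → Q ν → Q ω → ν = ω) :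
    ∃ ν, Tendsto P l (nhds ν) ∧ Q ν := by
  have hof := Ultrafilter.of_le l
  obtain ⟨ν, hν, hQν⟩ := hexists _ hof
  refine ⟨ν, (tendsto_iff_ultrafilter _ _ _).2 fun U hU => ?_, hQν⟩
  obtain ⟨ω, hω, hQω⟩ := hexists U hU
  exact hunique _ _ hof hU ν ω hν hω hQν hQω ▸ hω

variable {V : Type*} {J g : V → V → ℝ} {β M L : ℝ} {ρ : Measure ℝ} {ζ ξ : V → ℝ}

lemma sqMoment_le_of_tendsto {ι : Type*} [Countable V] {l : Filter ι} [NeBot l]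
    {P : ι → ProbabilityMeasure (V → ℝ)} {ν : ProbabilityMeasure (V → ℝ)}
    (hν : Tendsto P l (nhds ν)) {A : ℝ} {y : V} {B : ℝ≥0∞}
    (h : ∀ᶠ i in l, sqMoment (P i : Measure (V → ℝ)) A y ≤ B) :
    sqMoment (ν : Measure (V → ℝ)) A y ≤ B :=
  lintegral_le_of_tendsto hν (f := fun φ : V → ℝ => (Real.exp (A * φ y ^ 2)).toNNReal)
    (by fun_prop) h

lemma sqMoment_le_of_isRegularWRT {a B : ℝ} {μ : Measure (V → ℝ)} [HasGaussianMoments ρ]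
    (hB : ∀ Λ : Finset V,
      μ.map (restrictTo Λ) ≤ ENNReal.ofReal (Real.exp (B * Λ.card)) • prodN (rhoMod ρ a) Λ)
    (A : ℝ) (y : V) :
    sqMoment μ A y ≤ expE B * ((gaussMoment ρ a)⁻¹ * gaussMoment ρ (A + a)) := by
  have hsum : ∀ ψ : ({y} : Finset V) → ℝ, ∑ x, ψ x ^ 2 = ψ ⟨y, Finset.mem_singleton_self y⟩ ^ 2 :=
    fun ψ => Fintype.sum_unique _
  calc sqMoment μ A y = ∫⁻ ψ, expE (A * ∑ x, ψ x ^ 2) ∂(μ.map (restrictTo {y})) := by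
        rw [lintegral_map (by fun_prop) (measurable_restrictTo {y})]
        simp only [hsum, restrictTo, sqMoment]
    _ ≤ _ := lintegral_mono' (hB {y}) le_rfl
    _ = _ := by
        rw [lintegral_smul_measure, lintegral_prodN_expE_sum_sq, Finset.card_singleton, pow_one,
          Nat.cast_one, mul_one, smul_eq_mul, expE]

variable [HasGaussianMoments ρ]

lemma IsTempered.tsum_measure_ne_top_of_isRegularWRT (H : IsTempered J g M L ζ) {a : ℝ}
    {μ : Measure (V → ℝ)} (h : IsRegularWRT (rhoMod ρ a) μ) :
    ∑' x, μ {φ | ζ x < |φ x|} ≠ ⊤ := by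
  obtain ⟨B, -, hB⟩ := h
  have hfinite : expE B * ((gaussMoment ρ a)⁻¹ * gaussMoment ρ (3 + a)) ≠ ⊤ :=
    ENNReal.mul_ne_top (expE_ne_top _) (ENNReal.mul_ne_top
      (ENNReal.inv_ne_top.2 (gaussMoment_ne_zero ρ a)) (gaussMoment_ne_top ρ _))
  obtain ⟨D, -, hD⟩ := exists_le_expE hfinite
  exact (HasGaussianTail.of_sqMoment_le (fun y => (H.profile_pos y).le) le_rfl fun y =>
    (sqMoment_le_of_isRegularWRT hB 3 y).trans hD).tsum_measure_ne_top H.summable_exp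

variable [Countable V]

lemma IsTempered.exists_tendsto_specProb (H : IsTempered J g M L ζ) (hβ : 0 ≤ β) {a : ℝ}
    (ha : 3 * (β * M) / 2 ≤ a) (hξ : ∀ x, |ξ x| ≤ ζ x) {U : Ultrafilter (Finset V)}
    (hU : (U : Filter (Finset V)) ≤ atTop) :
    ∃ ν : ProbabilityMeasure (V → ℝ),
      Tendsto (fun Λ => H.isFerromagnet.specProb hβ ρ Λ ξ) U (nhds ν) ∧
      IsGibbsMeasure J β ρ (ν : Measure (V → ℝ)) ∧
      IsRegularWRT (rhoMod ρ a) (ν : Measure (V → ℝ)) ∧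
      ∑' x, (ν : Measure (V → ℝ)) {φ | ζ x < |φ x|} ≠ ⊤ := by
  have hβM : 0 ≤ β * M := _root_.mul_nonneg hβ H.bound_pos.le
  set A := β * M / 2 + 3 with hA
  have hA3 : 3 ≤ A := by linarith
  obtain ⟨D, hD, hspec⟩ := H.exists_sqMoment_spec_le hβ ρ (A := A) (by linarith)
  obtain ⟨D', hD', hgibbs⟩ := H.exists_sqMoment_le hβ ρ (A := A) (by linarith)
  have htail : ∀ Λ, HasGaussianTail ζ D (H.isFerromagnet.specProb hβ ρ Λ ξ : Measure (V → ℝ)) :=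
    fun Λ => hasGaussianTail_spec hξ hA3 (hspec Λ ξ hξ)
  obtain ⟨ν, hν⟩ := exists_tendsto_of_hasGaussianTail H.profile_pos H.summable_exp htail U
  have hdlr (Δ : Finset V) : IsDLR J β ρ Δ (ν : Measure (V → ℝ)) :=
    H.isDLR_of_tendsto hβ hν htail
      (hU ((eventually_ge_atTop Δ).mono fun Λ hΛ => H.isDLR_spec hβ hΛ hξ))
  have hmoment (y : V) : sqMoment (ν : Measure (V → ℝ)) A y ≤ expE (D + ζ y ^ 2) :=
    sqMoment_le_of_tendsto hν (hU ((eventually_ge_atTop {y}).mono fun Λ hΛ =>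
      hspec Λ ξ hξ y (hΛ (Finset.mem_singleton_self y))))
  exact ⟨ν, hν, (H.isFerromagnet.isGibbsMeasure_iff hβ).2 fun Λ => (hdlr Λ).map_restrictTo,
    H.isRegularWRT hβ hdlr (W := A) (by linarith) (by linarith) hD'
      (hgibbs ν inferInstance (fun x => hdlr {x}) D hD hmoment) ha,
    (HasGaussianTail.of_tendsto hν htail).tsum_measure_ne_top H.summable_exp⟩

lemma IsTempered.exists_maximal (H : IsTempered J g M L ζ) (hβ : 0 ≤ β) (ρ : Measure ℝ)
    [HasGaussianMoments ρ] {a : ℝ} (ha : 3 * (β * M) / 2 ≤ a) :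
    ∃ ν : ProbabilityMeasure (V → ℝ),
      Tendsto (fun Λ => H.isFerromagnet.specProb hβ ρ Λ ζ) atTop (nhds ν) ∧
      IsGibbsMeasure J β ρ (ν : Measure (V → ℝ)) ∧
      IsRegularWRT (rhoMod ρ a) (ν : Measure (V → ℝ)) ∧
      ∀ μ : Measure (V → ℝ), IsProbabilityMeasure μ → IsGibbsMeasure J β ρ μ →
        ∑' x, μ {φ | ζ x < |φ x|} ≠ ⊤ → StochDom μ ν := by
  have hζ (x : V) : |ζ x| ≤ ζ x := (abs_of_pos (H.profile_pos x)).le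
  obtain ⟨ν, hν, hgibbs, hreg, -⟩ := exists_tendsto_of_forall_ultrafilter
    (fun U hU => H.exists_tendsto_specProb (ρ := ρ) hβ ha hζ hU)
    fun U W hU hW ν ω hν hω hQν hQω => ProbabilityMeasure.toMeasure_injective <| stochDom_antisymm
      (H.stochDom_of_tendsto hβ hQν.1 hQν.2.2 hW hω) (H.stochDom_of_tendsto hβ hQω.1 hQω.2.2 hU hν)
  exact ⟨ν, hν, hgibbs, hreg, fun μ _ hμ hsum =>
    H.stochDom_of_tendsto hβ hμ hsum (Ultrafilter.of_le _) (hν.mono_left (Ultrafilter.of_le _))⟩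

lemma IsTempered.exists_minimal (H : IsTempered J g M L ζ) (hβ : 0 ≤ β) (ρ : Measure ℝ)
    [HasGaussianMoments ρ] {a : ℝ} (ha : 3 * (β * M) / 2 ≤ a) :
    ∃ ν : ProbabilityMeasure (V → ℝ),
      Tendsto (fun Λ => H.isFerromagnet.specProb hβ ρ Λ (-ζ)) atTop (nhds ν) ∧
      IsGibbsMeasure J β ρ (ν : Measure (V → ℝ)) ∧
      IsRegularWRT (rhoMod ρ a) (ν : Measure (V → ℝ)) ∧
      ∀ μ : Measure (V → ℝ), IsProbabilityMeasure μ → IsGibbsMeasure J β ρ μ →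
        ∑' x, μ {φ | ζ x < |φ x|} ≠ ⊤ → StochDom ν μ := by
  have hζ (x : V) : |(-ζ) x| ≤ ζ x := by simp [abs_of_pos (H.profile_pos x)]
  obtain ⟨ν, hν, hgibbs, hreg, -⟩ := exists_tendsto_of_forall_ultrafilter
    (fun U hU => H.exists_tendsto_specProb (ρ := ρ) hβ ha hζ hU)
    fun U W hU hW ν ω hν hω hQν hQω => ProbabilityMeasure.toMeasure_injective <| stochDom_antisymm
      (H.stochDom_of_tendsto_neg hβ hQω.1 hQω.2.2 hU hν)
      (H.stochDom_of_tendsto_neg hβ hQν.1 hQν.2.2 hW hω)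
  exact ⟨ν, hν, hgibbs, hreg, fun μ _ hμ hsum =>
    H.stochDom_of_tendsto_neg hβ hμ hsum (Ultrafilter.of_le _)
      (hν.mono_left (Ultrafilter.of_le _))⟩

lemma IsFerromagnet.convergesTo_of_tendsto (hJ : IsFerromagnet J M) (hβ : 0 ≤ β)
    {ν : ProbabilityMeasure (V → ℝ)}
    (hν : Tendsto (fun Λ => hJ.specProb hβ ρ Λ ξ) atTop (nhds ν)) {η : V → ℝ} {s : Finset V}
    (h : ∀ x ∉ s, ξ x = η x) : ConvergesTo J β ρ η (ν : Measure (V → ℝ)) := by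
  rintro Λseq hmono hexhaust Δ F hF ⟨K, hK⟩
  have hΛ : Tendsto Λseq atTop atTop := tendsto_atTop_finset_of_monotone hmono hexhaust
  have hlim := ProbabilityMeasure.tendsto_iff_forall_integral_tendsto.1 (hν.comp hΛ)
    (.ofNormedAddCommGroup (fun φ => F (restrictTo Δ φ))
      (hF.comp (continuous_restrictTo Δ)) K fun φ => hK _)
  refine hlim.congr' ?_
  filter_upwards [hΛ.eventually_ge_atTop Δ, hΛ.eventually_ge_atTop s] with i hΔ hs
  have hsub : Measurable fun (φ : Λseq i → ℝ) (x : Δ) => φ ⟨x, hΔ x.2⟩ := by fun_prop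
  have hFm : Measurable fun φ : Λseq i → ℝ => F fun x => φ ⟨x, hΔ x.2⟩ := hF.measurable.comp hsub
  rw [dif_pos hΔ, marg, integral_map hsub.aemeasurable hF.aestronglyMeasurable,
    ← gibbs_congr fun y hy => h y fun hys => hy (hs hys), ← map_restrictTo_spec,
    integral_map (measurable_restrictTo _).aemeasurable hFm.aestronglyMeasurable]
  rfl

end Limits

section Growth

variable {V : Type*}

/-- The cardinality `|B_n(o)|` of the ball of radius `n` around `o`. -/
noncomputable def ballCard (G : SimpleGraph V) (o : V) (n : ℕ) : ℕ :=
  {y : V | G.dist o y ≤ n}.ncard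

/-- The boundary profile `√(log |B_{d(o,x)}(o)|)`, except that at `o` the radius is `1` instead of
`0`, which makes it positive everywhere. -/
noncomputable def growthProfile (G : SimpleGraph V) (o x : V) : ℝ :=
  √(Real.log (ballCard G o (max (G.dist o x) 1)))

variable {G : SimpleGraph V}

lemma growthProfile_of_ne (hconn : G.Connected) {o x : V} (h : x ≠ o) :
    growthProfile G o x = √(Real.log ({y : V | G.dist o y ≤ G.dist o x}.ncard)) := by
  rw [growthProfile, max_eq_left (hconn.pos_dist_of_ne h.symm), ballCard]

variable [∀ x : V, Finite (G.neighborSet x)]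

lemma finite_setOf_dist_le (hconn : G.Connected) (o : V) (n : ℕ) :
    {y : V | G.dist o y ≤ n}.Finite := by
  induction n with
  | zero =>
    exact (Set.finite_singleton o).subset fun y hy =>
      (hconn.dist_eq_zero_iff.1 (Nat.le_zero.1 hy)).symm
  | succ n ih =>
    refine (ih.union (ih.biUnion fun x _ => (G.neighborSet x).toFinite)).subset fun y hy => ?_
    rcases Nat.lt_or_ge n (G.dist o y) with hfar | hnear
    · obtain ⟨p, hp⟩ := hconn.exists_walk_length_eq_dist o y
      have hp0 : ¬p.Nil := fun h => by
        have := SimpleGraph.Walk.length_eq_zero_iff.2 h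
        omega
      have hpenultimate : G.dist o p.penultimate ≤ n := by
        have hdrop := SimpleGraph.dist_le p.dropLast
        have hlength := p.length_dropLast_add_one hp0
        have hy : G.dist o y ≤ n + 1 := hy
        omega
      exact .inr (Set.mem_biUnion hpenultimate (p.adj_penultimate hp0))
    · exact .inl hnear

lemma monotone_ballCard (hconn : G.Connected) (o : V) : Monotone (ballCard G o) :=
  fun _ n h => Set.ncard_le_ncard (fun _ hy => le_trans hy h) (finite_setOf_dist_le hconn o n)

lemma card_le_ballCard (hconn : G.Connected) {o : V} {s : Finset V} {n : ℕ}
    (h : ∀ y ∈ s, G.dist o y ≤ n) : s.card ≤ ballCard G o n := by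
  rw [← Set.ncard_coe_finset]
  exact Set.ncard_le_ncard h (finite_setOf_dist_le hconn o n)

lemma two_le_ballCard [Nontrivial V] (hconn : G.Connected) (o : V) {n : ℕ} (hn : 1 ≤ n) :
    2 ≤ ballCard G o n := by
  obtain ⟨z, hz⟩ := hconn.preconnected.exists_adj_of_nontrivial o
  rw [← Finset.card_pair hz.ne]
  refine card_le_ballCard hconn fun y hy => ?_
  rcases Finset.mem_insert.1 hy with rfl | hy
  · simp
  · rw [Finset.mem_singleton.1 hy, SimpleGraph.dist_eq_one_iff_adj.2 hz]
    exact hn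

lemma log_ballCard_pos [Nontrivial V] (hconn : G.Connected) (o : V) {n : ℕ} (hn : 1 ≤ n) :
    0 < Real.log (ballCard G o n) :=
  Real.log_pos (Nat.one_lt_cast.2 (two_le_ballCard hconn o hn))

lemma sum_inv_ballCard_sq_le (hconn : G.Connected) (o : V) (s : Finset V) :
    ∑ x ∈ s, ((ballCard G o (max (G.dist o x) 1) : ℝ) ^ 2)⁻¹ ≤
      ∑ n ∈ Finset.range (s.card + 1), ((n : ℝ) ^ 2)⁻¹ := by
  induction s using Finset.induction_on_max_value (fun x => G.dist o x) with
  | empty => simp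
  | insert a s ha hmax ih =>
    have hcard : (insert a s).card ≤ ballCard G o (max (G.dist o a) 1) :=
      card_le_ballCard hconn fun y hy => by
        rcases Finset.mem_insert.1 hy with rfl | hy
        · exact le_max_left _ _
        · exact (hmax y hy).trans (le_max_left _ _)
    rw [Finset.sum_insert ha, Finset.sum_range_succ _ (insert a s).card, add_comm]
    rw [Finset.card_insert_of_notMem ha] at hcard ⊢
    gcongr

lemma summable_inv_ballCard_sq (hconn : G.Connected) (o : V) :
    Summable fun x => ((ballCard G o (max (G.dist o x) 1) : ℝ) ^ 2)⁻¹ := by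
  have hsum : Summable fun n : ℕ => ((n : ℝ) ^ 2)⁻¹ := Real.summable_nat_pow_inv.2 one_lt_two
  exact summable_of_sum_le (fun x => by positivity) fun s =>
    (sum_inv_ballCard_sq_le hconn o s).trans (hsum.sum_le_tsum _ fun _ _ => by positivity)

variable [Nontrivial V]

lemma growthProfile_pos (hconn : G.Connected) (o x : V) : 0 < growthProfile G o x :=
  Real.sqrt_pos.2 (log_ballCard_pos hconn o (le_max_right _ _))

lemma exp_neg_two_mul_growthProfile_sq (hconn : G.Connected) (o x : V) :
    Real.exp (-(2 * growthProfile G o x ^ 2)) =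
      ((ballCard G o (max (G.dist o x) 1) : ℝ) ^ 2)⁻¹ := by
  have hball := two_le_ballCard hconn o (le_max_right (G.dist o x) 1)
  rw [growthProfile, Real.sq_sqrt (log_ballCard_pos hconn o (le_max_right _ _)).le, Real.exp_neg,
    two_mul, Real.exp_add, Real.exp_log (by positivity), sq]

lemma growthProfile_le_sqrt_div_mul (hconn : G.Connected) (o x y : V) :
    growthProfile G o y ≤
      √(Real.log (ballCard G o (G.dist x y + max (G.dist o x) 1)) /
        Real.log (ballCard G o (max (G.dist o x) 1))) * growthProfile G o x := by
  set j := max (G.dist o x) 1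
  have hj : 1 ≤ j := le_max_right _ _
  have hradius : max (G.dist o y) 1 ≤ G.dist x y + j := by
    have := hconn.dist_triangle (u := o) (v := x) (w := y)
    omega
  have hy := two_le_ballCard hconn o (le_max_right (G.dist o y) 1)
  have hlog := log_ballCard_pos hconn o hj
  have hlog' := log_ballCard_pos hconn o (n := G.dist x y + j) (by omega)
  calc growthProfile G o y ≤ √(Real.log (ballCard G o (G.dist x y + j))) :=
        Real.sqrt_le_sqrt (Real.log_le_log (by positivity)
          (Nat.cast_le.2 (monotone_ballCard hconn o hradius)))
    _ = √(Real.log (ballCard G o (G.dist x y + j)) / Real.log (ballCard G o j)) *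
          growthProfile G o x := by
        rw [growthProfile, ← Real.sqrt_mul (div_nonneg hlog'.le hlog.le),
          div_mul_cancel₀ _ hlog.ne']

end Growth

lemma HasGaussianMoments.of_forall_pos {ρ : Measure ℝ}
    (h : ∀ a : ℝ, 0 < a → 0 < gaussMoment ρ a ∧ gaussMoment ρ a < ⊤) : HasGaussianMoments ρ where
  ne_zero h0 := by simpa [h0, gaussMoment] using (h 1 one_pos).1
  gaussMoment_ne_top a := by
    refine ne_top_of_le_ne_top (h (max a 1) (by positivity)).2.ne (lintegral_mono fun u => ?_)
    gcongr
    exact le_max_left _ _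

lemma isTempered_growthProfile {V : Type*} [Nontrivial V] {G : SimpleGraph V}
    (hconn : G.Connected) [∀ x : V, Finite (G.neighborSet x)] (o : V) {J : V → V → ℝ} {f : ℝ → ℝ}
    {M r c₀ : ℝ} (hM : 0 < M) (hsymm : ∀ x y, J x y = J y x) (hnonneg : ∀ x y, 0 ≤ J x y)
    (hone : ∀ t, 1 ≤ f t) (hsum : ∀ x, Summable fun y => |J x y| * f (J x y))
    (hbound : ∀ x, ∑' y, |J x y| * f (J x y) ≤ M)
    (hdist : ∀ x y : V, x ≠ y → |J x y| ≤ (G.dist x y : ℝ) ^ (-r))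
    (hanti : AntitoneOn f (Set.Ioi 0)) (hc₀ : 0 < c₀)
    (hball : ∀ j k : ℕ, 1 ≤ j → 1 ≤ k →
      c₀ * √(Real.log (ballCard G o (k + j)) / Real.log (ballCard G o j)) ≤ f ((k : ℝ) ^ (-r))) :
    IsTempered J (fun x y => f (J x y)) M (1 / c₀) (growthProfile G o) where
  symm := hsymm
  nonneg := hnonneg
  one_le _ _ := hone _
  summable_mul x := by simpa only [abs_of_nonneg (hnonneg _ _)] using hsum x
  tsum_mul_le x := by simpa only [abs_of_nonneg (hnonneg _ _)] using hbound x
  bound_pos := hM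
  ratio_pos := one_div_pos.2 hc₀
  profile_pos := growthProfile_pos hconn o
  profile_le x y hxy hJ := by
    refine (growthProfile_le_sqrt_div_mul hconn o x y).trans
      (mul_le_mul_of_nonneg_right ?_ (growthProfile_pos hconn o x).le)
    have hJpos : 0 < J x y := (hnonneg x y).lt_of_ne' hJ
    have hJle : J x y ≤ (G.dist x y : ℝ) ^ (-r) := (le_abs_self _).trans (hdist x y hxy)
    rw [one_div_mul_eq_div, le_div_iff₀' hc₀]
    exact (hball _ _ (le_max_right _ _) (hconn.pos_dist_of_ne hxy)).trans
      (hanti hJpos (hJpos.trans_le hJle) hJle)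
  summable_exp := by
    simpa only [exp_neg_two_mul_growthProfile_sq hconn] using summable_inv_ballCard_sq hconn o

end UnboundedSpin

theorem stmt13_general {V : Type*} [Countable V] [Nontrivial V] (G : SimpleGraph V)
    (hconn : G.Connected) [∀ x : V, Finite (G.neighborSet x)] (o : V)
    (J : V → V → ℝ) (f : ℝ → ℝ) (Mf r b : ℝ) (hMf : 0 < Mf)
    (hJsymm : ∀ x y, J x y = J y x)
    (hferro : ∀ x y, 0 ≤ J x y)
    (hf1 : ∀ t, 1 ≤ f t)
    (hJsum : ∀ x, Summable fun y => |J x y| * f (J x y))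
    (hJbound : ∀ x, ∑' y, |J x y| * f (J x y) ≤ Mf)
    (hJdist : ∀ x y : V, x ≠ y → |J x y| ≤ (G.dist x y : ℝ) ^ (-r))
    (hfdec : AntitoneOn f (Set.Ioi 0))
    (β : ℝ) (hβ : 0 ≤ β) (hb : 3 * (β * Mf) / 2 ≤ b) (ρ : Measure ℝ)
    (hρ : ∀ a : ℝ, 0 < a →
      0 < ∫⁻ u, ENNReal.ofReal (Real.exp (a * u ^ 2)) ∂ρ ∧
      ∫⁻ u, ENNReal.ofReal (Real.exp (a * u ^ 2)) ∂ρ < ⊤)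
    (c₀ : ℝ) (hc₀ : 0 < c₀)
    (hball : ∀ j k : ℕ, 1 ≤ j → 1 ≤ k →
      c₀ * Real.sqrt (Real.log (({y : V | G.dist o y ≤ k + j}).ncard : ℝ) /
        Real.log (({y : V | G.dist o y ≤ j}).ncard : ℝ)) ≤ f ((k : ℝ) ^ (-r))) :
    ∃ νp νm : Measure (V → ℝ), IsProbabilityMeasure νp ∧ IsProbabilityMeasure νm ∧
      IsRegularWRT (rhoMod ρ b) νp ∧ IsRegularWRT (rhoMod ρ b) νm ∧
      IsGibbsMeasure J β ρ νp ∧ IsGibbsMeasure J β ρ νm ∧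
      ConvergesTo J β ρ
        (fun x => Real.sqrt (Real.log (({y : V | G.dist o y ≤ G.dist o x}).ncard : ℝ))) νp ∧
      ConvergesTo J β ρ
        (fun x => -Real.sqrt (Real.log (({y : V | G.dist o y ≤ G.dist o x}).ncard : ℝ))) νm ∧
      ∀ (a : ℝ) (ν : Measure (V → ℝ)), IsProbabilityMeasure ν →
        IsRegularWRT (rhoMod ρ a) ν → IsGibbsMeasure J β ρ ν →
        StochDom νm ν ∧ StochDom ν νp := by
  have : UnboundedSpin.HasGaussianMoments ρ := .of_forall_pos hρ
  have H := UnboundedSpin.isTempered_growthProfile hconn o hMf hJsymm hferro hf1 hJsum hJbound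
    hJdist hfdec hc₀ hball
  obtain ⟨νp, hlimp, hgibbsp, hregp, hmax⟩ := H.exists_maximal hβ ρ hb
  obtain ⟨νm, hlimm, hgibbsm, hregm, hmin⟩ := H.exists_minimal hβ ρ hb
  have hprofile : ∀ x ∉ ({o} : Finset V), UnboundedSpin.growthProfile G o x =
      Real.sqrt (Real.log (({y : V | G.dist o y ≤ G.dist o x}).ncard : ℝ)) := fun x hx =>
    UnboundedSpin.growthProfile_of_ne hconn (Finset.notMem_singleton.1 hx)
  refine ⟨νp, νm, inferInstance, inferInstance, hregp, hregm, hgibbsp, hgibbsm,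
    H.isFerromagnet.convergesTo_of_tendsto hβ hlimp hprofile,
    H.isFerromagnet.convergesTo_of_tendsto hβ hlimm fun x hx => congrArg Neg.neg (hprofile x hx),
    fun a ν hν hreg hgibbs => ?_⟩
  have hsum := H.tsum_measure_ne_top_of_isRegularWRT hreg
  exact ⟨hmin ν hν hgibbs hsum, hmax ν hν hgibbs hsum⟩

/-- Proposition `prop: maximal b.c`: existence and extremality of the
plus and minus measures. Under reasonable ferromagnetic interactions on an infinite
connected locally finite graph, with `f(k^{-r}) ≥ c₀ √(log|B_{k+j}(o)|/log|B_j(o)|)`,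
the finite-volume measures with boundary conditions `ξ⁺_x = √(log|B_{d(o,x)}(o)|)`
(resp. `ξ⁻ = -ξ⁺`) converge to a `(2βM_f/c)`-regular Gibbs measure `ν⁺` (resp. `ν⁻`),
and every `a`-regular Gibbs measure `ν` satisfies `ν⁻ ⪯ ν ⪯ ν⁺`. -/
theorem stmt13 {V : Type*} [Countable V] (G : SimpleGraph V) [Infinite V]
    (hconn : G.Connected) [∀ x : V, Fintype (G.neighborSet x)] (o : V)
    (J : V → V → ℝ) (f : ℝ → ℝ) (δf Mf r c : ℝ)
    (hδf : 0 < δf) (hMf : 0 < Mf) (hr : 0 < r) (hc : 0 < c) (hc1 : c < 1)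
    (hJsymm : ∀ x y, J x y = J y x)
    (hferro : ∀ x y, 0 ≤ J x y)
    (hf1 : ∀ t, 1 ≤ f t)
    (hflog : ∀ t : ℝ, t ≠ 0 → |t| < δf → (Real.log (|t|⁻¹)) ^ ((1 : ℝ) / 2) ≤ f t)
    (hJsum : ∀ x, Summable fun y => |J x y| * f (J x y))
    (hJbound : ∀ x, ∑' y, |J x y| * f (J x y) ≤ Mf)
    (hJconn : ∀ x y : V, ∃ (m : ℕ) (w : ℕ → V),
      (∀ i < m, J (w i) (w (i + 1)) ≠ 0) ∧ w 0 = x ∧ w m = y)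
    (hJdist : ∀ x y : V, x ≠ y → |J x y| ≤ (G.dist x y : ℝ) ^ (-r))
    (hfeven : ∀ t, f (-t) = f t)
    (hfdec : AntitoneOn f (Set.Ioi 0))
    (hfc : ∀ t : ℝ, 0 ≤ t → c * f t ≤ f ((2 : ℝ) ^ r * t))
    (β : ℝ) (hβ : 0 ≤ β) (ρ : Measure ℝ)
    (hρ : ∀ a : ℝ, 0 < a →
      0 < ∫⁻ u, ENNReal.ofReal (Real.exp (a * u ^ 2)) ∂ρ ∧
      ∫⁻ u, ENNReal.ofReal (Real.exp (a * u ^ 2)) ∂ρ < ⊤)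
    (c₀ : ℝ) (hc₀ : 0 < c₀)
    (hball : ∀ j k : ℕ, 1 ≤ j → 1 ≤ k →
      c₀ * Real.sqrt (Real.log (({y : V | G.dist o y ≤ k + j}).ncard : ℝ) /
        Real.log (({y : V | G.dist o y ≤ j}).ncard : ℝ)) ≤ f ((k : ℝ) ^ (-r))) :
    ∃ νp νm : Measure (V → ℝ), IsProbabilityMeasure νp ∧ IsProbabilityMeasure νm ∧
      IsRegularWRT (rhoMod ρ (2 * β * Mf / c)) νp ∧
      IsRegularWRT (rhoMod ρ (2 * β * Mf / c)) νm ∧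
      IsGibbsMeasure J β ρ νp ∧ IsGibbsMeasure J β ρ νm ∧
      ConvergesTo J β ρ
        (fun x => Real.sqrt (Real.log (({y : V | G.dist o y ≤ G.dist o x}).ncard : ℝ)))
        νp ∧
      ConvergesTo J β ρ
        (fun x => -Real.sqrt (Real.log (({y : V | G.dist o y ≤ G.dist o x}).ncard : ℝ)))
        νm ∧
      ∀ a : ℝ, 0 < a → ∀ ν : Measure (V → ℝ), IsProbabilityMeasure ν →
        IsRegularWRT (rhoMod ρ a) ν → IsGibbsMeasure J β ρ ν →
        StochDom νm ν ∧ StochDom ν νp := by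
  have hb : 3 * (β * Mf) / 2 ≤ 2 * β * Mf / c :=
    (by nlinarith [mul_nonneg hβ hMf.le] : _ ≤ 2 * β * Mf).trans
      (le_div_self (by positivity) hc hc1.le)
  obtain ⟨νp, νm, hp, hm, hregp, hregm, hgibbsp, hgibbsm, hconvp, hconvm, hdom⟩ :=
    stmt13_general G hconn o J f Mf r _ hMf hJsymm hferro hf1 hJsum hJbound hJdist hfdec β hβ hb
      ρ hρ c₀ hc₀ hball
  exact ⟨νp, νm, hp, hm, hregp, hregm, hgibbsp, hgibbsm, hconvp, hconvm, fun a _ => hdom a⟩
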